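/- arXiv:0805.1605 — 4 statements merged into one kernel-verified Lean document; each statement's English description precedes it below -/
import Mathlib

section
/- Let P and P' be convex polytopes in ℝ³ with non-empty interior such that (P, −P) and (P', −P') are synisothetic. Call a facet F = P_w of P positive (respectively, negative) if there exists x ∈ ℝ³ with F = P'_w + x and cone(P,F) = cone(P', P'_w) (respectively, F = (−P')_w + x and cone(P,F) = cone(−P', (−P')_w)) but the other alternative fails; call F neutral if both alternatives hold. Then: if no facet of P is negative, P' is a translate of P; if no facet of P is positive, P' is a translate of −P; and if every facet of P is neutral, then both P and P' are centrally symmetric. -/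
open MeasureTheory Pointwise

/-- The exposed face of `P` in direction `w`: `P_w = {x ∈ P : x·w = h_P(w)}`. -/
def exposedFace (P : Set (EuclideanSpace ℝ (Fin 3)))
    (w : EuclideanSpace ℝ (Fin 3)) : Set (EuclideanSpace ℝ (Fin 3)) :=
  {x ∈ P | ∀ y ∈ P, @inner ℝ _ _ w y ≤ @inner ℝ _ _ w x}

/-- The support cone of `P` at a face `F`:
`cone(P,F) = {μ(y − x) : y ∈ P, μ ≥ 0}` for `x ∈ relint F`. -/
def supportCone (P F : Set (EuclideanSpace ℝ (Fin 3))) :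
    Set (EuclideanSpace ℝ (Fin 3)) :=
  {v | ∃ x ∈ intrinsicInterior ℝ F, ∃ y ∈ P, ∃ μ : ℝ, 0 ≤ μ ∧ v = μ • (y - x)}

/-- `F` is a proper face of the polytope `P`: an exposed face in some unit direction. -/
def IsProperFace (P F : Set (EuclideanSpace ℝ (Fin 3))) : Prop :=
  ∃ w : EuclideanSpace ℝ (Fin 3), ‖w‖ = 1 ∧ F = exposedFace P w

/-- The face `F` of `P` and the face `G` of `Q` are isothetic:
`G` is a translate of `F` and `cone(P,F) = cone(Q,G)`. -/
def Isothetic (P F Q G : Set (EuclideanSpace ℝ (Fin 3))) : Prop :=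
  (∃ t : EuclideanSpace ℝ (Fin 3), G = (t + ·) '' F) ∧ supportCone P F = supportCone Q G

/-- The pairs `(P₁, P₂)` and `(Q₁, Q₂)` are synisothetic: every proper face of `P₁` or of
`P₂` is isothetic to some proper face of `Q₁` or of `Q₂`, and conversely. -/
def Synisothetic (P₁ P₂ Q₁ Q₂ : Set (EuclideanSpace ℝ (Fin 3))) : Prop :=
  (∀ F, IsProperFace P₁ F →
    ∃ G, (IsProperFace Q₁ G ∧ Isothetic P₁ F Q₁ G) ∨ (IsProperFace Q₂ G ∧ Isothetic P₁ F Q₂ G)) ∧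
  (∀ F, IsProperFace P₂ F →
    ∃ G, (IsProperFace Q₁ G ∧ Isothetic P₂ F Q₁ G) ∨ (IsProperFace Q₂ G ∧ Isothetic P₂ F Q₂ G)) ∧
  (∀ G, IsProperFace Q₁ G →
    ∃ F, (IsProperFace P₁ F ∧ Isothetic Q₁ G P₁ F) ∨ (IsProperFace P₂ F ∧ Isothetic Q₁ G P₂ F)) ∧
  (∀ G, IsProperFace Q₂ G →
    ∃ F, (IsProperFace P₁ F ∧ Isothetic Q₂ G P₁ F) ∨ (IsProperFace P₂ F ∧ Isothetic Q₂ G P₂ F))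

/-- A (compact) convex polytope: the convex hull of a finite set. -/
def IsPolytope (P : Set (EuclideanSpace ℝ (Fin 3))) : Prop :=
  ∃ S : Finset (EuclideanSpace ℝ (Fin 3)),
    P = convexHull ℝ (S : Set (EuclideanSpace ℝ (Fin 3)))

/-- The positive alternative for the face of `P` in direction `w` relative to `P'`:
there is a translation carrying `P'_w` to `P_w` and the support cones agree,
`cone(P, P_w) = cone(P', P'_w)`. -/
def PosAlt (P P' : Set (EuclideanSpace ℝ (Fin 3))) (w : EuclideanSpace ℝ (Fin 3)) : Prop :=
  ∃ x : EuclideanSpace ℝ (Fin 3),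
    exposedFace P w = (x + ·) '' exposedFace P' w ∧
    supportCone P (exposedFace P w) = supportCone P' (exposedFace P' w)

/-- `w` is a unit direction in which the exposed face of `P ⊆ ℝ³` is a facet
(a two-dimensional face). -/
def IsFacetDir (P : Set (EuclideanSpace ℝ (Fin 3))) (w : EuclideanSpace ℝ (Fin 3)) : Prop :=
  ‖w‖ = 1 ∧ Module.finrank ℝ (vectorSpan ℝ (exposedFace P w)) = 2

open Filter Topology


lemma eF_subset (P : Set (EuclideanSpace ℝ (Fin 3))) (w : EuclideanSpace ℝ (Fin 3)) : exposedFace P w ⊆ P := fun _ h => h.1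

lemma poly_compact {P : Set (EuclideanSpace ℝ (Fin 3))} (h : IsPolytope P) : IsCompact P := by
  obtain ⟨S, rfl⟩ := h
  exact Set.Finite.isCompact_convexHull (𝕜 := ℝ) S.finite_toSet

lemma poly_convex {P : Set (EuclideanSpace ℝ (Fin 3))} (h : IsPolytope P) : Convex ℝ P := by
  obtain ⟨S, rfl⟩ := h
  exact convex_convexHull ℝ _

lemma eF_nonempty {P : Set (EuclideanSpace ℝ (Fin 3))} (hc : IsCompact P) (hn : P.Nonempty) (w : EuclideanSpace ℝ (Fin 3)) :
    (exposedFace P w).Nonempty := by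
  obtain ⟨x, hx, hm⟩ := hc.exists_isMaxOn hn (f := fun y => inner ℝ w y) (by fun_prop)
  exact ⟨x, hx, fun y hy => hm hy⟩

lemma eF_convex {P : Set (EuclideanSpace ℝ (Fin 3))} (hc : Convex ℝ P) (w : EuclideanSpace ℝ (Fin 3)) : Convex ℝ (exposedFace P w) := by
  intro x hx y hy a b ha hb hab
  refine ⟨hc hx.1 hy.1 ha hb hab, fun q hq => ?_⟩
  have h1 := hx.2 q hq
  have h2 := hy.2 q hq
  rw [inner_add_right, real_inner_smul_right, real_inner_smul_right]
  have : inner ℝ w q = a * inner ℝ w q + b * inner ℝ w q := by rw [← add_mul, hab, one_mul]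
  rw [this]
  gcongr

lemma eF_compact {P : Set (EuclideanSpace ℝ (Fin 3))} (hc : IsCompact P) (w : EuclideanSpace ℝ (Fin 3)) : IsCompact (exposedFace P w) := by
  have : exposedFace P w = P ∩ ⋂ y ∈ P, {x | inner ℝ w y ≤ inner ℝ w x} := by
    ext x; simp [exposedFace]
  rw [this]
  apply hc.inter_right
  refine isClosed_biInter fun y _ => ?_
  exact isClosed_le (by fun_prop) (by fun_prop)

lemma eF_smul (P : Set (EuclideanSpace ℝ (Fin 3))) (w : EuclideanSpace ℝ (Fin 3)) {c : ℝ} (hc : 0 < c) :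
    exposedFace P (c • w) = exposedFace P w := by
  ext x
  simp only [exposedFace, Set.mem_ofPred_eq, real_inner_smul_left]
  simp [hc]

lemma eF_translate (P : Set (EuclideanSpace ℝ (Fin 3))) (w x : EuclideanSpace ℝ (Fin 3)) :
    exposedFace ((x + ·) '' P) w = (x + ·) '' exposedFace P w := by
  ext y
  constructor
  · rintro ⟨⟨p, hp, rfl⟩, h⟩
    refine ⟨p, ⟨hp, fun q hq => ?_⟩, rfl⟩
    have := h _ ⟨q, hq, rfl⟩
    simp only [inner_add_right] at this
    linarith
  · rintro ⟨p, ⟨hp, h⟩, rfl⟩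
    refine ⟨⟨p, hp, rfl⟩, ?_⟩
    rintro _ ⟨q, hq, rfl⟩
    have := h q hq
    simp only [inner_add_right]
    linarith

lemma eF_neg (P : Set (EuclideanSpace ℝ (Fin 3))) (w : EuclideanSpace ℝ (Fin 3)) :
    exposedFace (-P) w = -exposedFace P (-w) := by
  ext y
  simp only [exposedFace, Set.mem_ofPred_eq, Set.mem_neg, inner_neg_left, inner_neg_right, neg_neg]
  constructor
  · rintro ⟨h, h'⟩
    refine ⟨h, fun q hq => ?_⟩
    have := h' (-q) (by simpa using hq)
    rw [inner_neg_right] at this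
    exact this
  · rintro ⟨h, h'⟩
    refine ⟨h, fun q hq => ?_⟩
    have := h' (-q) hq
    rw [inner_neg_right] at this
    linarith

/-- Faces in nearby directions are faces of the given face. -/
lemma germ {P : Set (EuclideanSpace ℝ (Fin 3))} (hP : IsPolytope P) (hn : P.Nonempty) (u : EuclideanSpace ℝ (Fin 3)) :
    ∀ᶠ v in 𝓝 u, exposedFace P v = exposedFace (exposedFace P u) v := by
  have hcomp := poly_compact hP
  have hconv := poly_convex hP
  obtain ⟨p, hp⟩ := eF_nonempty hcomp hn u
  obtain ⟨S, hS⟩ := hP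
  have hSP : (S : Set (EuclideanSpace ℝ (Fin 3))) ⊆ P := by rw [hS]; exact subset_convexHull ℝ _
  have key : ∀ᶠ v in 𝓝 u, ∀ s ∈ S, s ∉ exposedFace P u → inner ℝ v s < inner ℝ v p := by
    rw [Filter.eventually_all_finset]
    intro s hs
    by_cases h : s ∈ exposedFace P u
    · simp [h]
    · have h1 : inner ℝ u s < inner ℝ u p := by
        by_contra hlt
        push Not at hlt
        exact h ⟨hSP hs, fun y hy => (hp.2 y hy).trans hlt⟩
      have : ∀ᶠ v in 𝓝 u, inner ℝ v s < inner ℝ v p :=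
        (isOpen_lt (f := fun v : EuclideanSpace ℝ (Fin 3) => inner ℝ v s) (g := fun v : EuclideanSpace ℝ (Fin 3) => inner ℝ v p)
          (by fun_prop) (by fun_prop)).mem_nhds h1
      filter_upwards [this] with v hv _ using hv
  filter_upwards [key] with v hv
  obtain ⟨q, hq⟩ := eF_nonempty hcomp hn v
  have hsub : exposedFace P v ⊆ exposedFace P u := by
    have hc : Convex ℝ {x | x ∈ P ∧ (x ∈ exposedFace P u ∨ inner ℝ v x < inner ℝ v q)} := by
      rw [convex_iff_forall_pos]
      rintro x ⟨hx, hx'⟩ y ⟨hy, hy'⟩ a b ha hb hab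
      refine ⟨hconv hx hy ha.le hb.le hab, ?_⟩
      have e : inner ℝ v q = a * inner ℝ v q + b * inner ℝ v q := by rw [← add_mul, hab, one_mul]
      have h1 := hq.2 x hx
      have h2 := hq.2 y hy
      by_cases hxu : x ∈ exposedFace P u
      · by_cases hyu : y ∈ exposedFace P u
        · exact Or.inl (eF_convex hconv u hxu hyu ha.le hb.le hab)
        · right
          have h3 := hy'.resolve_left hyu
          rw [inner_add_right, real_inner_smul_right, real_inner_smul_right, e]
          have := mul_lt_mul_of_pos_left h3 hb
          have := mul_le_mul_of_nonneg_left h1 ha.le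
          linarith
      · right
        have h3 := hx'.resolve_left hxu
        rw [inner_add_right, real_inner_smul_right, real_inner_smul_right, e]
        have := mul_lt_mul_of_pos_left h3 ha
        have := mul_le_mul_of_nonneg_left h2 hb.le
        linarith
    have hPs : P ⊆ {x | x ∈ P ∧ (x ∈ exposedFace P u ∨ inner ℝ v x < inner ℝ v q)} := by
      nth_rw 1 [hS]
      refine convexHull_min (fun s hs => ⟨hSP hs, ?_⟩) hc
      by_cases h : s ∈ exposedFace P u
      · exact Or.inl h
      · exact Or.inr ((hv s hs h).trans_le (hq.2 p hp.1))
    intro x hx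
    rcases (hPs hx.1).2 with h | h
    · exact h
    · exact absurd (hx.2 q hq.1) (not_le.2 h)
  ext x
  constructor
  · intro hx
    exact ⟨hsub hx, fun y hy => hx.2 y hy.1⟩
  · intro hx
    exact ⟨hx.1.1, fun y hy => (hq.2 y hy).trans (hx.2 q (hsub hq))⟩

lemma dim_le_two (P : Set (EuclideanSpace ℝ (Fin 3))) {w : EuclideanSpace ℝ (Fin 3)} (hw : w ≠ 0) :
    Module.finrank ℝ (vectorSpan ℝ (exposedFace P w)) ≤ 2 := by
  have : Fact (Module.finrank ℝ (EuclideanSpace ℝ (Fin 3)) = 2 + 1) := ⟨by simp⟩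
  rw [← Submodule.finrank_orthogonal_span_singleton (𝕜 := ℝ) (n := 2) hw]
  apply Submodule.finrank_mono
  rw [vectorSpan_def, Submodule.span_le]
  rintro _ ⟨x, hx, y, hy, rfl⟩
  simp only [SetLike.mem_coe, Submodule.mem_orthogonal_singleton_iff_inner_right, vsub_eq_sub,
    inner_sub_right]
  have := hx.2 y hy.1
  have := hy.2 x hx.1
  linarith

lemma two_le_dim {F : Set (EuclideanSpace ℝ (Fin 3))} {d e v : EuclideanSpace ℝ (Fin 3)} (hd : d ∈ vectorSpan ℝ F) (he : e ∈ vectorSpan ℝ F)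
    (hd0 : d ≠ 0) (h1 : inner ℝ v d = 0) (h2 : inner ℝ v e ≠ 0) :
    2 ≤ Module.finrank ℝ (vectorSpan ℝ F) := by
  have hli : LinearIndependent ℝ ![d, e] := by
    rw [LinearIndependent.pair_iff]
    intro s t hst
    have h3 : inner ℝ v (s • d + t • e) = 0 := by rw [hst, inner_zero_right]
    rw [inner_add_right, real_inner_smul_right, real_inner_smul_right, h1] at h3
    have ht : t = 0 := by
      simpa [h2] using h3
    subst ht
    simp [hd0] at hst
    exact ⟨hst, rfl⟩
  have h3 := finrank_span_eq_card hli
  refine le_trans (le_of_eq (by rw [h3]; rfl)) (Submodule.finrank_mono (s := Submodule.span ℝ (Set.range ![d, e])) ?_)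
  rw [Submodule.span_le]
  rintro x ⟨i, rfl⟩
  fin_cases i
  · exact hd
  · exact he

lemma facet_of_frequently {P : Set (EuclideanSpace ℝ (Fin 3))} (hP : IsPolytope P) {a d w : EuclideanSpace ℝ (Fin 3)}
    (ha : a ∈ exposedFace P w) (hd0 : d ≠ 0) (hd : d ∈ vectorSpan ℝ (exposedFace P w))
    (hf : ∃ᶠ v in 𝓝 w, a ∉ exposedFace P v ∧ inner ℝ v d = 0) :
    2 ≤ Module.finrank ℝ (vectorSpan ℝ (exposedFace P w)) := by
  have hn : P.Nonempty := ⟨a, ha.1⟩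
  obtain ⟨v, ⟨hav, hvd⟩, hg⟩ := (hf.and_eventually (germ hP hn w)).exists
  obtain ⟨b, hb⟩ := eF_nonempty (poly_compact hP) hn v
  have hbw : b ∈ exposedFace P w := by rw [hg] at hb; exact hb.1
  refine two_le_dim (v := v) hd (vsub_mem_vectorSpan ℝ hbw ha) hd0 hvd ?_
  intro h
  rw [vsub_eq_sub, inner_sub_right, sub_eq_zero] at h
  exact hav ⟨ha.1, fun y hy => (hb.2 y hy).trans h.le⟩

lemma vspan_translate (F : Set (EuclideanSpace ℝ (Fin 3))) (x : EuclideanSpace ℝ (Fin 3)) :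
    vectorSpan ℝ ((x + ·) '' F) = vectorSpan ℝ F := by
  have := vectorSpan_vadd (k := ℝ) F x
  exact this

lemma vspan_neg (F : Set (EuclideanSpace ℝ (Fin 3))) : vectorSpan ℝ (-F) = vectorSpan ℝ F := by
  apply le_antisymm <;> rw [vectorSpan_def, Submodule.span_le]
  · rintro _ ⟨x, hx, y, hy, rfl⟩
    have := vsub_mem_vectorSpan ℝ (Set.mem_neg.1 hy) (Set.mem_neg.1 hx)
    simp only [vsub_eq_sub, SetLike.mem_coe] at *
    convert this using 1; abel
  · rintro _ ⟨x, hx, y, hy, rfl⟩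
    have := vsub_mem_vectorSpan ℝ (s := -F) (p₁ := -y) (p₂ := -x) (by simpa using hy) (by simpa using hx)
    simp only [vsub_eq_sub, SetLike.mem_coe] at *
    convert this using 1; abel

lemma not_flat {P : Set (EuclideanSpace ℝ (Fin 3))} (hi : (interior P).Nonempty) {z a : EuclideanSpace ℝ (Fin 3)}
    (h : ∀ y ∈ P, inner ℝ z (y - a) = 0) : z = 0 := by
  obtain ⟨c, hc⟩ := hi
  have : ∀ᶠ t : ℝ in 𝓝[>] 0, c + t • z ∈ P := by
    have ht : Tendsto (fun t : ℝ => c + t • z) (𝓝[>] 0) (𝓝 c) := by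
      have : Continuous (fun t : ℝ => c + t • z) := by fun_prop
      have := (this.tendsto 0).mono_left (nhdsWithin_le_nhds (s := Set.Ioi 0))
      simpa using this
    exact ht.eventually (mem_interior_iff_mem_nhds.1 hc)
  obtain ⟨t, ht, ht0⟩ := (this.and self_mem_nhdsWithin).exists
  have h1 := h _ ht
  have h2 := h _ (interior_subset hc)
  have h3 : inner ℝ z (t • z) = 0 := by
    have : t • z = (c + t • z - a) - (c - a) := by abel
    rw [this, inner_sub_right, h1, h2, sub_zero]
  rw [real_inner_smul_right] at h3
  have ht0' : t ≠ 0 := ne_of_gt ht0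
  simpa [ht0'] using h3

/-- Key sliding lemma. -/
lemma slide {P Q : Set (EuclideanSpace ℝ (Fin 3))} (hP : IsPolytope P) (hQ : IsPolytope Q)
    (hi : (interior P).Nonempty) (hQn : Q.Nonempty)
    (hW : ∀ w : EuclideanSpace ℝ (Fin 3), w ≠ 0 → Module.finrank ℝ (vectorSpan ℝ (exposedFace Q w)) = 2 →
      Module.finrank ℝ (vectorSpan ℝ (exposedFace P w)) = 2)
    (hT : ∀ w : EuclideanSpace ℝ (Fin 3), w ≠ 0 → Module.finrank ℝ (vectorSpan ℝ (exposedFace P w)) = 2 →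
      ∃ x : EuclideanSpace ℝ (Fin 3), exposedFace Q w = (x + ·) '' exposedFace P w)
    {u : EuclideanSpace ℝ (Fin 3)} (hu : u ≠ 0) (hdim : Module.finrank ℝ (vectorSpan ℝ (exposedFace P u)) ≤ 1) :
    ∃ x : EuclideanSpace ℝ (Fin 3), (x + ·) '' exposedFace P u ⊆ exposedFace Q u := by
  have hPn : P.Nonempty := hi.mono interior_subset
  obtain ⟨a, ha⟩ := eF_nonempty (poly_compact hP) hPn u
  obtain ⟨d, hdV, hspan⟩ := (finrank_le_one_iff (K := ℝ)
    (V := vectorSpan ℝ (exposedFace P u))).1 hdim |>.elim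
      (fun d hd => (⟨d.1, d.2, fun p hp => by
        obtain ⟨c, hc⟩ := hd ⟨p - a, vsub_mem_vectorSpan ℝ hp ha⟩
        exact ⟨c, congrArg Subtype.val hc⟩⟩ :
        ∃ d : EuclideanSpace ℝ (Fin 3), d ∈ vectorSpan ℝ (exposedFace P u) ∧
          ∀ p ∈ exposedFace P u, ∃ c : ℝ, c • d = p - a))
  by_cases hd0 : d = 0
  · obtain ⟨b, hb⟩ := eF_nonempty (poly_compact hQ) hQn u
    refine ⟨b - a, ?_⟩
    rintro _ ⟨p, hp, rfl⟩
    obtain ⟨c, hc⟩ := hspan p hp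
    rw [hd0, smul_zero] at hc
    have : p = a := (sub_eq_zero.1 hc.symm)
    subst this
    simpa using hb
  have hinner : ∀ v : EuclideanSpace ℝ (Fin 3), inner ℝ v d = 0 → ∀ p ∈ exposedFace P u, inner ℝ v p = inner ℝ v a := by
    intro v hv p hp
    obtain ⟨c, hc⟩ := hspan p hp
    have : inner ℝ v (p - a) = 0 := by rw [← hc, real_inner_smul_right, hv, mul_zero]
    rw [inner_sub_right] at this
    linarith
  have hud : inner ℝ u d = 0 := by
    have hle : vectorSpan ℝ (exposedFace P u) ≤ (ℝ ∙ u)ᗮ := by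
      rw [vectorSpan_def, Submodule.span_le]
      rintro _ ⟨x, hx, y, hy, rfl⟩
      simp only [SetLike.mem_coe, Submodule.mem_orthogonal_singleton_iff_inner_right, vsub_eq_sub,
        inner_sub_right]
      have := hx.2 y hy.1
      have := hy.2 x hx.1
      linarith
    exact Submodule.mem_orthogonal_singleton_iff_inner_right.1 (hle hdV)
  -- the sliding direction
  obtain ⟨z, hzu, hzd, haz⟩ : ∃ z : EuclideanSpace ℝ (Fin 3), inner ℝ u z = 0 ∧ inner ℝ z d = 0 ∧
      a ∉ exposedFace P (u + z) := by
    obtain ⟨z, hz, hz0⟩ : ∃ z ∈ (Submodule.span ℝ (Set.range ![u, d]))ᗮ, z ≠ 0 := by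
      apply Submodule.exists_mem_ne_zero_of_ne_bot
      intro hbot
      have h1 := Submodule.finrank_add_finrank_orthogonal (Submodule.span ℝ (Set.range ![u, d]))
      have h2 := finrank_range_le_card (R := ℝ) ![u, d]
      rw [hbot] at h1
      simp [Set.finrank] at h1 h2
      omega
    have hzu : inner ℝ u z = 0 :=
      (Submodule.mem_orthogonal _ _).1 hz u (Submodule.subset_span ⟨0, rfl⟩)
    have hzd : inner ℝ d z = 0 :=
      (Submodule.mem_orthogonal _ _).1 hz d (Submodule.subset_span ⟨1, rfl⟩)
    by_contra hcon
    push Not at hcon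
    apply hz0
    apply not_flat (a := a) hi
    intro y hy
    have h : ∀ t : ℝ, inner ℝ u (y - a) + t * inner ℝ z (y - a) ≤ 0 := by
      intro t
      have h1 := hcon (t • z) (by rw [real_inner_smul_right, hzu, mul_zero])
        (by rw [real_inner_smul_left, real_inner_comm, hzd, mul_zero])
      have h2 := h1.2 y hy
      simp only [inner_add_left, real_inner_smul_left] at h2
      simp only [inner_sub_right]
      linarith
    by_contra hne
    have := h ((1 - inner ℝ u (y - a)) / inner ℝ z (y - a))
    rw [div_mul_cancel₀ _ hne] at this
    linarith
  have hperp : ∀ t : ℝ, inner ℝ (u + t • z) d = 0 := by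
    intro t; rw [inner_add_left, real_inner_smul_left, hud, hzd]; ring
  have hne : ∀ t : ℝ, u + t • z ≠ 0 := by
    intro t h
    have : inner ℝ u (u + t • z) = 0 := by rw [h, inner_zero_right]
    rw [inner_add_right, real_inner_smul_right, hzu, mul_zero, add_zero] at this
    exact hu (inner_self_eq_zero.1 this)
  have hcont : Continuous (fun t : ℝ => u + t • z) := by fun_prop
  have hclosed : ∀ (R : Set (EuclideanSpace ℝ (Fin 3))) (b : EuclideanSpace ℝ (Fin 3)), IsClosed {t : ℝ | b ∈ exposedFace R (u + t • z)} := by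
    intro R b
    have : {t : ℝ | b ∈ exposedFace R (u + t • z)} =
        {t : ℝ | b ∈ R} ∩ ⋂ y ∈ R, {t : ℝ | inner ℝ (u + t • z) y ≤ inner ℝ (u + t • z) b} := by
      ext t; simp [exposedFace]
    rw [this]
    refine isClosed_const.inter (isClosed_biInter fun y _ => ?_)
    exact isClosed_le (by fun_prop) (by fun_prop)
  -- the last parameter
  obtain ⟨T, ⟨⟨hT0, hT1⟩, hTa⟩, hTmax⟩ : ∃ T, T ∈ Set.Icc (0:ℝ) 1 ∩
      {t : ℝ | a ∈ exposedFace P (u + t • z)} ∧ ∀ t ∈ Set.Icc (0:ℝ) 1 ∩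
      {t : ℝ | a ∈ exposedFace P (u + t • z)}, t ≤ T := by
    have hc := isCompact_Icc (a := (0:ℝ)) (b := 1) |>.inter_right (hclosed P a)
    obtain ⟨T, hT⟩ := hc.exists_isGreatest ⟨0, by simp, by simpa using ha⟩
    exact ⟨T, hT.1, fun t ht => hT.2 ht⟩
  have hTlt : T < 1 := by
    rcases hT1.lt_or_eq with h | h
    · exact h
    · subst h; simp only [Set.mem_ofPred_eq, one_smul] at hTa; exact absurd hTa haz
  have hsubT : exposedFace P u ⊆ exposedFace P (u + T • z) := by
    intro p hp
    exact ⟨hp.1, fun y hy => (hTa.2 y hy).trans (hinner _ (hperp T) p hp).ge⟩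
  have hdimT : Module.finrank ℝ (vectorSpan ℝ (exposedFace P (u + T • z))) = 2 := by
    apply le_antisymm (dim_le_two P (hne T))
    refine facet_of_frequently hP hTa hd0 (vectorSpan_mono ℝ hsubT hdV) ?_
    have h1 : ∀ᶠ t : ℝ in 𝓝[>] T, a ∉ exposedFace P (u + t • z) ∧ inner ℝ (u + t • z) d = 0 := by
      filter_upwards [Ioo_mem_nhdsGT hTlt] with t ht
      refine ⟨fun hat => ?_, hperp t⟩
      have := hTmax t ⟨⟨hT0.trans ht.1.le, ht.2.le⟩, hat⟩
      exact absurd ht.1 (not_lt.2 this)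
    exact (hcont.tendsto T).mono_left (nhdsWithin_le_nhds (s := Set.Ioi T)) |>.frequently h1.frequently
  obtain ⟨x, hx⟩ := hT _ (hne T) hdimT
  have hTpos : 0 < T := by
    rcases hT0.lt_or_eq with h | h
    · exact h
    · rw [← h, zero_smul, add_zero] at hdimT; omega
  have hxsub : ∀ t : ℝ, x + a ∈ exposedFace Q (u + t • z) →
      (x + ·) '' exposedFace P u ⊆ exposedFace Q (u + t • z) := by
    rintro t ht _ ⟨p, hp, rfl⟩
    refine ⟨?_, fun y hy => (ht.2 y hy).trans ?_⟩
    · have : x + p ∈ exposedFace Q (u + T • z) := by rw [hx]; exact ⟨p, hsubT hp, rfl⟩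
      exact this.1
    · simp only [inner_add_right _ x]
      rw [hinner _ (hperp t) p hp]
  obtain ⟨t0, ⟨⟨ht00, ht0T⟩, ht0a⟩, ht0min⟩ : ∃ t0, t0 ∈ Set.Icc (0:ℝ) T ∩
      {t : ℝ | x + a ∈ exposedFace Q (u + t • z)} ∧ ∀ t ∈ Set.Icc (0:ℝ) T ∩
      {t : ℝ | x + a ∈ exposedFace Q (u + t • z)}, t0 ≤ t := by
    have hc := isCompact_Icc (a := (0:ℝ)) (b := T) |>.inter_right (hclosed Q (x + a))
    obtain ⟨t0, ht⟩ := hc.exists_isLeast ⟨T, by simp [hT0], by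
      simp only [Set.mem_ofPred_eq]; rw [hx]; exact ⟨a, hTa, rfl⟩⟩
    exact ⟨t0, ht.1, fun t h => ht.2 h⟩
  refine ⟨x, ?_⟩
  rcases ht00.lt_or_eq with hpos | h0
  swap
  · subst h0
    have := hxsub 0 ht0a
    simpa using this
  exfalso
  have hdQ : Module.finrank ℝ (vectorSpan ℝ (exposedFace Q (u + t0 • z))) = 2 := by
    apply le_antisymm (dim_le_two Q (hne t0))
    refine facet_of_frequently hQ ht0a hd0 ?_ ?_
    · apply vectorSpan_mono ℝ (hxsub t0 ht0a)
      rw [vspan_translate]; exact hdV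
    have h1 : ∀ᶠ t : ℝ in 𝓝[<] t0, x + a ∉ exposedFace Q (u + t • z) ∧
        inner ℝ (u + t • z) d = 0 := by
      filter_upwards [Ioo_mem_nhdsLT hpos] with t ht
      refine ⟨fun hat => ?_, hperp t⟩
      have := ht0min t ⟨⟨ht.1.le, ht.2.le.trans ht0T⟩, hat⟩
      exact absurd ht.2 (not_lt.2 this)
    exact (hcont.tendsto t0).mono_left (nhdsWithin_le_nhds (s := Set.Iio t0))
      |>.frequently h1.frequently
  rcases ht0T.lt_or_eq with hlt | heq
  · have hdP := hW _ (hne t0) hdQ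
    have hsub : exposedFace P (u + t0 • z) ⊆ exposedFace P u := by
      intro b hb
      refine ⟨hb.1, fun y hy => (ha.2 y hy).trans ?_⟩
      have h1 := hTa.2 b hb.1
      have h2 := hb.2 a ha.1
      simp only [inner_add_left, real_inner_smul_left] at h1 h2
      nlinarith
    have := Submodule.finrank_mono (vectorSpan_mono ℝ hsub)
    omega
  · subst heq
    have e1 := (hcont.tendsto t0).eventually (germ hP hPn (u + t0 • z))
    have e2 := (hcont.tendsto t0).eventually (germ hQ hQn (u + t0 • z))
    have e3 := (e1.and e2).filter_mono (nhdsWithin_le_nhds (s := Set.Iio t0))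
    obtain ⟨t, ⟨g1, g2⟩, ht⟩ := (e3.and (Ioo_mem_nhdsLT hpos)).exists
    have : x + a ∈ exposedFace Q (u + t • z) := by
      rw [g2, hx, eF_translate, ← g1]
      refine ⟨a, ⟨ha.1, fun y hy => ?_⟩, rfl⟩
      have h1 := hTa.2 y hy
      have h2 := ha.2 y hy
      simp only [inner_add_left, real_inner_smul_left] at h1 ⊢
      have h3 := ht.1
      have h4 := ht.2
      rcases le_total (inner ℝ z y) (inner ℝ z a) with h5 | h5
      · nlinarith
      · nlinarith
    have := ht0min t ⟨⟨ht.1.le, ht.2.le⟩, this⟩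
    exact absurd ht.2 (not_lt.2 this)

lemma translate_self {F : Set (EuclideanSpace ℝ (Fin 3))} (hF : Bornology.IsBounded F) (hn : F.Nonempty) {x : EuclideanSpace ℝ (Fin 3)}
    (h : (x + ·) '' F ⊆ F) : x = 0 := by
  obtain ⟨p, hp⟩ := hn
  have hk : ∀ n : ℕ, (n : ℝ) • x + p ∈ F := by
    intro n
    induction n with
    | zero => simpa using hp
    | succ k ih =>
      have := h ⟨_, ih, rfl⟩
      convert this using 1
      push_cast
      module
  obtain ⟨C, hC⟩ := hF.exists_norm_le
  by_contra hx
  have hx' : 0 < ‖x‖ := norm_pos_iff.2 hx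
  obtain ⟨n, hn⟩ := exists_nat_gt ((C + ‖p‖) / ‖x‖)
  rw [div_lt_iff₀ hx'] at hn
  have h1 := hC _ (hk n)
  have h2 : ‖(n : ℝ) • x‖ ≤ ‖(n : ℝ) • x + p‖ + ‖p‖ := by
    have := norm_sub_le ((n : ℝ) • x + p) p
    simpa using this
  rw [norm_smul] at h2
  simp at h2
  linarith

lemma translate_unique {F : Set (EuclideanSpace ℝ (Fin 3))} (hF : Bornology.IsBounded F) (hn : F.Nonempty) {x y : EuclideanSpace ℝ (Fin 3)}
    (h : (x + ·) '' F = (y + ·) '' F) : x = y := by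
  have : (x - y + ·) '' F ⊆ F := by
    rintro _ ⟨p, hp, rfl⟩
    have : x + p ∈ (y + ·) '' F := by rw [← h]; exact ⟨p, hp, rfl⟩
    obtain ⟨q, hq, hqe⟩ := this
    have : x - y + p = q := by
      simp only at hqe
      rw [sub_add_eq_add_sub, ← hqe]; abel
    simp only [this]; exact hq
  exact sub_eq_zero.1 (translate_self hF hn this)

/-- If all exposed faces are translates then the polytopes are. -/
lemma translate_of_faces {P Q : Set (EuclideanSpace ℝ (Fin 3))} (hP : IsPolytope P) (hQ : IsPolytope Q)
    (hPn : P.Nonempty) (hQn : Q.Nonempty)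
    (h : ∀ u : EuclideanSpace ℝ (Fin 3), u ≠ 0 → ∃ x : EuclideanSpace ℝ (Fin 3), exposedFace Q u = (x + ·) '' exposedFace P u) :
    ∃ t : EuclideanSpace ℝ (Fin 3), Q = (t + ·) '' P := by
  choose! x hx using h
  have huniq : ∀ u : EuclideanSpace ℝ (Fin 3), u ≠ 0 → ∀ y, exposedFace Q u = (y + ·) '' exposedFace P u → x u = y := by
    intro u hu y hy
    refine translate_unique (eF_compact (poly_compact hP) u).isBounded
      (eF_nonempty (poly_compact hP) hPn u) ?_
    rw [← hx u hu, ← hy]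
  have hloc : ∀ u : EuclideanSpace ℝ (Fin 3), u ≠ 0 → ∀ᶠ v in 𝓝 u, x v = x u := by
    intro u hu
    filter_upwards [germ hP hPn u, germ hQ hQn u, isOpen_ne.mem_nhds hu] with v h1 h2 hv
    apply huniq v hv
    rw [h2, hx u hu, eF_translate, ← h1]
  have hconn : IsPreconnected ({0}ᶜ : Set (EuclideanSpace ℝ (Fin 3))) := by
    apply (isConnected_compl_singleton_of_one_lt_rank _ _).isPreconnected
    rw [← Module.finrank_eq_rank]
    simp
  obtain ⟨t, ht⟩ : ∃ t, ∀ u : EuclideanSpace ℝ (Fin 3), u ≠ 0 → x u = t := by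
    have : PreconnectedSpace ({0}ᶜ : Set (EuclideanSpace ℝ (Fin 3))) := isPreconnected_iff_preconnectedSpace.1 hconn
    have hlc : IsLocallyConstant (fun u : ({0}ᶜ : Set (EuclideanSpace ℝ (Fin 3))) => x u) := by
      rw [IsLocallyConstant.iff_eventually_eq]
      intro u
      exact (continuous_subtype_val.tendsto u).eventually (hloc u u.2)
    by_cases hne : ∃ u : EuclideanSpace ℝ (Fin 3), u ≠ 0
    · obtain ⟨u0, hu0⟩ := hne
      exact ⟨x u0, fun u hu => hlc.apply_eq_of_preconnectedSpace ⟨u, hu⟩ ⟨u0, hu0⟩⟩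
    · push Not at hne
      exact ⟨0, fun u hu => absurd (hne u) hu⟩
  have hx' : ∀ u : EuclideanSpace ℝ (Fin 3), u ≠ 0 → exposedFace Q u = exposedFace ((t + ·) '' P) u := by
    intro u hu
    rw [hx u hu, ht u hu, eF_translate]
  have hcomp : IsCompact ((t + ·) '' P) := (poly_compact hP).image (by fun_prop)
  have hconv : Convex ℝ ((t + ·) '' P) := (poly_convex hP).translate t
  have sub : ∀ A B : Set (EuclideanSpace ℝ (Fin 3)), IsCompact A → A.Nonempty → IsCompact B → Convex ℝ B →
      (∀ u : EuclideanSpace ℝ (Fin 3), u ≠ 0 → exposedFace A u = exposedFace B u) → A ⊆ B := by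
    intro A B hA hAn hB hBc he p hp
    by_contra hpB
    obtain ⟨f, c, hf1, hf2⟩ := geometric_hahn_banach_closed_point hBc hB.isClosed hpB
    set u : EuclideanSpace ℝ (Fin 3) := (InnerProductSpace.toDual ℝ (EuclideanSpace ℝ (Fin 3))).symm f with hu
    have hfu : ∀ y, f y = inner ℝ u y := fun y => by
      rw [hu, InnerProductSpace.toDual_symm_apply]
    have key : u ≠ 0 → False := by
      intro hu0
      obtain ⟨q, hq⟩ := eF_nonempty hA hAn u
      have h1 := hq.2 p hp
      have hqB : q ∈ B := by rw [he u hu0] at hq; exact hq.1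
      have h2 := hf1 q hqB
      rw [hfu] at h2 hf2
      linarith
    apply key
    intro hu0
    simp only [hu0, inner_zero_left] at hfu
    obtain ⟨e, he0⟩ := exists_ne (0 : EuclideanSpace ℝ (Fin 3))
    obtain ⟨q, hq⟩ := eF_nonempty hA hAn e
    rw [he e he0] at hq
    have := hf1 q hq.1
    rw [hfu] at this hf2
    linarith
  refine ⟨t, Set.Subset.antisymm ?_ ?_⟩
  · exact sub _ _ (poly_compact hQ) hQn hcomp hconv hx'
  · exact sub _ _ hcomp (hPn.image _) (poly_compact hQ) (poly_convex hQ) fun u hu => (hx' u hu).symm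

lemma translate_of_facets {P Q : Set (EuclideanSpace ℝ (Fin 3))} (hP : IsPolytope P) (hQ : IsPolytope Q)
    (hi : (interior P).Nonempty) (hQi : (interior Q).Nonempty)
    (hW : ∀ w : EuclideanSpace ℝ (Fin 3), w ≠ 0 → Module.finrank ℝ (vectorSpan ℝ (exposedFace Q w)) = 2 →
      Module.finrank ℝ (vectorSpan ℝ (exposedFace P w)) = 2)
    (hT : ∀ w : EuclideanSpace ℝ (Fin 3), w ≠ 0 → Module.finrank ℝ (vectorSpan ℝ (exposedFace P w)) = 2 →
      ∃ x : EuclideanSpace ℝ (Fin 3), exposedFace Q w = (x + ·) '' exposedFace P w) :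
    ∃ t : EuclideanSpace ℝ (Fin 3), Q = (t + ·) '' P := by
  have hPn : P.Nonempty := hi.mono interior_subset
  have hQn : Q.Nonempty := hQi.mono interior_subset
  have hW' : ∀ w : EuclideanSpace ℝ (Fin 3), w ≠ 0 → Module.finrank ℝ (vectorSpan ℝ (exposedFace P w)) = 2 →
      Module.finrank ℝ (vectorSpan ℝ (exposedFace Q w)) = 2 := by
    intro w hw h
    obtain ⟨x, hx⟩ := hT w hw h
    rw [hx, vspan_translate, h]
  have hT' : ∀ w : EuclideanSpace ℝ (Fin 3), w ≠ 0 → Module.finrank ℝ (vectorSpan ℝ (exposedFace Q w)) = 2 →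
      ∃ x : EuclideanSpace ℝ (Fin 3), exposedFace P w = (x + ·) '' exposedFace Q w := by
    intro w hw h
    obtain ⟨x, hx⟩ := hT w hw (hW w hw h)
    refine ⟨-x, ?_⟩
    rw [hx, Set.image_image]
    simp
  apply translate_of_faces hP hQ hPn hQn
  intro u hu
  by_cases h2 : Module.finrank ℝ (vectorSpan ℝ (exposedFace P u)) = 2
  · exact hT u hu h2
  have h2' : Module.finrank ℝ (vectorSpan ℝ (exposedFace Q u)) ≠ 2 := fun h => h2 (hW u hu h)
  have l1 := dim_le_two P hu
  have l2 := dim_le_two Q hu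
  obtain ⟨x, hx⟩ := slide hP hQ hi hQn hW hT hu (by omega)
  obtain ⟨y, hy⟩ := slide hQ hP hQi hPn hW' hT' hu (by omega)
  refine ⟨x, Set.Subset.antisymm ?_ hx⟩
  have hyx : y + x = 0 := by
    refine translate_self (eF_compact (poly_compact hP) u).isBounded
      (eF_nonempty (poly_compact hP) hPn u) ?_
    rintro _ ⟨p, hp, rfl⟩
    have := hy ⟨_, hx ⟨p, hp, rfl⟩, rfl⟩
    simpa [add_assoc] using this
  intro q hq
  refine ⟨y + q, hy ⟨q, hq, rfl⟩, ?_⟩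
  simp only
  rw [← add_assoc, add_comm x y, hyx, zero_add]

/-- Facets that are isothetic have the same normal. -/
lemma normal_eq {P Q : Set (EuclideanSpace ℝ (Fin 3))} (hPc : Convex ℝ P) (hi : (interior P).Nonempty) {w w' : EuclideanSpace ℝ (Fin 3)}
    (hw : IsFacetDir P w) (hw' : ‖w'‖ = 1)
    (h : Isothetic P (exposedFace P w) Q (exposedFace Q w')) : w' = w := by
  obtain ⟨⟨t, ht⟩, hc⟩ := h
  obtain ⟨hw1, hdim⟩ := hw
  have hw0 : w ≠ 0 := by intro h; simp [h] at hw1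
  have : Fact (Module.finrank ℝ (EuclideanSpace ℝ (Fin 3)) = 2 + 1) := ⟨by simp⟩
  have hle : ∀ (R : Set (EuclideanSpace ℝ (Fin 3))) (v : EuclideanSpace ℝ (Fin 3)), vectorSpan ℝ (exposedFace R v) ≤ (ℝ ∙ v)ᗮ := by
    intro R v
    rw [vectorSpan_def, Submodule.span_le]
    rintro _ ⟨x, hx, y, hy, rfl⟩
    simp only [SetLike.mem_coe, Submodule.mem_orthogonal_singleton_iff_inner_right, vsub_eq_sub,
      inner_sub_right]
    have := hx.2 y hy.1
    have := hy.2 x hx.1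
    linarith
  have heq : vectorSpan ℝ (exposedFace P w) = (ℝ ∙ w)ᗮ := by
    apply Submodule.eq_of_le_of_finrank_eq (hle P w)
    rw [Submodule.finrank_orthogonal_span_singleton (𝕜 := ℝ) (n := 2) hw0, hdim]
  have hle' := hle Q w'
  rw [ht, vspan_translate, heq] at hle'
  have hmem : w' ∈ (ℝ ∙ w) := by
    rw [← Submodule.orthogonal_orthogonal (ℝ ∙ w), Submodule.mem_orthogonal]
    intro v hv
    have := hle' hv
    rw [real_inner_comm]
    exact Submodule.mem_orthogonal_singleton_iff_inner_right.1 this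
  obtain ⟨c, rfl⟩ := Submodule.mem_span_singleton.1 hmem
  have hcabs : |c| = 1 := by rw [norm_smul, hw1, mul_one] at hw'; simpa using hw'
  rcases (abs_eq zero_le_one).1 hcabs with h1 | h1
  · rw [h1, one_smul]
  exfalso
  subst h1
  have hne : (exposedFace P w).Nonempty := by
    by_contra hemp
    rw [Set.not_nonempty_iff_eq_empty] at hemp
    rw [hemp, vectorSpan_empty, finrank_bot] at hdim
    omega
  obtain ⟨x, hx⟩ := hne.intrinsicInterior (eF_convex hPc w)
  have hxF := intrinsicInterior_subset hx
  have hall : ∀ y ∈ P, inner ℝ w (y - x) = 0 := by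
    intro y hy
    have hm : y - x ∈ supportCone P (exposedFace P w) := ⟨x, hx, y, hy, 1, zero_le_one, by simp⟩
    rw [hc] at hm
    obtain ⟨x', hx', y', hy', μ, hμ, he⟩ := hm
    have h3 := (intrinsicInterior_subset hx').2 y' hy'
    have h4 : inner ℝ w (y - x) = μ * (inner ℝ w y' - inner ℝ w x') := by
      rw [he, real_inner_smul_right, inner_sub_right]
    rw [real_inner_smul_left, real_inner_smul_left] at h3
    have h5 := hxF.2 y hy
    have h6 : 0 ≤ μ * (inner ℝ w y' - inner ℝ w x') := mul_nonneg hμ (by linarith)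
    rw [inner_sub_right] at h4 ⊢
    linarith
  exact hw0 (not_flat hi hall)

lemma facetDir_normalize {P : Set (EuclideanSpace ℝ (Fin 3))} {w : EuclideanSpace ℝ (Fin 3)} (hw : w ≠ 0) :
    IsFacetDir P (‖w‖⁻¹ • w) ↔ Module.finrank ℝ (vectorSpan ℝ (exposedFace P w)) = 2 := by
  have h : 0 < ‖w‖ := norm_pos_iff.2 hw
  rw [IsFacetDir, eF_smul P w (inv_pos.2 h), norm_smul, norm_inv, norm_norm, inv_mul_cancel₀ h.ne']
  simp

/-- Every face contains an exposed vertex. -/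
lemma exists_vertex {P : Set (EuclideanSpace ℝ (Fin 3))} (hP : IsPolytope P) (hPn : P.Nonempty) {e : EuclideanSpace ℝ (Fin 3)} (he : e ≠ 0) :
    ∃ v ∈ exposedFace P e, IsProperFace P {v} := by
  have hFc := eF_compact (poly_compact hP) e
  obtain ⟨v, hv, hmax⟩ := hFc.exists_isMaxOn (eF_nonempty (poly_compact hP) hPn e)
    (f := fun x => ‖x‖) (by fun_prop)
  refine ⟨v, hv, ?_⟩
  have hcont : Continuous (fun t : ℝ => e + t • v) := by fun_prop
  have ht : Tendsto (fun t : ℝ => e + t • v) (𝓝[>] 0) (𝓝 e) := by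
    have := (hcont.tendsto 0).mono_left (nhdsWithin_le_nhds (s := Set.Ioi 0))
    simpa using this
  obtain ⟨t, ⟨hg, hne⟩, ht0⟩ := ((ht.eventually ((germ hP hPn e).and
    (isOpen_ne.mem_nhds he))).and self_mem_nhdsWithin).exists
  have ht0 : 0 < t := ht0
  have hne : e + t • v ≠ 0 := hne
  have hface : exposedFace P (e + t • v) = {v} := by
    rw [hg]
    have hin : ∀ y ∈ exposedFace P e, inner ℝ e y = inner ℝ e v := fun y hy =>
      le_antisymm (hv.2 y hy.1) (hy.2 v hv.1)
    have hle : ∀ y ∈ exposedFace P e, inner ℝ v y ≤ ‖v‖ ^ 2 := by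
      intro y hy
      have h1 := real_inner_le_norm v y
      have h2 : ‖y‖ ≤ ‖v‖ := hmax hy
      nlinarith [norm_nonneg v]
    ext y
    simp only [Set.mem_singleton_iff]
    constructor
    · rintro ⟨hy, hy'⟩
      have h1 := hy' v hv
      simp only [inner_add_left, real_inner_smul_left, hin y hy, real_inner_self_eq_norm_sq] at h1
      have h2 : ‖v‖ ^ 2 ≤ inner ℝ v y := by nlinarith
      have h3 : ‖y‖ ≤ ‖v‖ := hmax hy
      have h4 : ‖y - v‖ ^ 2 ≤ 0 := by
        rw [norm_sub_sq_real, real_inner_comm]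
        nlinarith [norm_nonneg y]
      have h5 : ‖y - v‖ = 0 := by nlinarith [norm_nonneg (y - v)]
      exact sub_eq_zero.1 (norm_eq_zero.1 h5)
    · rintro rfl
      refine ⟨hv, fun x hx => ?_⟩
      simp only [inner_add_left, real_inner_smul_left, hin x hx, real_inner_self_eq_norm_sq]
      have := hle x hx
      nlinarith
  refine ⟨‖e + t • v‖⁻¹ • (e + t • v), ?_, ?_⟩
  · rw [norm_smul, norm_inv, norm_norm, inv_mul_cancel₀ (norm_ne_zero_iff.2 hne)]
  · rw [eF_smul _ _ (inv_pos.2 (norm_pos_iff.2 hne)), hface]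

/-- If a vertex of `P` in the face `P_e` is isothetic to a vertex of `Q` and `Q_e` is a facet,
then so is `P_e`. -/
lemma facet_of_vertex {P Q G : Set (EuclideanSpace ℝ (Fin 3))} {e v : EuclideanSpace ℝ (Fin 3)} (he : e ≠ 0) (hv : v ∈ exposedFace P e)
    (hG : IsProperFace Q G) (hiso : Isothetic P {v} Q G)
    (hd : Module.finrank ℝ (vectorSpan ℝ (exposedFace Q e)) = 2) :
    Module.finrank ℝ (vectorSpan ℝ (exposedFace P e)) = 2 := by
  apply le_antisymm (dim_le_two P he)
  obtain ⟨⟨t, ht⟩, hc⟩ := hiso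
  obtain ⟨z, -, hz⟩ := hG
  set u := t + v with hu
  have hGu : G = {u} := by rw [ht]; simp [hu]
  have huQ : u ∈ Q := by
    have : u ∈ G := by rw [hGu]; rfl
    rw [hz] at this; exact this.1
  rw [hGu] at hc
  have hcone : ∀ y ∈ Q, ∃ p ∈ P, ∃ μ : ℝ, 0 ≤ μ ∧ y - u = μ • (p - v) := by
    intro y hy
    have : y - u ∈ supportCone Q {u} := ⟨u, by simp, y, hy, 1, zero_le_one, by simp⟩
    rw [← hc] at this
    obtain ⟨x, hx, p, hp, μ, hμ, h⟩ := this
    rw [intrinsicInterior_singleton, Set.mem_singleton_iff] at hx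
    subst hx
    exact ⟨p, hp, μ, hμ, h⟩
  have hue : u ∈ exposedFace Q e := by
    refine ⟨huQ, fun y hy => ?_⟩
    obtain ⟨p, hp, μ, hμ, h⟩ := hcone y hy
    have h1 : inner ℝ e (y - u) = μ * (inner ℝ e p - inner ℝ e v) := by
      rw [h, real_inner_smul_right, inner_sub_right]
    have h2 := hv.2 p hp
    rw [inner_sub_right] at h1
    nlinarith
  rw [← hd]
  apply Submodule.finrank_mono
  rw [vectorSpan_eq_span_vsub_set_right ℝ hue, Submodule.span_le]
  rintro _ ⟨y, hy, rfl⟩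
  obtain ⟨p, hp, μ, hμ, h⟩ := hcone y hy.1
  simp only [vsub_eq_sub, SetLike.mem_coe]
  rw [h]
  by_cases h0 : μ = 0
  · rw [h0, zero_smul]; exact Submodule.zero_mem _
  · apply Submodule.smul_mem
    refine vsub_mem_vectorSpan ℝ ?_ hv
    have h1 : inner ℝ e (y - u) = μ * (inner ℝ e p - inner ℝ e v) := by
      rw [h, real_inner_smul_right, inner_sub_right]
    have h2 := hy.2 u huQ
    have h3 : 0 < μ := lt_of_le_of_ne hμ (Ne.symm h0)
    rw [inner_sub_right] at h1
    refine ⟨hp, fun q hq => (hv.2 q hq).trans ?_⟩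
    by_contra hlt
    push Not at hlt
    nlinarith

lemma posAlt_of_iso {P Q : Set (EuclideanSpace ℝ (Fin 3))} {w : EuclideanSpace ℝ (Fin 3)} (h : Isothetic P (exposedFace P w) Q (exposedFace Q w)) :
    PosAlt P Q w := by
  obtain ⟨⟨t, ht⟩, hc⟩ := h
  refine ⟨-t, ?_, hc⟩
  rw [ht, Set.image_image]
  simp

lemma interior_neg_nonempty {P : Set (EuclideanSpace ℝ (Fin 3))} (hi : (interior P).Nonempty) :
    (interior (-P)).Nonempty := by
  rw [← Set.image_neg_eq_neg]
  have := (Homeomorph.neg (EuclideanSpace ℝ (Fin 3))).image_interior P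
  simp only [Homeomorph.coe_neg] at this
  have h2 := hi.image (fun x : EuclideanSpace ℝ (Fin 3) => -x)
  exact this ▸ h2

lemma poly_neg {P : Set (EuclideanSpace ℝ (Fin 3))} (h : IsPolytope P) : IsPolytope (-P) := by
  classical
  obtain ⟨S, rfl⟩ := h
  refine ⟨-S, ?_⟩
  rw [Finset.coe_neg, convexHull_neg]

lemma core {P P' : Set (EuclideanSpace ℝ (Fin 3))} (hP : IsPolytope P) (hP' : IsPolytope P')
    (hPint : (interior P).Nonempty) (hP'int : (interior P').Nonempty)
    (hsyn : Synisothetic P (-P) P' (-P'))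
    (hno : ∀ w, IsFacetDir P w → PosAlt P (-P') w → PosAlt P P' w) :
    ∃ t : EuclideanSpace ℝ (Fin 3), P' = (t + ·) '' P := by
  have hPn : P.Nonempty := hPint.mono interior_subset
  have hpos : ∀ w, IsFacetDir P w → PosAlt P P' w := by
    intro w hw
    obtain ⟨G, ⟨⟨w', hw', rfl⟩, hiso⟩ | ⟨⟨w', hw', rfl⟩, hiso⟩⟩ :=
      hsyn.1 (exposedFace P w) ⟨w, hw.1, rfl⟩
    · have := normal_eq (poly_convex hP) hPint hw hw' hiso
      subst this
      exact posAlt_of_iso hiso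
    · have := normal_eq (poly_convex hP) hPint hw hw' hiso
      subst this
      exact hno _ hw (posAlt_of_iso hiso)
  have hT : ∀ w : EuclideanSpace ℝ (Fin 3), w ≠ 0 → Module.finrank ℝ (vectorSpan ℝ (exposedFace P w)) = 2 →
      ∃ x : EuclideanSpace ℝ (Fin 3), exposedFace P' w = (x + ·) '' exposedFace P w := by
    intro w hw h
    obtain ⟨x, hx, -⟩ := hpos _ ((facetDir_normalize hw).2 h)
    have hpw : 0 < ‖w‖⁻¹ := inv_pos.2 (norm_pos_iff.2 hw)
    rw [eF_smul _ _ hpw, eF_smul _ _ hpw] at hx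
    refine ⟨-x, ?_⟩
    rw [hx, Set.image_image]
    simp
  have hW1 : ∀ e : EuclideanSpace ℝ (Fin 3), IsFacetDir P' e → IsFacetDir P e := by
    intro e hfe
    have he0 : e ≠ 0 := by intro h; simpa [h] using hfe.1
    obtain ⟨G, ⟨⟨w', hw', rfl⟩, hiso⟩ | ⟨⟨w', hw', rfl⟩, hiso⟩⟩ :=
      hsyn.2.2.1 (exposedFace P' e) ⟨e, hfe.1, rfl⟩
    · have := normal_eq (poly_convex hP') hP'int hfe hw' hiso
      subst this
      obtain ⟨⟨t, ht⟩, -⟩ := hiso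
      refine ⟨hw', ?_⟩
      rw [ht, vspan_translate]; exact hfe.2
    · have := normal_eq (poly_convex hP') hP'int hfe hw' hiso
      subst this
      obtain ⟨⟨t, ht⟩, -⟩ := hiso
      have hd : Module.finrank ℝ (vectorSpan ℝ (exposedFace P (-w'))) = 2 := by
        rw [← vspan_neg, ← eF_neg, ht, vspan_translate]; exact hfe.2
      obtain ⟨x, hx⟩ := hT (-w') (neg_ne_zero.2 he0) hd
      have hd' : Module.finrank ℝ (vectorSpan ℝ (exposedFace (-P') w')) = 2 := by
        rw [eF_neg, vspan_neg, hx, vspan_translate, hd]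
      obtain ⟨v, hv, hvf⟩ := exists_vertex hP hPn he0
      refine ⟨hw', ?_⟩
      obtain ⟨G, ⟨hG, hiso⟩ | ⟨hG, hiso⟩⟩ := hsyn.1 _ hvf
      · exact facet_of_vertex he0 hv hG hiso hfe.2
      · exact facet_of_vertex he0 hv hG hiso hd'
  refine translate_of_facets hP hP' hPint hP'int ?_ hT
  intro w hw h
  exact (facetDir_normalize hw).1 (hW1 _ ((facetDir_normalize hw).2 h))

lemma syn_swap {P₁ P₂ Q₁ Q₂ : Set (EuclideanSpace ℝ (Fin 3))} (h : Synisothetic P₁ P₂ Q₁ Q₂) :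
    Synisothetic P₁ P₂ Q₂ Q₁ := by
  obtain ⟨h1, h2, h3, h4⟩ := h
  exact ⟨fun F hF => (h1 F hF).imp fun _ h => h.symm, fun F hF => (h2 F hF).imp fun _ h => h.symm,
    h4, h3⟩

lemma core_neg {P P' : Set (EuclideanSpace ℝ (Fin 3))} (hP : IsPolytope P) (hP' : IsPolytope P')
    (hPint : (interior P).Nonempty) (hP'int : (interior P').Nonempty)
    (hsyn : Synisothetic P (-P) P' (-P'))
    (hno : ∀ w, IsFacetDir P w → PosAlt P P' w → PosAlt P (-P') w) :
    ∃ t : EuclideanSpace ℝ (Fin 3), P' = (t + ·) '' (-P) := by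
  obtain ⟨t, ht⟩ := core hP (poly_neg hP') hPint (interior_neg_nonempty hP'int)
    (by rw [neg_neg]; exact syn_swap hsyn) (by rw [neg_neg]; exact hno)
  refine ⟨-t, ?_⟩
  rw [← neg_neg P', ht]
  ext x
  simp only [Set.mem_neg, Set.image_add_left, Set.mem_preimage, neg_neg]
  rw [neg_add]

/-- Let `(P, −P)` and `(P', −P')` be synisothetic.  A facet `P_w` is *positive* if only
`PosAlt P P' w` holds, *negative* if only `PosAlt P (−P') w` holds, and *neutral* if both
hold.  If no facet of `P` is negative then `P'` is a translate of `P`; if no facet is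
positive then `P'` is a translate of `−P`; if every facet is neutral then both `P` and
`P'` are centrally symmetric. -/
theorem no_negative_facets_implies_translate
    (P P' : Set (EuclideanSpace ℝ (Fin 3)))
    (hP : IsPolytope P) (hP' : IsPolytope P')
    (hPint : (interior P).Nonempty) (hP'int : (interior P').Nonempty)
    (hsyn : Synisothetic P (-P) P' (-P')) :
    ((∀ w, IsFacetDir P w → PosAlt P (-P') w → PosAlt P P' w) →
      ∃ t : EuclideanSpace ℝ (Fin 3), P' = (t + ·) '' P) ∧
    ((∀ w, IsFacetDir P w → PosAlt P P' w → PosAlt P (-P') w) →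
      ∃ t : EuclideanSpace ℝ (Fin 3), P' = (t + ·) '' (-P)) ∧
    ((∀ w, IsFacetDir P w → PosAlt P P' w ∧ PosAlt P (-P') w) →
      ((∃ c : EuclideanSpace ℝ (Fin 3), P = (c + ·) '' (-P)) ∧
        (∃ c : EuclideanSpace ℝ (Fin 3), P' = (c + ·) '' (-P')))) := by
  have h1 := core hP hP' hPint hP'int hsyn
  have h2 := core_neg hP hP' hPint hP'int hsyn
  refine ⟨h1, h2, fun h => ?_⟩
  obtain ⟨t, ht⟩ := h1 fun w hw _ => (h w hw).1
  obtain ⟨s, hs⟩ := h2 fun w hw _ => (h w hw).2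
  have hm1 : ∀ x, x ∈ P' ↔ x - t ∈ P := by
    intro x
    rw [ht]
    simp [sub_eq_neg_add]
  have hm2 : ∀ x, x ∈ P' ↔ s - x ∈ P := by
    intro x
    rw [hs]
    simp [sub_eq_neg_add]
  refine ⟨⟨s - t, ?_⟩, ⟨s + t, ?_⟩⟩
  · ext x
    have e1 := hm1 (x + t)
    have e2 := hm2 (x + t)
    rw [add_sub_cancel_right] at e1
    rw [← e1, e2]
    simp only [Set.image_add_left, Set.mem_preimage, Set.mem_neg]
    rw [show s - (x + t) = -(-(s - t) + x) by abel]
  · ext x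
    simp only [Set.image_add_left, Set.mem_preimage, Set.mem_neg]
    rw [hm2 x, hm1]
    rw [show -(-(s + t) + x) - t = s - x by abel]
end

section
/- Let P ⊂ ℝ³ be a convex polytope with non-empty interior and let Λ ⊂ ∂P, where interior, closure and boundary of subsets of ∂P are taken in the relative topology of ∂P. Assume that int Λ is connected, Λ = cl(int Λ), Λ ≠ ∅, Λ ≠ ∂P, and that ∂Λ is the union of finitely many polygonal curves, each with finitely many edges. Then the boundary of each connected component of ∂P \ Λ is a simple closed curve. -/
open MeasureTheory Pointwise

namespace JordanAux

set_option linter.unusedSectionVars false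

open Set Topology Filter unitInterval

/-- Homotopies of nowhere zero functions starting at the constant `1` have logarithms. -/
lemma exists_log_of_homotopy {A : Type*} [TopologicalSpace A] (H : C(I × A, ℂ))
    (hne : ∀ x, H x ≠ 0) (h0 : ∀ a, H (0, a) = 1) :
    ∃ L : C(A, ℂ), ∀ a, Complex.exp (L a) = H (1, a) := by
  let H' : C(I × A, {z : ℂ // z ≠ 0}) := ⟨fun x => ⟨H x, hne x⟩, by fun_prop⟩
  have h0' : ∀ a, H' (0, a) = (⟨_, Complex.exp_ne_zero ((ContinuousMap.const A (0 : ℂ)) a)⟩ :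
      {z : ℂ // z ≠ 0}) := by
    intro a
    apply Subtype.ext
    simp [H', h0]
  let G := Complex.isCoveringMap_exp.liftHomotopy H' (ContinuousMap.const A (0 : ℂ)) h0'
  refine ⟨⟨fun a => G (1, a), by fun_prop⟩, fun a => ?_⟩
  have := congr_fun (Complex.isCoveringMap_exp.liftHomotopy_lifts H'
    (ContinuousMap.const A (0 : ℂ)) h0') (1, a)
  exact congrArg Subtype.val this

/-- A continuous function on a preconnected set with constant exponential is constant. -/
lemma const_of_exp_const {A : Type*} [TopologicalSpace A] {s : Set A} (hs : IsPreconnected s)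
    {g : A → ℂ} (hg : ContinuousOn g s) {c : ℂ} (hc : ∀ a ∈ s, Complex.exp (g a) = c)
    {a a' : A} (ha : a ∈ s) (ha' : a' ∈ s) : g a = g a' := by
  refine Complex.isCoveringMap_exp.constOn_of_comp hs hg ?_ ha ha'
  intro x hx y hy
  apply Subtype.ext
  simp [hc x hx, hc y hy]

section
variable {T : Type*} [TopologicalSpace T] [CompactSpace T] [T2Space T]

open Classical in
/-- extension of a chart -/
noncomputable def chartExt {b : T} (φ : ({b}ᶜ : Set T) ≃ₜ ℂ) (z : T) : ℂ :=
  if h : z ≠ b then φ ⟨z, h⟩ else 0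

lemma chartExt_apply {b : T} (φ : ({b}ᶜ : Set T) ≃ₜ ℂ) {z : T} (h : z ≠ b) :
    chartExt φ z = φ ⟨z, h⟩ := dif_pos h

lemma chartExt_continuousOn {b : T} (φ : ({b}ᶜ : Set T) ≃ₜ ℂ) :
    ContinuousOn (chartExt φ) {b}ᶜ := by
  rw [continuousOn_iff_continuous_domRestrict]
  have : ({b}ᶜ : Set T).domRestrict (chartExt φ) = φ := by
    ext ⟨z, hz⟩
    exact chartExt_apply φ hz
  rw [this]
  exact φ.continuous

lemma chartExt_inj {b : T} (φ : ({b}ᶜ : Set T) ≃ₜ ℂ) {z w : T} (hz : z ≠ b) (hw : w ≠ b)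
    (h : chartExt φ z = chartExt φ w) : z = w := by
  rw [chartExt_apply φ hz, chartExt_apply φ hw] at h
  exact congrArg Subtype.val (φ.injective h)

lemma chartExt_symm {b : T} (φ : ({b}ᶜ : Set T) ≃ₜ ℂ) (c : ℂ) :
    chartExt φ (φ.symm c) = c := by
  have : ((φ.symm c : ({b}ᶜ : Set T)) : T) ≠ b := (φ.symm c).2
  rw [chartExt_apply φ this]
  exact φ.apply_symm_apply c

lemma chartExt_tendsto {b : T} (φ : ({b}ᶜ : Set T) ≃ₜ ℂ) :
    Tendsto (chartExt φ) (𝓝[≠] b) (cocompact ℂ) := by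
  rw [Filter.hasBasis_cocompact.tendsto_right_iff]
  intro K hK
  have h1 : IsCompact ((fun c => (φ.symm c : T)) '' K) := hK.image (by fun_prop)
  have h2 : ((fun c => (φ.symm c : T)) '' K)ᶜ ∈ 𝓝 b := by
    apply h1.isClosed.isOpen_compl.mem_nhds
    rintro ⟨c, -, hc⟩
    exact (φ.symm c).2 hc
  filter_upwards [mem_nhdsWithin_of_mem_nhds h2, self_mem_nhdsWithin] with z hz hzb hzK
  apply hz
  refine ⟨_, hzK, ?_⟩
  have hzb' : z ≠ b := hzb
  rw [chartExt_apply φ hzb']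
  simp

open Classical in
/-- The function `1/(Φ q - Φ w)` extended by zero at `b`. -/
noncomputable def gfun {b : T} (φ : ({b}ᶜ : Set T) ≃ₜ ℂ) (q w : T) : ℂ :=
  if w = b then 0 else (chartExt φ q - chartExt φ w)⁻¹

lemma gfun_continuousOn {b q : T} (φ : ({b}ᶜ : Set T) ≃ₜ ℂ) (hq : q ≠ b) :
    ContinuousOn (gfun φ q) {q}ᶜ := by
  intro w hw
  apply ContinuousAt.continuousWithinAt
  by_cases hwb : w = b
  · subst hwb
    rw [continuousAt_iff_punctured_nhds]
    have h1 : Tendsto (fun z => (chartExt φ q - chartExt φ z)⁻¹) (𝓝[≠] w) (𝓝 0) := by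
      refine (Filter.tendsto_inv₀_cobounded (α := ℂ)).comp ?_
      rw [Metric.cobounded_eq_cocompact]
      exact (Homeomorph.subLeft (chartExt φ q)).isClosedEmbedding.tendsto_cocompact.comp
        (chartExt_tendsto φ)
    have h2 : gfun φ q w = 0 := by simp [gfun]
    rw [h2]
    refine h1.congr' ?_
    filter_upwards [self_mem_nhdsWithin] with z hz
    have hz' : z ≠ w := hz
    simp [gfun, hz']
  · have h1 : ContinuousAt (fun z => (chartExt φ q - chartExt φ z)⁻¹) w := by
      refine ContinuousAt.inv₀ ?_ ?_
      · exact continuousAt_const.sub ((chartExt_continuousOn φ).continuousAt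
          (isOpen_compl_singleton.mem_nhds hwb))
      · intro h
        exact hw (chartExt_inj φ hq hwb (sub_eq_zero.mp h)).symm
    refine h1.congr ?_
    filter_upwards [isOpen_compl_singleton.mem_nhds hwb] with z hz
    have hz' : z ≠ b := hz
    simp [gfun, hz']

lemma exists_log_compl_path {a b q : T} (φ : ({b}ᶜ : Set T) ≃ₜ ℂ) (hab : a ≠ b)
    (α : C(I, T)) (h0 : α 0 = a) (h1 : α 1 = b) (hq : q ∉ range α) :
    ∃ L : T → ℂ, ContinuousOn L (range α)ᶜ ∧ ∀ z ∉ range α, Complex.exp (L z) =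
      (chartExt φ z - chartExt φ a) / (chartExt φ q - chartExt φ a) := by
  classical
  have hqb : q ≠ b := fun h => hq ⟨1, by rw [h1, h]⟩
  have hzb : ∀ z ∉ range α, z ≠ b := fun z hz h => hz ⟨1, by rw [h1, h]⟩
  have key : ∀ z ∉ range α, ∀ w ∈ range α, w ≠ b → 1 + (chartExt φ z - chartExt φ q) * gfun φ q w
      = (chartExt φ z - chartExt φ w) / (chartExt φ q - chartExt φ w) := by
    intro z hz w hw hwb
    have : chartExt φ q - chartExt φ w ≠ 0 := by
      intro h
      have := chartExt_inj φ hqb hwb (sub_eq_zero.mp h)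
      exact hq (this ▸ hw)
    simp only [gfun, hwb, if_false]
    field_simp
    ring
  let H : C(I × ((range α)ᶜ : Set T), ℂ) :=
    ⟨fun x => 1 + (chartExt φ x.2 - chartExt φ q) * gfun φ q (α (σ x.1)), by
      refine continuous_const.add (Continuous.mul (Continuous.sub ?_ continuous_const) ?_)
      · exact (chartExt_continuousOn φ).comp_continuous (by fun_prop)
          (fun x => hzb _ x.2.2)
      · refine (gfun_continuousOn φ hqb).comp_continuous (by fun_prop) ?_
        intro x h
        exact hq ⟨_, h⟩⟩
  obtain ⟨L, hL⟩ := exists_log_of_homotopy H (by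
    rintro ⟨t, z⟩
    show 1 + (chartExt φ z - chartExt φ q) * gfun φ q (α (σ t)) ≠ 0
    by_cases hb : α (σ t) = b
    · simp [gfun, hb]
    · rw [key z z.2 _ ⟨_, rfl⟩ hb]
      refine div_ne_zero ?_ ?_
      · intro h
        have := chartExt_inj φ (hzb _ z.2) hb (sub_eq_zero.mp h)
        exact z.2 ⟨_, this.symm⟩
      · intro h
        have := chartExt_inj φ hqb hb (sub_eq_zero.mp h)
        exact hq ⟨_, this.symm⟩) (by
    intro z
    show 1 + (chartExt φ z - chartExt φ q) * gfun φ q (α (σ 0)) = 1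
    simp [h1, gfun])
  refine ⟨fun z => if h : z ∈ (range α)ᶜ then L ⟨z, h⟩ else 0, ?_, ?_⟩
  · rw [continuousOn_iff_continuous_domRestrict]
    convert L.continuous with z
    ext z
    have := z.2
    simp only [domRestrict_apply]
    rw [dif_pos this]
  · intro z hz
    have hz' : z ∈ (range α)ᶜ := hz
    beta_reduce
    rw [dif_pos hz', hL]
    show 1 + (chartExt φ z - chartExt φ q) * gfun φ q (α (σ 1)) = _
    rw [key z hz _ ⟨_, rfl⟩ (by simpa [h0] using hab)]
    simp [h0]

/-- Separation part of the Jordan curve theorem. -/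
theorem jordan_separation (hT : ∀ b : T, Nonempty (({b}ᶜ : Set T) ≃ₜ ℂ)) {a b q : T} (hab : a ≠ b)
    (α β : C(I, T)) (hα0 : α 0 = a) (hα1 : α 1 = b) (hβ0 : β 0 = a) (hβ1 : β 1 = b)
    (hαβ : range α ∩ range β ⊆ {a, b}) (hq : q ∉ range α ∪ range β) :
    ¬ IsPreconnected (range α ∪ range β)ᶜ := by
  classical
  intro hpre
  obtain ⟨φ⟩ := hT b
  have hqα : q ∉ range α := fun h => hq (Or.inl h)
  have hqβ : q ∉ range β := fun h => hq (Or.inr h)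
  obtain ⟨Lα, hLα, hLα'⟩ := exists_log_compl_path φ hab α hα0 hα1 hqα
  obtain ⟨Lβ, hLβ, hLβ'⟩ := exists_log_compl_path φ hab β hβ0 hβ1 hqβ
  have hqb : q ≠ b := fun h => hqα ⟨1, by rw [hα1, h]⟩
  have hqa : q ≠ a := fun h => hqα ⟨0, by rw [hα0, h]⟩
  have hzero : ∀ z, z ≠ a → z ≠ b → chartExt φ z - chartExt φ a ≠ 0 := by
    intro z hza hzb h
    exact hza (chartExt_inj φ hzb hab (sub_eq_zero.mp h))
  have hda : ∀ z ∉ range α, z ≠ a := fun z hz h => hz ⟨0, by rw [hα0, h]⟩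
  have hdb : ∀ z ∉ range α, z ≠ b := fun z hz h => hz ⟨1, by rw [hα1, h]⟩
  set k : ℂ := Lα q - Lβ q with hk
  have hexp : ∀ z ∈ (range α ∪ range β)ᶜ, Complex.exp (Lα z - Lβ z) = 1 := by
    intro z hz
    have hzα : z ∉ range α := fun h => hz (Or.inl h)
    have hzβ : z ∉ range β := fun h => hz (Or.inr h)
    rw [Complex.exp_sub, hLα' z hzα, hLβ' z hzβ]
    exact div_self (div_ne_zero (hzero z (hda z hzα) (hdb z hzα)) (hzero q hqa hqb))
  have hconst : ∀ z ∈ (range α ∪ range β)ᶜ, Lα z - Lβ z = k := by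
    intro z hz
    exact const_of_exp_const (g := fun z => Lα z - Lβ z) hpre
      ((hLα.mono (compl_subset_compl.mpr subset_union_left)).sub
      (hLβ.mono (compl_subset_compl.mpr subset_union_right))) hexp hz hq
  have hek : Complex.exp k = 1 := hexp q hq
  let M : T → ℂ := fun z => if z ∈ range α then Lβ z + k else Lα z
  have hMα : EqOn M Lα (range α)ᶜ := fun z hz => if_neg hz
  have hMβ : EqOn M (fun z => Lβ z + k) (range β)ᶜ := by
    intro z hz
    by_cases h : z ∈ range α
    · exact if_pos h
    · have : M z = Lα z := if_neg h
      rw [this, ← hconst z (by rintro (h' | h'); exacts [h h', hz h'])]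
      ring
  have hαo : IsOpen (range α)ᶜ := (isCompact_range α.continuous).isClosed.isOpen_compl
  have hβo : IsOpen (range β)ᶜ := (isCompact_range β.continuous).isClosed.isOpen_compl
  have hM : ∀ z, z ≠ a → z ≠ b → ContinuousAt M z ∧ Complex.exp (M z) =
      (chartExt φ z - chartExt φ a) / (chartExt φ q - chartExt φ a) := by
    intro z hza hzb
    by_cases h : z ∈ range α
    · have hz : z ∈ (range β)ᶜ := by
        intro h'
        rcases hαβ ⟨h, h'⟩ with h | h
        exacts [hza h, hzb h]
      refine ⟨?_, ?_⟩
      · refine ((hLβ.add (continuousOn_const (c := k))).continuousAt (hβo.mem_nhds hz)).congr ?_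
        filter_upwards [hβo.mem_nhds hz] with w hw
        exact (hMβ hw).symm
      · rw [hMβ hz, Complex.exp_add, hek, mul_one, hLβ' z hz]
    · refine ⟨?_, ?_⟩
      · refine (hLα.continuousAt (hαo.mem_nhds h)).congr ?_
        filter_upwards [hαo.mem_nhds h] with w hw
        exact (hMα hw).symm
      · rw [hMα h, hLα' z h]
  let ζ : ℝ → T := fun t => φ.symm (chartExt φ a + Complex.exp (t * Complex.I))
  have hζc : Continuous ζ := by fun_prop
  have hζ : ∀ t, chartExt φ (ζ t) = chartExt φ a + Complex.exp (t * Complex.I) :=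
    fun t => chartExt_symm φ _
  have hζa : ∀ t, ζ t ≠ a := by
    intro t h
    have := hζ t
    rw [h] at this
    simp at this
  have hζb : ∀ t, ζ t ≠ b := fun t => (φ.symm _).2
  have hm : Continuous (fun t : ℝ => M (ζ t) - t * Complex.I) := by
    rw [continuous_iff_continuousAt]
    intro t
    refine ContinuousAt.sub ?_ (by fun_prop)
    exact ContinuousAt.comp (hM _ (hζa t) (hζb t)).1 hζc.continuousAt
  have := const_of_exp_const isPreconnected_univ hm.continuousOn
    (c := (chartExt φ q - chartExt φ a)⁻¹) (by
      intro t _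
      rw [Complex.exp_sub, (hM _ (hζa t) (hζb t)).2, hζ]
      have := Complex.exp_ne_zero (t * Complex.I)
      have := hzero q hqa hqb
      field_simp
      ring) (mem_univ 0) (mem_univ (2 * Real.pi))
  have h2 : ζ (2 * Real.pi) = ζ 0 := by simp [ζ, Complex.exp_two_pi_mul_I]
  rw [h2] at this
  have h3 : (2 * (Real.pi : ℂ)) * Complex.I = 0 := by
    simp only [Complex.ofReal_zero, zero_mul, sub_zero, Complex.ofReal_mul,
      Complex.ofReal_ofNat] at this
    linear_combination this
  simp [Real.pi_ne_zero] at h3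
end

end JordanAux
namespace JordanAux

open Set Topology Filter

abbrev E3 := EuclideanSpace ℝ (Fin 3)

/-- Data of a radial projection from `o` onto a star-shaped surface `X`. -/
structure Radial (X : Set E3) (o : E3) (ρ : E3 → E3) (c : E3 → ℝ) : Prop where
  cont : ContinuousOn ρ {o}ᶜ
  mem : ∀ y, y ≠ o → ρ y ∈ X
  pos : ∀ y, y ≠ o → 0 < c y
  eq : ∀ y, y ≠ o → ρ y - o = c y • (y - o)
  fix : ∀ y ∈ X, ρ y = y
  inj : ∀ y ∈ X, ∀ z ∈ X, ∀ a : ℝ, 0 < a → z - o = a • (y - o) → z = y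
  notMem : o ∉ X

lemma exists_radial {P : Set E3} (hc : Convex ℝ P) (hb : Bornology.IsBounded P)
    {o : E3} (ho : o ∈ interior P) : ∃ ρ c, Radial (frontier P) o ρ c := by
  let h := Homeomorph.addRight o
  let Q : Set E3 := h ⁻¹' P
  have hQc : Convex ℝ Q := by
    have : Q = (fun z => z + o) ⁻¹' P := rfl
    rw [this]
    exact hc.translate_preimage_left o
  have hQ0 : Q ∈ 𝓝 (0 : E3) := by
    apply h.continuous.continuousAt.preimage_mem_nhds
    have : h 0 = o := by simp [h]
    rw [this]
    exact mem_interior_iff_mem_nhds.mp ho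
  have hQb : Bornology.IsVonNBounded ℝ Q := by
    rw [NormedSpace.isVonNBounded_iff]
    have : Q = (fun z => z - o) '' P := by
      ext z
      simp [Q, h, sub_eq_iff_eq_add]
    rw [this]
    exact (LipschitzWith.of_dist_le_mul (K := 1) (by simp)).isBounded_image hb
  have hfr : ∀ y, y ∈ frontier P ↔ gauge Q (y - o) = 1 := by
    intro y
    rw [gauge_eq_one_iff_mem_frontier hQc hQ0, ← h.preimage_frontier]
    simp [h]
  have hg : Continuous (gauge Q) := continuous_gauge hQc hQ0
  have hpos : ∀ y, y ≠ o → 0 < gauge Q (y - o) := by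
    intro y hy
    exact (gauge_pos (absorbent_nhds_zero hQ0) hQb).mpr (sub_ne_zero.mpr hy)
  refine ⟨fun y => o + (gauge Q (y - o))⁻¹ • (y - o), fun y => (gauge Q (y - o))⁻¹, ?_⟩
  refine ⟨?_, ?_, ?_, ?_, ?_, ?_, ?_⟩
  · have h0 : Continuous (fun y => gauge Q (y - o)) := by fun_prop
    have h1 : ContinuousOn (fun y => (gauge Q (y - o))⁻¹) {o}ᶜ := by
      intro y hy
      exact (h0.continuousAt.inv₀ (hpos y hy).ne').continuousWithinAt
    have h2 : ContinuousOn (fun y : E3 => y - o) {o}ᶜ := by fun_prop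
    exact continuousOn_const.add (h1.smul h2)
  · intro y hy
    rw [hfr, add_sub_cancel_left, gauge_smul_of_nonneg (inv_nonneg.mpr (hpos y hy).le)]
    exact inv_mul_cancel₀ (hpos y hy).ne'
  · intro y hy
    exact inv_pos.mpr (hpos y hy)
  · intro y hy
    simp
  · intro y hy
    rw [hfr] at hy
    simp [hy]
  · intro y hy z hz a ha hyz
    rw [hfr] at hy hz
    rw [hyz, gauge_smul_of_nonneg ha.le, hy] at hz
    simp at hz
    rw [hz, one_smul] at hyz
    simpa using hyz
  · rw [hfr]
    simp

lemma Radial.linearIndependent {X : Set E3} {o : E3} {ρ c} (R : Radial X o ρ c) {u v : E3}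
    (huv : u ≠ v) (h : segment ℝ u v ⊆ X) : LinearIndependent ℝ ![u - o, v - o] := by
  have hu : u ∈ X := h (left_mem_segment ℝ u v)
  have hv : v ∈ X := h (right_mem_segment ℝ u v)
  have huo : u ≠ o := fun e => R.notMem (e ▸ hu)
  have hvo : v ≠ o := fun e => R.notMem (e ▸ hv)
  rw [LinearIndependent.pair_iff' (sub_ne_zero.mpr huo)]
  intro a ha
  rcases lt_trichotomy a 0 with h0 | h0 | h0
  · apply R.notMem
    apply h
    refine ⟨-a / (1 - a), 1 / (1 - a), by apply div_nonneg <;> linarith,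
      by apply div_nonneg <;> linarith, by rw [← add_div, div_eq_one_iff_eq] <;> linarith, ?_⟩
    have hv' : v = o + a • (u - o) := by rw [ha]; abel
    have h1 : (1 - a) ≠ 0 := by linarith
    rw [hv']
    ext i
    simp
    field_simp
    ring
  · rw [h0, zero_smul] at ha
    exact hvo (sub_eq_zero.mp ha.symm)
  · exact huv (R.inj u hu v hv a h0 ha.symm).symm

/-- two sides of the cone over a segment: existence of a functional -/
lemma exists_normal {x y : E3} : ∃ n : E3 →ₗ[ℝ] ℝ, n x = 0 ∧ n y = 0 ∧ ∃ d, n d = 1 := by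
  have hlt : Submodule.span ℝ ({x, y} : Set E3) < ⊤ := by
    rw [lt_top_iff_ne_top]
    intro h
    have h1 : Module.finrank ℝ (Submodule.span ℝ ({x, y} : Set E3)) ≤ 2 := by
      classical
      have := finrank_span_finset_le_card (R := ℝ) ({x, y} : Finset E3)
      simp only [Finset.coe_insert, Finset.coe_singleton] at this
      exact this.trans Finset.card_le_two
    rw [h, finrank_top] at h1
    simp at h1
  obtain ⟨f, hf, hle⟩ := Submodule.exists_le_ker_of_lt_top _ hlt
  obtain ⟨d, hd⟩ : ∃ d, f d ≠ 0 := by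
    by_contra! h
    exact hf (LinearMap.ext h)
  refine ⟨f, hle (Submodule.subset_span (by simp)), hle (Submodule.subset_span (by simp)),
    (f d)⁻¹ • d, ?_⟩
  simp [hd]

lemma exists_normal₂ {x y : E3} (h : LinearIndependent ℝ ![x, y]) :
    ∃ n m : E3 →ₗ[ℝ] ℝ, n x = 0 ∧ n y = 0 ∧ m x = 0 ∧ m y = 1 ∧
      ∃ d, n d = 1 ∧ m d = 0 := by
  obtain ⟨n, hx, hy, d, hd⟩ := exists_normal (x := x) (y := y)
  have hnot : y ∉ Submodule.span ℝ ({x, d} : Set E3) := by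
    rw [Submodule.mem_span_pair]
    rintro ⟨a, b, hab⟩
    have h1 := congrArg n hab
    simp only [map_add, map_smul, hx, hd, hy] at h1
    have hb : b = 0 := by simpa using h1
    rw [LinearIndependent.pair_iff] at h
    have := h a (-1) (by rw [← hab, hb]; module)
    linarith [this.2]
  obtain ⟨m, hm, hle⟩ := Submodule.exists_le_ker_of_notMem hnot
  refine ⟨n, (m y)⁻¹ • m, hx, hy, ?_, ?_, d, hd, ?_⟩
  · have : m x = 0 := hle (Submodule.subset_span (by simp))
    simp [this]
  · simp [hm]
  · have : m d = 0 := hle (Submodule.subset_span (by simp))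
    simp [this]

section sphere

lemma sphere_chart (b : Metric.sphere (0 : E3) 1) :
    Nonempty (({b}ᶜ : Set (Metric.sphere (0 : E3) 1)) ≃ₜ ℂ) := by
  have hv : ‖(b : E3)‖ = 1 := by simp
  have : Fact (Module.finrank ℝ E3 = 2 + 1) := ⟨by simp⟩
  let e := stereographic' 2 b
  have h1 : e.source = {b}ᶜ := stereographic'_source b
  have h2 : e.target = univ := stereographic'_target b
  have e1 : ({b}ᶜ : Set (Metric.sphere (0 : E3) 1)) ≃ₜ e.source := Homeomorph.setCongr h1.symm
  have e2 : e.target ≃ₜ EuclideanSpace ℝ (Fin 2) :=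
    (Homeomorph.setCongr h2).trans (Homeomorph.Set.univ _)
  have e3 : EuclideanSpace ℝ (Fin 2) ≃ₜ ℂ :=
    Complex.orthonormalBasisOneI.repr.toHomeomorph.symm
  exact ⟨((e1.trans e.toHomeomorphSourceTarget).trans e2).trans e3⟩

lemma frontier_homeo {P : Set E3} (hc : Convex ℝ P) (hb : Bornology.IsBounded P)
    (hi : (interior P).Nonempty) : Nonempty (frontier P ≃ₜ Metric.sphere (0 : E3) 1) := by
  obtain ⟨h, -, -, h3⟩ := exists_homeomorph_image_interior_closure_frontier_eq_unitBall hc hi hb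
  exact ⟨(h.image (frontier P)).trans (Homeomorph.setCongr h3)⟩

variable {T : Type*} [TopologicalSpace T]

lemma chart_of_homeo (f : T ≃ₜ Metric.sphere (0 : E3) 1) (b : T) :
    Nonempty (({b}ᶜ : Set T) ≃ₜ ℂ) := by
  obtain ⟨g⟩ := sphere_chart (f b)
  refine ⟨((f.image {b}ᶜ).trans (Homeomorph.setCongr ?_)).trans g⟩
  rw [image_compl_eq f.bijective, image_singleton]

lemma props_of_homeo (f : T ≃ₜ Metric.sphere (0 : E3) 1) :
    CompactSpace T ∧ T2Space T ∧ LocallyConnectedSpace T ∧ PreconnectedSpace T := by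
  have : Fact (Module.finrank ℝ E3 = 2 + 1) := ⟨by simp⟩
  refine ⟨f.symm.compactSpace, f.symm.t2Space, ?_, ?_⟩
  · have : LocallyConnectedSpace (Metric.sphere (0 : E3) 1) :=
      ChartedSpace.locallyConnectedSpace (EuclideanSpace ℝ (Fin 2)) _
    exact f.isOpenEmbedding.locallyConnectedSpace
  · have : PreconnectedSpace (Metric.sphere (0 : E3) 1) := by
      apply isPreconnected_iff_preconnectedSpace.mp
      apply isPreconnected_sphere
      rw [← Module.finrank_eq_rank]
      simp
    exact f.symm.surjective.denseRange.preconnectedSpace f.symm.continuous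

end sphere

end JordanAux
namespace JordanAux

open Set Topology Filter

/-- The trace on `X` of the cone over `S`. -/
def side (X : Set E3) (ρ : E3 → E3) (S : Set E3) : Set X := {x | ∃ y ∈ S, ρ y = x}

section
variable {X : Set E3} {o : E3} {ρ : E3 → E3} {c : E3 → ℝ}

lemma Radial.side_preconnected (R : Radial X o ρ c) {S : Set E3} (hS : IsPreconnected S)
    (ho : o ∉ S) : IsPreconnected (side X ρ S) := by
  rw [← Topology.IsInducing.subtypeVal.isPreconnected_image]
  have : Subtype.val '' (side X ρ S) = ρ '' S := by
    ext z
    constructor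
    · rintro ⟨x, ⟨y, hy, hyx⟩, rfl⟩
      exact ⟨y, hy, hyx⟩
    · rintro ⟨y, hy, rfl⟩
      exact ⟨⟨ρ y, R.mem y (fun h => ho (h ▸ hy))⟩, ⟨y, hy, rfl⟩, rfl⟩
  rw [this]
  exact hS.image _ (R.cont.mono (fun y hy h => ho (h ▸ hy)))

lemma Radial.exists_ball (R : Radial X o ρ c) (p : X) {O : Set X} (hO : O ∈ 𝓝 p) :
    ∃ r > 0, o ∉ Metric.ball (p : E3) r ∧ ∀ x ∈ side X ρ (Metric.ball (p : E3) r), x ∈ O := by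
  have hpo : (p : E3) ≠ o := fun h => R.notMem (h ▸ p.2)
  obtain ⟨O', hO', hsub⟩ := (mem_nhds_subtype X p O).mp hO
  have h1 : ContinuousAt ρ p := R.cont.continuousAt (isOpen_compl_singleton.mem_nhds hpo)
  have h2 : ρ ⁻¹' O' ∈ 𝓝 (p : E3) := h1 (by rwa [R.fix p p.2])
  obtain ⟨r, hr, hb⟩ := Metric.mem_nhds_iff.mp
    (inter_mem h2 (isOpen_compl_singleton.mem_nhds hpo))
  refine ⟨r, hr, fun h => (hb h).2 rfl, ?_⟩
  rintro x ⟨y, hy, hyx⟩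
  apply hsub
  have := (hb hy).1
  rw [mem_preimage, hyx] at this
  exact this

lemma Radial.mem_closure_side (R : Radial X o ρ c) {S : Set E3} {x : X}
    (hx : (x : E3) ∈ closure S) : x ∈ closure (side X ρ S) := by
  rw [mem_closure_iff_nhds]
  intro O hO
  obtain ⟨r, hr, ho, hb⟩ := R.exists_ball x hO
  obtain ⟨y, hy, hyS⟩ := mem_closure_iff_nhds.mp hx _ (Metric.ball_mem_nhds _ hr)
  have hyo : y ≠ o := fun h => ho (h ▸ hy)
  exact ⟨⟨ρ y, R.mem y hyo⟩, hb _ ⟨y, hy, rfl⟩, ⟨y, hyS, rfl⟩⟩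

lemma eventually_half (n : E3 →ₗ[ℝ] ℝ) (y o d : E3) (hd : 0 < n d) (hy : 0 ≤ n (y - o)) :
    ∀ᶠ t : ℝ in 𝓝[>] 0, 0 < n (y + t • d - o) := by
  filter_upwards [self_mem_nhdsWithin] with t ht
  have ht' : 0 < t := ht
  have : y + t • d - o = (y - o) + t • d := by abel
  rw [this, map_add, map_smul, smul_eq_mul]
  positivity

lemma tendsto_line (y d : E3) : Tendsto (fun t : ℝ => y + t • d) (𝓝[>] 0) (𝓝 y) := by
  have : Continuous (fun t : ℝ => y + t • d) := by fun_prop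
  have h := this.tendsto 0
  simp only [zero_smul, add_zero] at h
  exact h.mono_left nhdsWithin_le_nhds

lemma closure_half (n : E3 →ₗ[ℝ] ℝ) (y o d : E3) (hd : 0 < n d) (hy : 0 ≤ n (y - o))
    {B : Set E3} (hB : IsOpen B) (hyB : y ∈ B) : y ∈ closure (B ∩ {y | 0 < n (y - o)}) := by
  refine mem_closure_of_tendsto (tendsto_line y d) ?_
  filter_upwards [eventually_half n y o d hd hy,
    (tendsto_line y d).eventually (hB.mem_nhds hyB)] with t h1 h2
  exact ⟨h2, h1⟩

lemma convex_half (n : E3 →ₗ[ℝ] ℝ) (o : E3) : Convex ℝ {y | 0 < n (y - o)} := by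
  have : {y | 0 < n (y - o)} = {y | n o < n y} := by
    ext y
    simp
  rw [this]
  exact convex_halfSpace_gt n.isLinear _

lemma convex_half' (n : E3 →ₗ[ℝ] ℝ) (o : E3) : Convex ℝ {y | n (y - o) < 0} := by
  have : {y | n (y - o) < 0} = {y | n y < n o} := by
    ext y
    simp
  rw [this]
  exact convex_halfSpace_lt n.isLinear _

lemma Radial.side_map (R : Radial X o ρ c) (n : E3 →ₗ[ℝ] ℝ) {y : E3} (hy : y ≠ o) :
    n (ρ y - o) = c y * n (y - o) := by
  rw [R.eq y hy, map_smul, smul_eq_mul]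

lemma seg_sub {u v z o : E3} (hz : z ∈ segment ℝ u v) :
    ∃ a b : ℝ, 0 ≤ a ∧ 0 ≤ b ∧ z - o = a • (u - o) + b • (v - o) := by
  obtain ⟨a, b, ha, hb, hab, rfl⟩ := hz
  refine ⟨a, b, ha, hb, ?_⟩
  have : o = a • o + b • o := by rw [← add_smul, hab, one_smul]
  nth_rewrite 1 [this]
  module

lemma Radial.two_sided (R : Radial X o ρ c) (u v : E3) (p : X)
    {O : Set X} (hO : O ∈ 𝓝 p) :
    ∃ A B : Set X, IsPreconnected A ∧ IsPreconnected B ∧ A ⊆ O ∧ B ⊆ O ∧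
      (∀ x ∈ A ∪ B, (x : E3) ∉ segment ℝ u v) ∧
      ∃ N ∈ 𝓝 p, N ⊆ closure A ∪ closure B ∧
        ∀ x ∈ N, (x : E3) ∈ segment ℝ u v → x ∈ closure A ∧ x ∈ closure B := by
  obtain ⟨r, hr, ho, hb⟩ := R.exists_ball p hO
  obtain ⟨n, hnu, hnv, d, hd⟩ := exists_normal (x := u - o) (y := v - o)
  have hseg : ∀ z ∈ segment ℝ u v, n (z - o) = 0 := by
    intro z hz
    obtain ⟨a, b, -, -, h⟩ := seg_sub (o := o) hz
    rw [h]
    simp [hnu, hnv]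
  have hcl : ∀ x ∈ Metric.ball (p : E3) r, 0 ≤ n (x - o) →
      x ∈ closure (Metric.ball (p : E3) r ∩ {y | 0 < n (y - o)}) := fun x hx h =>
    closure_half n x o d (by rw [hd]; norm_num) h Metric.isOpen_ball hx
  have hcl' : ∀ x ∈ Metric.ball (p : E3) r, n (x - o) ≤ 0 →
      x ∈ closure (Metric.ball (p : E3) r ∩ {y | n (y - o) < 0}) := by
    intro x hx h
    have := closure_half (-n) x o (-d) (by simp [hd]) (by simpa using h) Metric.isOpen_ball hx
    have e : {y | 0 < (-n) (y - o)} = {y | n (y - o) < 0} := by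
      ext y
      simp only [LinearMap.neg_apply, mem_setOf_eq, Left.neg_pos_iff]
    rwa [e] at this
  refine ⟨side X ρ (Metric.ball (p : E3) r ∩ {y | 0 < n (y - o)}),
    side X ρ (Metric.ball (p : E3) r ∩ {y | n (y - o) < 0}),
    R.side_preconnected ((convex_ball _ _).inter (convex_half n o)).isPreconnected
      (fun h => ho h.1),
    R.side_preconnected ((convex_ball _ _).inter (convex_half' n o)).isPreconnected
      (fun h => ho h.1),
    ?_, ?_, ?_, Subtype.val ⁻¹' Metric.ball (p : E3) r, ?_, ?_, ?_⟩
  · rintro x ⟨y, hy, hyx⟩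
    exact hb x ⟨y, hy.1, hyx⟩
  · rintro x ⟨y, hy, hyx⟩
    exact hb x ⟨y, hy.1, hyx⟩
  · intro x hx hxs
    have h0 := hseg _ hxs
    rcases hx with ⟨y, hy, hyx⟩ | ⟨y, hy, hyx⟩
    all_goals
      have hyo : y ≠ o := fun h => ho (h ▸ hy.1)
      rw [← hyx, R.side_map n hyo] at h0
      have h1 := R.pos y hyo
      have h2 := hy.2
      simp only [mem_setOf_eq] at h2
      rcases mul_eq_zero.mp h0 with h | h <;> linarith
  · exact continuous_subtype_val.continuousAt.preimage_mem_nhds (Metric.ball_mem_nhds _ hr)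
  · intro x hx
    rcases le_total 0 (n (x - o)) with h | h
    · exact Or.inl (R.mem_closure_side (hcl x hx h))
    · exact Or.inr (R.mem_closure_side (hcl' x hx h))
  · intro x hx hxs
    have h0 := hseg _ hxs
    exact ⟨R.mem_closure_side (hcl x hx h0.ge), R.mem_closure_side (hcl' x hx h0.le)⟩

lemma Radial.slit (R : Radial X o ρ c) (w : E3) (p : X)
    (hli : LinearIndependent ℝ ![(p : E3) - o, w - o]) {O : Set X} (hO : O ∈ 𝓝 p) :
    ∃ A : Set X, IsPreconnected A ∧ A ⊆ O ∧ (∀ x ∈ A, (x : E3) ∉ segment ℝ (p : E3) w) ∧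
      ∃ N ∈ 𝓝 p, N ⊆ closure A := by
  obtain ⟨r, hr, ho, hb⟩ := R.exists_ball p hO
  obtain ⟨n, m, hnp, hnw, hmp, hmw, d, hnd, hmd⟩ := exists_normal₂ hli
  have hseg : ∀ z ∈ segment ℝ (p : E3) w, n (z - o) = 0 ∧ 0 ≤ m (z - o) := by
    intro z hz
    obtain ⟨a, b, -, hb, h⟩ := seg_sub (o := o) hz
    rw [h]
    simp [hnp, hnw, hmp, hmw, hb]
  set B := Metric.ball (p : E3) r with hB
  have hpB : (p : E3) ∈ B := Metric.mem_ball_self hr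
  have hcl : ∀ x ∈ B, 0 ≤ n (x - o) → x ∈ closure (B ∩ {y | 0 < n (y - o)}) := fun x hx h =>
    closure_half n x o d (by rw [hnd]; norm_num) h Metric.isOpen_ball hx
  have hcl' : ∀ x ∈ B, n (x - o) ≤ 0 → x ∈ closure (B ∩ {y | n (y - o) < 0}) := by
    intro x hx h
    have := closure_half (-n) x o (-d) (by simp [hnd]) (by simpa using h) Metric.isOpen_ball hx
    have e : {y | 0 < (-n) (y - o)} = {y | n (y - o) < 0} := by
      ext y
      simp only [LinearMap.neg_apply, mem_setOf_eq, Left.neg_pos_iff]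
    rwa [e] at this
  obtain ⟨y₁, h1B, h1n, h1m⟩ : ∃ y ∈ B, 0 < n (y - o) ∧ m (y - o) < 0 := by
    have h1 := eventually_half n p o (d - (w - o)) (by rw [map_sub, hnd, hnw]; norm_num) hnp.ge
    have h2 := eventually_half (-m) p o (d - (w - o))
      (by rw [LinearMap.neg_apply, map_sub, hmd, hmw]; norm_num)
      (by rw [LinearMap.neg_apply, hmp, neg_zero])
    have h3 := (tendsto_line p (d - (w - o))).eventually (Metric.isOpen_ball.mem_nhds hpB)
    obtain ⟨t, ⟨h1, h2⟩, h3⟩ := ((h1.and h2).and h3).exists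
    exact ⟨_, h3, h1, by simpa only [LinearMap.neg_apply, Left.neg_pos_iff] using h2⟩
  obtain ⟨y₂, h2B, h2n, h2m⟩ : ∃ y ∈ B, n (y - o) < 0 ∧ m (y - o) < 0 := by
    have h1 := eventually_half (-n) p o (-d - (w - o))
      (by rw [LinearMap.neg_apply, map_sub, map_neg, hnd, hnw]; norm_num)
      (by rw [LinearMap.neg_apply, hnp, neg_zero])
    have h2 := eventually_half (-m) p o (-d - (w - o))
      (by rw [LinearMap.neg_apply, map_sub, map_neg, hmd, hmw]; norm_num)
      (by rw [LinearMap.neg_apply, hmp, neg_zero])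
    have h3 := (tendsto_line p (-d - (w - o))).eventually (Metric.isOpen_ball.mem_nhds hpB)
    obtain ⟨t, ⟨h1, h2⟩, h3⟩ := ((h1.and h2).and h3).exists
    exact ⟨_, h3, by simpa only [LinearMap.neg_apply, Left.neg_pos_iff] using h1,
      by simpa only [LinearMap.neg_apply, Left.neg_pos_iff] using h2⟩
  have hBc : Convex ℝ B := convex_ball _ _
  have hS : IsPreconnected ((B ∩ {y | 0 < n (y - o)}) ∪ (B ∩ {y | m (y - o) < 0}) ∪
      (B ∩ {y | n (y - o) < 0})) := by
    refine IsPreconnected.union y₂ (Or.inr ⟨h2B, h2m⟩) ⟨h2B, h2n⟩ ?_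
      (hBc.inter (convex_half' n o)).isPreconnected
    exact IsPreconnected.union y₁ ⟨h1B, h1n⟩ ⟨h1B, h1m⟩
      (hBc.inter (convex_half n o)).isPreconnected (hBc.inter (convex_half' m o)).isPreconnected
  have hSB : ((B ∩ {y | 0 < n (y - o)}) ∪ (B ∩ {y | m (y - o) < 0}) ∪
      (B ∩ {y | n (y - o) < 0})) ⊆ B := by
    rintro y ((h | h) | h) <;> exact h.1
  refine ⟨side X ρ _, R.side_preconnected hS (fun h => ho (hSB h)), ?_, ?_,
    Subtype.val ⁻¹' B, ?_, ?_⟩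
  · rintro x ⟨y, hy, hyx⟩
    exact hb x ⟨y, hSB hy, hyx⟩
  · rintro x ⟨y, hy, hyx⟩ hxs
    have hyo : y ≠ o := fun h => ho (h ▸ hSB hy)
    have h0 := hseg _ hxs
    rw [← hyx, R.side_map n hyo, R.side_map m hyo] at h0
    have hc := R.pos y hyo
    have h1 : n (y - o) = 0 := by
      rcases mul_eq_zero.mp h0.1 with h | h
      · linarith
      · exact h
    have h2 : 0 ≤ m (y - o) := nonneg_of_mul_nonneg_right h0.2 hc
    rcases hy with (h | h) | h
    · exact h.2.ne' h1
    · exact absurd h2 (not_le.mpr h.2)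
    · exact h.2.ne h1
  · exact continuous_subtype_val.continuousAt.preimage_mem_nhds (Metric.ball_mem_nhds _ hr)
  · intro x hx
    apply R.mem_closure_side
    rcases le_total 0 (n (x - o)) with h | h
    · exact closure_mono (fun y hy => Or.inl (Or.inl hy)) (hcl x hx h)
    · exact closure_mono (fun y hy => Or.inr hy) (hcl' x hx h)

end

end JordanAux
namespace JordanAux

open Set Topology Filter

section
variable (SS : Finset (E3 × E3))

/-- The vertices of the arrangement of segments. -/
def Vset : Set E3 :=
  {p | ∃ s ∈ SS, p = s.1 ∨ p = s.2} ∪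
    {p | ∃ s ∈ SS, ∃ s' ∈ SS, segment ℝ s.1 s.2 ∩ segment ℝ s'.1 s'.2 = {p}}

lemma Vset_finite : (Vset SS).Finite := by
  refine Finite.union ?_ ?_
  · have : {p : E3 | ∃ s ∈ SS, p = s.1 ∨ p = s.2} = ⋃ s ∈ SS, {s.1, s.2} := by
      ext p
      simp
    rw [this]
    exact SS.finite_toSet.biUnion (fun s _ => by simp)
  · have : {p : E3 | ∃ s ∈ SS, ∃ s' ∈ SS, segment ℝ s.1 s.2 ∩ segment ℝ s'.1 s'.2 = {p}} =
        ⋃ s ∈ SS, ⋃ s' ∈ SS, {p | segment ℝ s.1 s.2 ∩ segment ℝ s'.1 s'.2 = {p}} := by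
      ext p
      simp
    rw [this]
    refine SS.finite_toSet.biUnion (fun s _ => SS.finite_toSet.biUnion (fun s' _ => ?_))
    apply Set.Subsingleton.finite
    intro p hp q hq
    have : ({p} : Set E3) = {q} := (Eq.symm hp).trans hq
    simpa using this

/-- The edges of the arrangement of segments. -/
structure IsEdge (u v : E3) : Prop where
  left : u ∈ Vset SS
  right : v ∈ Vset SS
  ne : u ≠ v
  sub : ∃ s ∈ SS, segment ℝ u v ⊆ segment ℝ s.1 s.2
  avoid : ∀ x ∈ openSegment ℝ u v, x ∉ Vset SS

variable {SS}

lemma IsEdge.symm {u v : E3} (h : IsEdge SS u v) : IsEdge SS v u :=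
  ⟨h.right, h.left, h.ne.symm, by simpa only [segment_symm ℝ v u] using h.sub,
    by simpa only [openSegment_symm ℝ v u] using h.avoid⟩

lemma mem_open_param {z d : E3} {r s t : ℝ} (h1 : r < t) (h2 : t < s) :
    z + t • d ∈ openSegment ℝ (z + r • d) (z + s • d) := by
  have h3 : s - r ≠ 0 := by linarith
  refine ⟨(s - t) / (s - r), (t - r) / (s - r), by apply div_pos <;> linarith,
    by apply div_pos <;> linarith, by field_simp; ring, ?_⟩
  ext i
  simp
  field_simp
  ring

lemma param_of_mem {a b x : E3} (h : x ∈ segment ℝ a b) :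
    ∃ t ∈ Icc (0 : ℝ) 1, x = a + t • (b - a) := by
  rw [segment_eq_image'] at h
  obtain ⟨t, ht, rfl⟩ := h
  exact ⟨t, ht, rfl⟩

lemma exists_edge {z : E3} (hz : z ∈ ⋃ p ∈ SS, segment ℝ p.1 p.2) (hzV : z ∉ Vset SS) :
    ∃ u v, IsEdge SS u v ∧ z ∈ openSegment ℝ u v := by
  simp only [mem_iUnion] at hz
  obtain ⟨⟨a, b⟩, hs, hz⟩ := hz
  have haV : a ∈ Vset SS := Or.inl ⟨_, hs, Or.inl rfl⟩
  have hbV : b ∈ Vset SS := Or.inl ⟨_, hs, Or.inr rfl⟩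
  obtain ⟨t, ht, rfl⟩ := param_of_mem hz
  dsimp only at *
  have hab : b - a ≠ 0 := by
    intro h
    apply hzV
    simpa [h] using haV
  have ht0 : t ≠ 0 := by
    rintro rfl
    apply hzV
    simpa using haV
  have ht1 : t ≠ 1 := by
    rintro rfl
    apply hzV
    simpa using hbV
  have ht0' : 0 < t := lt_of_le_of_ne ht.1 ht0.symm
  have ht1' : t < 1 := lt_of_le_of_ne ht.2 ht1
  let F : Set ℝ := {s | s ∈ Icc (0 : ℝ) 1 ∧ a + s • (b - a) ∈ Vset SS}
  have hF : F.Finite := by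
    have : ((fun s : ℝ => a + s • (b - a)) ⁻¹' (Vset SS)).Finite := by
      refine (Vset_finite SS).preimage ?_
      intro s _ s' _ h
      have : s • (b - a) = s' • (b - a) := by simpa using h
      exact smul_left_injective ℝ hab this
    exact this.subset (fun s hs => hs.2)
  obtain ⟨s₁, ⟨hs1F, hs1t⟩, hs1⟩ := Set.exists_max_image (F ∩ Iio t) id (hF.subset inter_subset_left)
    ⟨0, ⟨⟨by simp, by simpa using haV⟩, ht0'⟩⟩
  obtain ⟨s₂, ⟨hs2F, hs2t⟩, hs2⟩ := Set.exists_min_image (F ∩ Ioi t) id (hF.subset inter_subset_left)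
    ⟨1, ⟨⟨by simp, by simpa using hbV⟩, ht1'⟩⟩
  have hs1t' : s₁ < t := hs1t
  have hs2t' : t < s₂ := hs2t
  have hmem : ∀ s ∈ Icc (0 : ℝ) 1, a + s • (b - a) ∈ segment ℝ a b := by
    intro s hs
    rw [segment_eq_image']
    exact ⟨s, hs, rfl⟩
  refine ⟨a + s₁ • (b - a), a + s₂ • (b - a), ⟨hs1F.2, hs2F.2, ?_, ?_, ?_⟩,
    mem_open_param hs1t' hs2t'⟩
  · intro h
    have : s₁ • (b - a) = s₂ • (b - a) := by simpa using h
    have := smul_left_injective ℝ hab this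
    linarith
  · exact ⟨_, hs, (convex_segment a b).segment_subset (hmem _ hs1F.1) (hmem _ hs2F.1)⟩
  · intro x hx hxV
    rw [openSegment_eq_image'] at hx
    obtain ⟨θ, ⟨h0, h1⟩, rfl⟩ := hx
    have e : a + s₁ • (b - a) + θ • (a + s₂ • (b - a) - (a + s₁ • (b - a))) =
        a + (s₁ + θ * (s₂ - s₁)) • (b - a) := by module
    beta_reduce at hxV
    rw [e] at hxV
    have hl : s₁ < s₁ + θ * (s₂ - s₁) := by nlinarith
    have hr : s₁ + θ * (s₂ - s₁) < s₂ := by nlinarith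
    have hxF : s₁ + θ * (s₂ - s₁) ∈ F :=
      ⟨⟨by linarith [hs1F.1.1], by linarith [hs2F.1.2]⟩, hxV⟩
    rcases lt_trichotomy (s₁ + θ * (s₂ - s₁)) t with h | h | h
    · have := hs1 _ ⟨hxF, h⟩
      simp only [id] at this
      linarith
    · rw [h] at hxV
      exact hzV hxV
    · have := hs2 _ ⟨hxF, h⟩
      simp only [id] at this
      linarith

/-- Points of a segment through two distinct points. -/
lemma seg_param {a b z z' x : E3} (hz : z ∈ segment ℝ a b) (hz' : z' ∈ segment ℝ a b)
    (hne : z' ≠ z) (hx : x ∈ segment ℝ a b) : ∃ t : ℝ, x = z + t • (z' - z) := by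
  obtain ⟨t₁, -, rfl⟩ := param_of_mem hz
  obtain ⟨t₂, -, rfl⟩ := param_of_mem hz'
  obtain ⟨t₃, -, rfl⟩ := param_of_mem hx
  have h : t₂ - t₁ ≠ 0 := by
    intro h
    apply hne
    rw [sub_eq_zero.mp h]
  refine ⟨(t₃ - t₁) / (t₂ - t₁), ?_⟩
  ext i
  simp
  field_simp
  ring

lemma sign_of_open {z d : E3} (hd : d ≠ 0) {r s : ℝ} (hrs : r ≠ s)
    (h : z ∈ openSegment ℝ (z + r • d) (z + s • d)) : (r < 0 ∧ 0 < s) ∨ (s < 0 ∧ 0 < r) := by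
  obtain ⟨a, b, ha, hb, hab, h⟩ := h
  have h1 : (a * r + b * s) • d = 0 := by
    have : a • (z + r • d) + b • (z + s • d) = (a + b) • z + (a * r + b * s) • d := by module
    rw [this, hab, one_smul] at h
    simpa using h
  have h2 : a * r + b * s = 0 := by
    rcases smul_eq_zero.mp h1 with h | h
    · exact h
    · exact absurd h hd
  rcases lt_trichotomy r 0 with hr | hr | hr
  · left
    refine ⟨hr, ?_⟩
    by_contra! hs
    nlinarith
  · subst hr
    exfalso
    have : b * s = 0 := by linarith
    rcases mul_eq_zero.mp this with h | h
    · linarith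
    · exact hrs h.symm
  · right
    refine ⟨?_, hr⟩
    by_contra! hs
    nlinarith

lemma edge_oriented {z d : E3} {r s r' s' : ℝ} (hr : r < 0) (hs : 0 < s) (hr' : r' < 0)
    (hs' : 0 < s') (h : IsEdge SS (z + r • d) (z + s • d))
    (h' : IsEdge SS (z + r' • d) (z + s' • d)) : r = r' ∧ s = s' := by
  constructor
  · rcases lt_trichotomy r r' with hlt | heq | hlt
    · exact absurd h'.left (h.avoid _ (mem_open_param hlt (by linarith)))
    · exact heq
    · exact absurd h.left (h'.avoid _ (mem_open_param hlt (by linarith)))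
  · rcases lt_trichotomy s s' with hlt | heq | hlt
    · exact absurd h.right (h'.avoid _ (mem_open_param (by linarith) hlt))
    · exact heq
    · exact absurd h'.right (h.avoid _ (mem_open_param (by linarith) hlt))

lemma edge_unique {u v u' v' z : E3} (h : IsEdge SS u v) (h' : IsEdge SS u' v')
    (hz : z ∈ openSegment ℝ u v) (hz' : z ∈ openSegment ℝ u' v') :
    (u = u' ∧ v = v') ∨ (u = v' ∧ v = u') := by
  obtain ⟨s, hs, hsub⟩ := h.sub
  obtain ⟨s', hs', hsub'⟩ := h'.sub
  have hzs := hsub (openSegment_subset_segment ℝ u v hz)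
  have hzs' := hsub' (openSegment_subset_segment ℝ u' v' hz')
  have hzV := h.avoid z hz
  obtain ⟨y, ⟨hy, hy'⟩, hyz⟩ : ∃ y ∈ segment ℝ s.1 s.2 ∩ segment ℝ s'.1 s'.2, y ≠ z := by
    by_contra! hcon
    apply hzV
    refine Or.inr ⟨s, hs, s', hs', ?_⟩
    ext x
    constructor
    · exact fun hx => hcon x hx
    · rintro rfl
      exact ⟨hzs, hzs'⟩
  obtain ⟨r, rfl⟩ := seg_param hzs hy hyz (hsub (left_mem_segment ℝ u v))
  obtain ⟨t, rfl⟩ := seg_param hzs hy hyz (hsub (right_mem_segment ℝ _ v))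
  obtain ⟨r', rfl⟩ := seg_param hzs' hy' hyz (hsub' (left_mem_segment ℝ u' v'))
  obtain ⟨t', rfl⟩ := seg_param hzs' hy' hyz (hsub' (right_mem_segment ℝ _ v'))
  have hd : y - z ≠ 0 := sub_ne_zero.mpr hyz
  have hrt : r ≠ t := fun e => h.ne (by rw [e])
  have hrt' : r' ≠ t' := fun e => h'.ne (by rw [e])
  rcases sign_of_open hd hrt hz with ⟨h1, h2⟩ | ⟨h1, h2⟩ <;>
  rcases sign_of_open hd hrt' hz' with ⟨h3, h4⟩ | ⟨h3, h4⟩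
  · obtain ⟨rfl, rfl⟩ := edge_oriented h1 h2 h3 h4 h h'
    simp
  · obtain ⟨rfl, rfl⟩ := edge_oriented h1 h2 h3 h4 h h'.symm
    simp
  · obtain ⟨rfl, rfl⟩ := edge_oriented h1 h2 h3 h4 h.symm h'
    simp
  · obtain ⟨rfl, rfl⟩ := edge_oriented h1 h2 h3 h4 h.symm h'.symm
    simp

lemma mem_seg_cases {u v z : E3} (h : z ∈ segment ℝ u v) :
    z = u ∨ z = v ∨ z ∈ openSegment ℝ u v := by
  rw [← insert_endpoints_openSegment] at h
  simpa using h

/-- Two edges which meet outside common endpoints coincide. -/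
lemma edge_inter {u v u' v' z : E3} (h : IsEdge SS u v) (h' : IsEdge SS u' v')
    (hz : z ∈ segment ℝ u v) (hz' : z ∈ segment ℝ u' v') :
    ((u = u' ∧ v = v') ∨ (u = v' ∧ v = u')) ∨ ((z = u ∨ z = v) ∧ (z = u' ∨ z = v')) := by
  have e : z ∈ Vset SS → z = u ∨ z = v := by
    intro hV
    rcases mem_seg_cases hz with e | e | e
    · exact Or.inl e
    · exact Or.inr e
    · exact absurd hV (h.avoid z e)
  have e' : z ∈ Vset SS → z = u' ∨ z = v' := by
    intro hV
    rcases mem_seg_cases hz' with e | e | e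
    · exact Or.inl e
    · exact Or.inr e
    · exact absurd hV (h'.avoid z e)
  rcases mem_seg_cases hz with rfl | rfl | h1
  · exact Or.inr ⟨e h.left, e' h.left⟩
  · exact Or.inr ⟨e h.right, e' h.right⟩
  · rcases mem_seg_cases hz' with rfl | rfl | h2
    · exact Or.inr ⟨e h'.left, e' h'.left⟩
    · exact Or.inr ⟨e h'.right, e' h'.right⟩
    · exact Or.inl (edge_unique h h' h1 h2)

lemma isClosed_seg (u v : E3) : IsClosed (segment ℝ u v) := by
  rw [segment_eq_image']
  exact (isCompact_Icc.image (by fun_prop)).isClosed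

/-- Local finiteness. -/
lemma exists_nhds_edges (z : E3) : ∃ O ∈ 𝓝 z, ∀ x ∈ O,
    (x ∈ Vset SS → x = z) ∧ ∀ u v, IsEdge SS u v → x ∈ segment ℝ u v → z ∈ segment ℝ u v := by
  have hV : (Vset SS \ {z})ᶜ ∈ 𝓝 z :=
    ((Vset_finite SS).subset diff_subset).isClosed.isOpen_compl.mem_nhds (by simp)
  let K : Set E3 := ⋃ p ∈ {p : E3 × E3 | IsEdge SS p.1 p.2 ∧ z ∉ segment ℝ p.1 p.2},
    segment ℝ p.1 p.2
  have hK : IsClosed K := by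
    refine Set.Finite.isClosed_biUnion ?_ (fun p _ => isClosed_seg _ _)
    exact ((Vset_finite SS).prod (Vset_finite SS)).subset (fun p hp => ⟨hp.1.left, hp.1.right⟩)
  have hzK : z ∉ K := by
    simp only [K, mem_iUnion, not_exists]
    intro p hp hz
    exact hp.2 hz
  refine ⟨_, inter_mem hV (hK.isOpen_compl.mem_nhds hzK), ?_⟩
  rintro x ⟨hx1, hx2⟩
  refine ⟨?_, ?_⟩
  · intro h
    by_contra hne
    exact hx1 ⟨h, hne⟩
  · intro u v huv hx
    by_contra hz
    apply hx2
    simp only [K, mem_iUnion]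
    exact ⟨(u, v), ⟨huv, hz⟩, hx⟩

end

end JordanAux

namespace JordanAux

open Set Topology Filter unitInterval

/-- `K` is an arc joining `u` and `v`. -/
def IsArc {T : Type*} [TopologicalSpace T] (u v : T) (K : Set T) : Prop :=
  ∃ γ : Path u v, Function.Injective γ ∧ range γ = K

lemma isArc_segment {u v : E3} (h : u ≠ v) : IsArc u v (segment ℝ u v) := by
  refine ⟨⟨⟨fun t => AffineMap.lineMap u v (t : ℝ), by fun_prop⟩, by simp, by simp⟩, ?_, ?_⟩
  · intro s t hst
    have : AffineMap.lineMap u v (s : ℝ) = AffineMap.lineMap u v (t : ℝ) := hst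
    exact Subtype.ext (AffineMap.lineMap_injective ℝ h this)
  · rw [segment_eq_image_lineMap]
    ext z
    constructor
    · rintro ⟨t, rfl⟩
      exact ⟨t, t.2, rfl⟩
    · rintro ⟨t, ht, rfl⟩
      exact ⟨⟨t, ht⟩, rfl⟩

lemma IsArc.trans {T : Type*} [TopologicalSpace T] {u v w : T} {K L : Set T}
    (hK : IsArc u v K) (hL : IsArc v w L) (h : K ∩ L ⊆ {v}) : IsArc u w (K ∪ L) := by
  obtain ⟨γ, hγ, rfl⟩ := hK
  obtain ⟨δ, hδ, rfl⟩ := hL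
  refine ⟨γ.trans δ, ?_, Path.trans_range γ δ⟩
  have key : ∀ s t : I, (s : ℝ) ≤ 1 / 2 → ¬ (t : ℝ) ≤ 1 / 2 →
      γ.trans δ s ≠ γ.trans δ t := by
    intro s t hs ht he
    rw [Path.trans_apply, Path.trans_apply, dif_pos hs, dif_neg ht] at he
    have h2 := h ⟨mem_range_self (f := γ) _, ⟨_, he.symm⟩⟩
    rw [mem_singleton_iff, he] at h2
    have h3 := hδ (h2.trans δ.source.symm)
    have h4 := congrArg Subtype.val h3
    simp at h4
    apply ht
    linarith
  intro s t hst
  by_cases hs : (s : ℝ) ≤ 1 / 2 <;> by_cases ht : (t : ℝ) ≤ 1 / 2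
  · rw [Path.trans_apply, Path.trans_apply, dif_pos hs, dif_pos ht] at hst
    have h4 := congrArg Subtype.val (hγ hst)
    simp at h4
    exact Subtype.ext h4
  · exact absurd hst (key s t hs ht)
  · exact absurd hst.symm (key t s ht hs)
  · rw [Path.trans_apply, Path.trans_apply, dif_neg hs, dif_neg ht] at hst
    have h4 := congrArg Subtype.val (hδ hst)
    simp at h4
    exact Subtype.ext h4

/-- Two arcs with common endpoints and otherwise disjoint form a simple closed curve. -/
lemma circle_of_arcs {T : Type*} [TopologicalSpace T] {a b : T} (α β : Path a b)
    (hα : Function.Injective α) (hβ : Function.Injective β)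
    (h : range α ∩ range β ⊆ {a, b}) :
    ∃ γ : Metric.sphere (0 : EuclideanSpace ℝ (Fin 2)) 1 → T,
      Continuous γ ∧ Function.Injective γ ∧ range γ = range α ∪ range β := by
  have hsq : ∀ p : Metric.sphere (0 : EuclideanSpace ℝ (Fin 2)) 1,
      (p.1 0) ^ 2 + (p.1 1) ^ 2 = 1 := by
    intro p
    have h1 := p.2
    rw [mem_sphere_zero_iff_norm, EuclideanSpace.norm_eq, Real.sqrt_eq_one] at h1
    simpa [Fin.sum_univ_two] using h1
  let t : Metric.sphere (0 : EuclideanSpace ℝ (Fin 2)) 1 → I := fun p =>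
    ⟨(1 - p.1 0) / 2, by
      have := hsq p
      constructor <;> nlinarith [sq_nonneg (p.1 1)]⟩
  have ht : Continuous t := by
    apply Continuous.subtype_mk
    fun_prop
  have hc1 : Continuous fun p : Metric.sphere (0 : EuclideanSpace ℝ (Fin 2)) 1 => p.1 1 := by
    fun_prop
  have htx : ∀ p q, t p = t q → p.1 0 = q.1 0 := by
    intro p q hpq
    have h1 := congrArg Subtype.val hpq
    simp only [t] at h1
    linarith
  have hext : ∀ p q : Metric.sphere (0 : EuclideanSpace ℝ (Fin 2)) 1,
      p.1 0 = q.1 0 → p.1 1 = q.1 1 → p = q := by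
    intro p q h0 h1
    apply Subtype.ext
    ext i
    fin_cases i
    · exact h0
    · exact h1
  have hend : ∀ p : Metric.sphere (0 : EuclideanSpace ℝ (Fin 2)) 1, p.1 1 = 0 →
      t p = 0 ∨ t p = 1 := by
    intro p hp
    have h1 := hsq p
    rw [hp] at h1
    have h2 : (p.1 0 - 1) * (p.1 0 + 1) = 0 := by nlinarith
    rcases mul_eq_zero.1 h2 with h3 | h3
    · left
      apply Subtype.ext
      simp only [t]
      rw [show p.1 0 = 1 by linarith]
      simp
    · right
      apply Subtype.ext
      simp only [t]
      rw [show p.1 0 = -1 by linarith]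
      norm_num
  have hend' : ∀ p : Metric.sphere (0 : EuclideanSpace ℝ (Fin 2)) 1,
      (t p = 0 ∨ t p = 1) → p.1 1 = 0 := by
    intro p hp
    have h1 := hsq p
    have h2 : p.1 0 = 1 ∨ p.1 0 = -1 := by
      rcases hp with hp | hp
      · left
        have := congrArg Subtype.val hp
        simp only [t] at this
        norm_num at this
        linarith
      · right
        have := congrArg Subtype.val hp
        simp only [t] at this
        norm_num at this
        linarith
    rcases h2 with h2 | h2 <;> rw [h2] at h1 <;> nlinarith
  let γ : Metric.sphere (0 : EuclideanSpace ℝ (Fin 2)) 1 → T := fun p =>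
    if 0 ≤ p.1 1 then α (t p) else β (t p)
  have cross : ∀ p q, 0 ≤ p.1 1 → ¬ 0 ≤ q.1 1 → α (t p) ≠ β (t q) := by
    intro p q hp hq he
    have h1 := h ⟨mem_range_self (t p), he ▸ mem_range_self (t q)⟩
    rw [he] at h1
    have h2 : t q = 0 ∨ t q = 1 := by
      rcases h1 with h1 | h1
      · exact Or.inl (hβ (h1.trans β.source.symm))
      · exact Or.inr (hβ (Eq.trans h1 β.target.symm))
    exact hq (hend' q h2).ge
  refine ⟨γ, ?_, ?_, ?_⟩
  · apply Continuous.if_le (α.continuous.comp ht) (β.continuous.comp ht) continuous_const hc1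
    intro p hp
    rcases hend p hp.symm with h1 | h1 <;> simp [h1]
  · intro p q hpq
    simp only [γ] at hpq
    have hp := hsq p
    have hq := hsq q
    split_ifs at hpq with h1 h2 h2
    · have h3 := htx p q (hα hpq)
      refine hext p q h3 ?_
      rw [h3] at hp
      nlinarith
    · exact absurd hpq (cross p q h1 h2)
    · exact absurd hpq.symm (cross q p h2 h1)
    · have h3 := htx p q (hβ hpq)
      refine hext p q h3 ?_
      rw [h3] at hp
      nlinarith
  · have hmk : ∀ (s : I) (e : ℝ), e ^ 2 = 1 →
        ∃ p : Metric.sphere (0 : EuclideanSpace ℝ (Fin 2)) 1, t p = s ∧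
          p.1 1 = e * Real.sqrt (1 - (1 - 2 * (s : ℝ)) ^ 2) := by
      intro s e he
      have h0 : 0 ≤ 1 - (1 - 2 * (s : ℝ)) ^ 2 := by nlinarith [s.2.1, s.2.2]
      refine ⟨⟨!₂[1 - 2 * (s : ℝ), e * Real.sqrt (1 - (1 - 2 * (s : ℝ)) ^ 2)], ?_⟩, ?_, ?_⟩
      · rw [mem_sphere_zero_iff_norm, EuclideanSpace.norm_eq, Real.sqrt_eq_one]
        simp [Fin.sum_univ_two, mul_pow, he, Real.sq_sqrt h0]
      · apply Subtype.ext
        simp [t]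
      · simp
    apply Subset.antisymm
    · rintro _ ⟨p, rfl⟩
      simp only [γ]
      split_ifs
      · exact Or.inl (mem_range_self _)
      · exact Or.inr (mem_range_self _)
    · rintro _ (⟨s, rfl⟩ | ⟨s, rfl⟩)
      · obtain ⟨p, hp, hp1⟩ := hmk s 1 (by norm_num)
        refine ⟨p, ?_⟩
        have : 0 ≤ p.1 1 := by rw [hp1]; positivity
        simp only [γ, if_pos this, hp]
      · obtain ⟨p, hp, hp1⟩ := hmk s (-1) (by norm_num)
        refine ⟨p, ?_⟩
        by_cases h0 : 0 ≤ p.1 1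
        · have h1 : p.1 1 = 0 := by
            apply le_antisymm _ h0
            rw [hp1]
            have := Real.sqrt_nonneg (1 - (1 - 2 * (s : ℝ)) ^ 2)
            linarith
          simp only [γ, if_pos h0]
          rw [← hp]
          rcases hend p h1 with h2 | h2 <;> simp [h2]
        · simp only [γ, if_neg h0, hp]

lemma not_acyclic {V : Type*} [Finite V] [Nonempty V] (G : SimpleGraph V)
    (h : ∀ v, ∃ a b, a ≠ b ∧ G.Adj v a ∧ G.Adj v b) : ¬ G.IsAcyclic := by
  classical
  intro hG
  have := Fintype.ofFinite V
  let S : Set ℕ := {n | ∃ u v, ∃ p : G.Walk u v, p.IsPath ∧ p.length = n}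
  have hne : S.Nonempty := ⟨0, Classical.arbitrary V, _, SimpleGraph.Walk.nil, by simp, rfl⟩
  have hbd : BddAbove S := by
    refine ⟨Fintype.card V, ?_⟩
    rintro n ⟨u, v, p, hp, rfl⟩
    exact hp.length_lt.le
  obtain ⟨u, v, p, hp, hlen⟩ := Nat.sSup_mem hne hbd
  obtain ⟨a, b, hab, ha, hb⟩ := h u
  have key : ∀ w, G.Adj u w → w = p.snd := by
    intro w hw
    refine hG.eq_snd_of_adj_start hp hw ?_
    by_contra hn
    have h1 : (SimpleGraph.Walk.cons hw.symm p).IsPath := hp.cons hn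
    have h2 := le_csSup hbd (show _ ∈ S from ⟨_, _, _, h1, rfl⟩)
    rw [SimpleGraph.Walk.length_cons, hlen] at h2
    omega
  exact hab ((key a ha).trans (key b hb).symm)

section
variable {SS : Finset (E3 × E3)}

/-- The union of the segments along a walk. -/
def walkSet {W : Set E3} {G : SimpleGraph W} {a b : W} (p : G.Walk a b) : Set E3 :=
  {z | ∃ u v : W, s(u, v) ∈ p.edges ∧ z ∈ segment ℝ (u : E3) v}

lemma isArc_walk {W : Set E3} {G : SimpleGraph W}
    (hG : ∀ u v : W, G.Adj u v → IsEdge SS (u : E3) v) {a b : W} (p : G.Walk a b)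
    (hp : p.IsPath) (hab : a ≠ b) : IsArc (a : E3) b (walkSet p) := by
  induction p with
  | nil => exact absurd rfl hab
  | @cons u v w hadj p ih =>
    rw [SimpleGraph.Walk.cons_isPath_iff] at hp
    have hset : walkSet (SimpleGraph.Walk.cons hadj p) = segment ℝ (u : E3) v ∪ walkSet p := by
      ext z
      simp only [walkSet, SimpleGraph.Walk.edges_cons, List.mem_cons, mem_ofPred_eq, mem_union]
      constructor
      · rintro ⟨u', v', h1 | h1, hz⟩
        · left
          rw [Sym2.eq_iff] at h1
          rcases h1 with ⟨rfl, rfl⟩ | ⟨rfl, rfl⟩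
          · exact hz
          · rwa [segment_symm]
        · exact Or.inr ⟨u', v', h1, hz⟩
      · rintro (hz | ⟨u', v', h1, hz⟩)
        · exact ⟨u, v, Or.inl rfl, hz⟩
        · exact ⟨u', v', Or.inr h1, hz⟩
    rw [hset]
    have hseg := isArc_segment (hG u v hadj).ne
    by_cases hvw : v = w
    · subst hvw
      have hnil : p = SimpleGraph.Walk.nil := 
        SimpleGraph.Walk.isPath_iff_eq_nil.1 hp.1
      have : walkSet p = ∅ := by
        rw [hnil]
        simp [walkSet]
      rw [this, union_empty]
      exact hseg
    · refine hseg.trans (ih hp.1 hvw) ?_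
      rintro z ⟨hz, u', v', he, hz'⟩
      have hadj' : G.Adj u' v' := p.adj_of_mem_edges he
      have hu' := p.fst_mem_support_of_mem_edges he
      have hv' := p.snd_mem_support_of_mem_edges he
      have hne1 : u' ≠ u := fun h => hp.2 (h ▸ hu')
      have hne2 : v' ≠ u := fun h => hp.2 (h ▸ hv')
      rcases edge_inter (hG u v hadj) (hG u' v' hadj') hz hz' with
        (⟨h1, -⟩ | ⟨h1, -⟩) | ⟨h1 | h1, h2⟩
      · exact absurd (Subtype.ext h1.symm) hne1
      · exact absurd (Subtype.ext h1.symm) hne2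
      · rcases h2 with h2 | h2
        · exact absurd (Subtype.ext (h2.symm.trans h1)) hne1
        · exact absurd (Subtype.ext (h2.symm.trans h1)) hne2
      · exact h1

lemma exists_arcs (Y : Set E3) (hne : (Vset SS ∩ Y).Nonempty)
    (h2 : ∀ v ∈ Vset SS ∩ Y, ∃ a b, a ≠ b ∧ (IsEdge SS v a ∧ segment ℝ v a ⊆ Y) ∧
      (IsEdge SS v b ∧ segment ℝ v b ⊆ Y)) :
    ∃ a b : E3, a ≠ b ∧ ∃ K L, IsArc a b K ∧ IsArc a b L ∧ K ∩ L ⊆ {a, b} ∧ K ∪ L ⊆ Y := by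
  classical
  let W : Set E3 := Vset SS ∩ Y
  let G : SimpleGraph W :=
    { Adj := fun u v => IsEdge SS (u : E3) v ∧ segment ℝ (u : E3) v ⊆ Y
      symm := ⟨fun u v h => ⟨h.1.symm, by rw [segment_symm]; exact h.2⟩⟩
      loopless := ⟨fun u h => h.1.ne rfl⟩ }
  have : Finite W := ((Vset_finite SS).subset inter_subset_left).to_subtype
  have : Nonempty W := hne.to_subtype
  have hnac : ¬ G.IsAcyclic := by
    apply not_acyclic
    rintro ⟨v, hv⟩
    obtain ⟨a, b, hab, ha, hb⟩ := h2 v hv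
    refine ⟨⟨a, ha.1.right, ha.2 (right_mem_segment ℝ _ _)⟩,
      ⟨b, hb.1.right, hb.2 (right_mem_segment ℝ _ _)⟩, ?_, ha, hb⟩
    exact fun h => hab (congrArg Subtype.val h)
  rw [SimpleGraph.isAcyclic_iff_forall_adj_isBridge] at hnac
  push Not at hnac
  obtain ⟨u, v, huv, hbr⟩ := hnac
  rw [SimpleGraph.isBridge_iff, not_not] at hbr
  obtain ⟨p, hp⟩ := hbr.exists_isPath
  have hG : ∀ x y : W, (G.deleteEdges {s(u, v)}).Adj x y → G.Adj x y ∧ s(x, y) ≠ s(u, v) := by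
    intro x y hxy
    simpa [SimpleGraph.deleteEdges_adj] using hxy
  have huvne : (u : E3) ≠ v := huv.1.ne
  refine ⟨u, v, huvne, _, _, isArc_segment huvne,
    isArc_walk (fun x y hxy => (hG x y hxy).1.1) p hp (fun h => huvne (congrArg _ h)), ?_, ?_⟩
  · rintro z ⟨hz, u', v', he, hz'⟩
    obtain ⟨hadj', hne'⟩ := hG u' v' (p.adj_of_mem_edges he)
    rcases edge_inter huv.1 hadj'.1 hz hz' with (⟨h1, h3⟩ | ⟨h1, h3⟩) | ⟨h1, -⟩
    · refine absurd ?_ hne'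
      rw [Subtype.ext h1, Subtype.ext h3]
    · refine absurd ?_ hne'
      rw [Subtype.ext h1, Subtype.ext h3]
      exact Sym2.eq_swap
    · exact h1
  · apply union_subset huv.2
    rintro z ⟨u', v', he, hz'⟩
    exact (hG u' v' (p.adj_of_mem_edges he)).1.2 hz'

end

end JordanAux

namespace JordanAux

open Set Topology Filter unitInterval

lemma subset_of_meets {T : Type*} [TopologicalSpace T] {A D : Set T} (hA : IsPreconnected A)
    (hne : (A ∩ D).Nonempty) (hd : ∀ x ∈ A, x ∉ frontier D) : A ⊆ D := by
  by_contra h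
  rw [not_subset] at h
  obtain ⟨x, hx, hxD⟩ := h
  have hcov : A ⊆ interior D ∪ (closure D)ᶜ := by
    intro y hy
    by_contra hn
    rw [mem_union, not_or, mem_compl_iff, not_not] at hn
    exact hd y hy ⟨hn.2, hn.1⟩
  obtain ⟨d, hdA, hdD⟩ := hne
  obtain ⟨z, -, hz1, hz2⟩ := hA _ _ isOpen_interior isClosed_closure.isOpen_compl hcov
    ⟨d, hdA, (hcov hdA).resolve_right fun h => h (subset_closure hdD)⟩
    ⟨x, hx, (hcov hx).resolve_left fun h => hxD (interior_subset h)⟩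
  exact hz2 (subset_closure (interior_subset hz1))

/-- The properties of the components of the complement of `Λ` that we need. -/
structure Comp {T : Type*} [TopologicalSpace T] (Λ D : Set T) : Prop where
  isOpen : IsOpen D
  conn : IsPreconnected D
  nonempty : D.Nonempty
  sub : D ⊆ Λᶜ
  fr : frontier D ⊆ frontier Λ

lemma comp_of_mem {T : Type*} [TopologicalSpace T] [LocallyConnectedSpace T] {Λ : Set T}
    (hcl : Λ = closure (interior Λ)) {x : T} (hx : x ∈ Λᶜ) :
    Comp Λ (connectedComponentIn Λᶜ x) := by
  have hΛ : IsClosed Λ := by rw [hcl]; exact isClosed_closure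
  have hop : IsOpen (connectedComponentIn Λᶜ x) := hΛ.isOpen_compl.connectedComponentIn
  have hsub : connectedComponentIn Λᶜ x ⊆ Λᶜ := connectedComponentIn_subset _ _
  refine ⟨hop, isPreconnected_connectedComponentIn, ⟨x, mem_connectedComponentIn hx⟩, hsub, ?_⟩
  intro y hy
  rw [hop.frontier_eq] at hy
  rw [hΛ.frontier_eq]
  constructor
  · by_contra hyΛ
    have h1 : IsOpen (connectedComponentIn Λᶜ y) := hΛ.isOpen_compl.connectedComponentIn
    have h2 : y ∈ connectedComponentIn Λᶜ y := mem_connectedComponentIn hyΛ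
    obtain ⟨z, hz1, hz2⟩ := mem_closure_iff.1 hy.1 _ h1 h2
    apply hy.2
    rw [connectedComponentIn_eq hz2, ← connectedComponentIn_eq hz1]
    exact h2
  · intro hyi
    obtain ⟨z, hz1, hz2⟩ := mem_closure_iff.1 hy.1 _ isOpen_interior hyi
    exact hsub hz2 (interior_subset hz1)

section
variable {SS : Finset (E3 × E3)} {X : Set E3} {o : E3} {ρ : E3 → E3} {c : E3 → ℝ}
  {Λ : Set X}

lemma edge_local (R : Radial X o ρ c)
    (hF : (fun p : X => (p : E3)) '' frontier Λ = ⋃ p ∈ SS, segment ℝ p.1 p.2)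
    {u v : E3} (he : IsEdge SS u v) {p : X} (hp : (p : E3) ∈ openSegment ℝ u v) :
    ∃ A B : Set X, IsPreconnected A ∧ IsPreconnected B ∧ (∀ x ∈ A, x ∉ frontier Λ) ∧
      (∀ x ∈ B, x ∉ frontier Λ) ∧ ∃ N ∈ 𝓝 p, N ⊆ closure A ∪ closure B ∧
      ∀ x ∈ N, (x : E3) ∈ segment ℝ u v → x ∈ closure A ∧ x ∈ closure B := by
  obtain ⟨O, hO, hOx⟩ := exists_nhds_edges (SS := SS) (p : E3)
  have hO' : (fun x : X => (x : E3)) ⁻¹' O ∈ 𝓝 p :=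
    continuous_subtype_val.continuousAt.preimage_mem_nhds hO
  have key : ∀ x : X, (x : E3) ∈ O → x ∈ frontier Λ → (x : E3) ∈ segment ℝ u v := by
    intro x hx hxF
    have hxU : (x : E3) ∈ ⋃ p ∈ SS, segment ℝ p.1 p.2 := hF ▸ mem_image_of_mem _ hxF
    by_cases hxV : (x : E3) ∈ Vset SS
    · rw [(hOx x hx).1 hxV]
      exact openSegment_subset_segment ℝ _ _ hp
    · obtain ⟨u', v', he', hx'⟩ := exists_edge hxU hxV
      have hpV := he.avoid _ hp
      have hx'' := openSegment_subset_segment ℝ _ _ hx'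
      have h1 := (hOx x hx).2 u' v' he' hx''
      rcases edge_inter he he' (openSegment_subset_segment ℝ _ _ hp) h1 with
        (⟨rfl, rfl⟩ | ⟨rfl, rfl⟩) | ⟨h2 | h2, -⟩
      · exact hx''
      · rwa [segment_symm]
      · exact absurd (h2 ▸ he.left) hpV
      · exact absurd (h2 ▸ he.right) hpV
  obtain ⟨A, B, hA, hB, hAO, hBO, hAB, N, hN, hN1, hN2⟩ := R.two_sided u v p hO'
  exact ⟨A, B, hA, hB, fun x hx hxF => hAB x (Or.inl hx) (key x (hAO hx) hxF),
    fun x hx hxF => hAB x (Or.inr hx) (key x (hBO hx) hxF), N, hN, hN1, hN2⟩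

lemma side_of {T : Type*} [TopologicalSpace T] {Λ A B N E : Set T} {p : T}
    (hA : IsPreconnected A) (hB : IsPreconnected B) (hAF : ∀ x ∈ A, x ∉ frontier Λ)
    (hBF : ∀ x ∈ B, x ∉ frontier Λ) (hN : N ∈ 𝓝 p) (hNs : N ⊆ closure A ∪ closure B)
    (hE : IsOpen E) (hEF : frontier E ⊆ frontier Λ) (hp : p ∈ closure E) :
    (A.Nonempty ∧ A ⊆ E) ∨ (B.Nonempty ∧ B ⊆ E) := by
  obtain ⟨d, hd1, hd2⟩ := mem_closure_iff_nhds.1 hp N hN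
  rcases hNs hd1 with h | h
  · obtain ⟨z, hz1, hz2⟩ := mem_closure_iff.1 h E hE hd2
    exact Or.inl ⟨⟨z, hz2⟩, subset_of_meets hA ⟨z, hz2, hz1⟩ fun x hx h => hAF x hx (hEF h)⟩
  · obtain ⟨z, hz1, hz2⟩ := mem_closure_iff.1 h E hE hd2
    exact Or.inr ⟨⟨z, hz2⟩, subset_of_meets hB ⟨z, hz2, hz1⟩ fun x hx h => hBF x hx (hEF h)⟩

lemma edge_subset [CompactSpace X] (R : Radial X o ρ c)
    (hF : (fun p : X => (p : E3)) '' frontier Λ = ⋃ p ∈ SS, segment ℝ p.1 p.2)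
    (hΛ : IsClosed Λ) {D : Set X} (hD : Comp Λ D)
    {u v : E3} (he : IsEdge SS u v) {p : X} (hp : (p : E3) ∈ openSegment ℝ u v)
    (hpD : p ∈ frontier D) : segment ℝ u v ⊆ (fun p : X => (p : E3)) '' frontier D := by
  have hsegF : segment ℝ u v ⊆ (fun p : X => (p : E3)) '' frontier Λ := by
    obtain ⟨s, hs, hsub⟩ := he.sub
    rw [hF]
    exact hsub.trans (subset_biUnion_of_mem (u := fun s : E3 × E3 => segment ℝ s.1 s.2) hs)
  have hmem : ∀ x : X, (x : E3) ∈ segment ℝ u v → x ∈ Λ := by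
    intro x hx
    obtain ⟨y, hy, hyx⟩ := hsegF hx
    have : y = x := Subtype.ext hyx
    subst this
    exact hΛ.frontier_subset hy
  let S : Set X := (fun p : X => (p : E3)) ⁻¹' openSegment ℝ u v
  have hS : IsPreconnected S := by
    have h1 : IsPreconnected ((fun p : X => (p : E3)) '' S) := by
      rw [image_preimage_eq_of_subset]
      · exact (convex_openSegment u v).isPreconnected
      · intro z hz
        obtain ⟨y, -, hy⟩ := hsegF (openSegment_subset_segment ℝ _ _ hz)
        exact ⟨y, hy⟩
    exact (IsInducing.subtypeVal.isPreconnected_image).1 h1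
  have hSD : S ⊆ frontier D := by
    by_contra hcon
    rw [not_subset] at hcon
    obtain ⟨q, hqS, hq⟩ := hcon
    have hcov : ∀ x ∈ S, x ∈ frontier D → x ∈ interior (Sᶜ ∪ frontier D) := by
      intro x hxS hxD
      obtain ⟨A, B, hA, hB, hAF, hBF, N, hN, hN1, hN2⟩ := edge_local R hF he hxS
      rw [mem_interior_iff_mem_nhds]
      filter_upwards [hN] with y hy
      by_cases hyS : y ∈ S
      · right
        have hys := openSegment_subset_segment ℝ _ _ hyS
        obtain ⟨h1, h2⟩ := hN2 y hy hys
        rw [hD.isOpen.frontier_eq]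
        refine ⟨?_, fun h => hD.sub h (hmem y hys)⟩
        rcases side_of hA hB hAF hBF hN hN1 hD.isOpen hD.fr (frontier_subset_closure hxD) with
          ⟨-, h⟩ | ⟨-, h⟩
        · exact closure_mono h h1
        · exact closure_mono h h2
      · exact Or.inl hyS
    obtain ⟨z, hzS, hz1, hz2⟩ := hS _ _ isOpen_interior (isClosed_frontier (s := D)).isOpen_compl
      (fun x hx => (em (x ∈ frontier D)).imp (hcov x hx) id)
      ⟨p, hp, hcov p hp hpD⟩ ⟨q, hqS, hq⟩
    rcases interior_subset hz1 with h | h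
    · exact h hzS
    · exact hz2 h
  have hcl : IsClosed ((fun p : X => (p : E3)) '' frontier D) :=
    ((isClosed_frontier (s := D)).isCompact.image continuous_subtype_val).isClosed
  refine segment_subset_closure_openSegment.trans (hcl.closure_subset_iff.2 ?_)
  intro z hz
  obtain ⟨y, -, hy⟩ := hsegF (openSegment_subset_segment ℝ _ _ hz)
  refine ⟨y, hSD ?_, hy⟩
  change (y : E3) ∈ openSegment ℝ u v
  rw [show (y : E3) = z from hy]
  exact hz

lemma comp_disjoint {T : Type*} [TopologicalSpace T] {Λ D : Set T} (hD : Comp Λ D) :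
    Disjoint (closure D) (interior Λ) := by
  refine Disjoint.closure_left ?_ isOpen_interior
  rw [Set.disjoint_left]
  exact fun x hx hx' => hD.sub hx (interior_subset hx')

lemma two_edges [CompactSpace X] (R : Radial X o ρ c)
    (hF : (fun p : X => (p : E3)) '' frontier Λ = ⋃ p ∈ SS, segment ℝ p.1 p.2)
    (hcl : Λ = closure (interior Λ)) {D : Set X} (hD : Comp Λ D)
    {v : E3} (hv : v ∈ Vset SS ∩ (fun p : X => (p : E3)) '' frontier D) :
    ∃ a b, a ≠ b ∧ (IsEdge SS v a ∧ segment ℝ v a ⊆ (fun p : X => (p : E3)) '' frontier D) ∧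
      (IsEdge SS v b ∧ segment ℝ v b ⊆ (fun p : X => (p : E3)) '' frontier D) := by
  have hΛ : IsClosed Λ := by rw [hcl]; exact isClosed_closure
  obtain ⟨hvV, p, hpD, rfl⟩ := hv
  by_contra hcon
  have huniq : ∀ a b : E3,
      (IsEdge SS (p : E3) a ∧ segment ℝ (p : E3) a ⊆ (fun p : X => (p : E3)) '' frontier D) →
      (IsEdge SS (p : E3) b ∧ segment ℝ (p : E3) b ⊆ (fun p : X => (p : E3)) '' frontier D) →
      a = b := by
    intro a b ha hb
    by_contra hab
    exact hcon ⟨a, b, hab, ha, hb⟩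
  have hw : ∃ w : E3, LinearIndependent ℝ ![(p : E3) - o, w - o] ∧ ∀ a : E3,
      (IsEdge SS (p : E3) a ∧ segment ℝ (p : E3) a ⊆ (fun p : X => (p : E3)) '' frontier D) →
      a = w := by
    by_cases hex : ∃ a : E3, IsEdge SS (p : E3) a ∧
        segment ℝ (p : E3) a ⊆ (fun p : X => (p : E3)) '' frontier D
    · obtain ⟨w, hw⟩ := hex
      refine ⟨w, R.linearIndependent hw.1.ne (hw.2.trans ?_), fun a ha => huniq a w ha hw⟩
      rintro _ ⟨y, -, rfl⟩
      exact y.2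
    · have hne : (p : E3) - o ≠ 0 := by
        intro h
        apply R.notMem
        rw [← sub_eq_zero.1 h]
        exact p.2
      obtain ⟨y, hy⟩ := exists_linearIndependent_pair_of_one_lt_finrank (R := ℝ)
        (by simp) hne
      refine ⟨y + o, by simpa using hy, fun a ha => absurd ⟨a, ha⟩ hex⟩
  obtain ⟨w, hli, hwa⟩ := hw
  obtain ⟨O, hO, hOx⟩ := exists_nhds_edges (SS := SS) (p : E3)
  have hO' : (fun x : X => (x : E3)) ⁻¹' O ∈ 𝓝 p :=
    continuous_subtype_val.continuousAt.preimage_mem_nhds hO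
  have key : ∀ x : X, (x : E3) ∈ O → x ∈ frontier D → (x : E3) ∈ segment ℝ (p : E3) w := by
    intro x hx hxD
    have hxU : (x : E3) ∈ ⋃ p ∈ SS, segment ℝ p.1 p.2 := hF ▸ mem_image_of_mem _ (hD.fr hxD)
    by_cases hxV : (x : E3) ∈ Vset SS
    · rw [(hOx x hx).1 hxV]
      exact left_mem_segment ℝ _ _
    · obtain ⟨u', v', he', hx'⟩ := exists_edge hxU hxV
      have hx'' := openSegment_subset_segment ℝ _ _ hx'
      have hsub := edge_subset R hF hΛ hD he' hx' hxD
      have h1 := (hOx x hx).2 u' v' he' hx''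
      rcases mem_seg_cases h1 with h2 | h2 | h2
      · rw [← h2] at he' hsub hx''
        rw [← hwa v' ⟨he', hsub⟩]
        exact hx''
      · rw [← h2] at he' hsub hx''
        rw [segment_symm] at hsub hx''
        rw [← hwa u' ⟨he'.symm, hsub⟩]
        exact hx''
      · exact absurd hvV (he'.avoid _ h2)
  obtain ⟨A, hA, hAO, hAw, N, hN, hNA⟩ := R.slit w p hli hO'
  have hAD : A ⊆ D := by
    obtain ⟨d, hd1, hd2⟩ := mem_closure_iff_nhds.1 (frontier_subset_closure hpD) N hN
    obtain ⟨z, hz1, hz2⟩ := mem_closure_iff.1 (hNA hd1) D hD.isOpen hd2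
    exact subset_of_meets hA ⟨z, hz2, hz1⟩ fun x hx h => hAw x hx (key x (hAO hx) h)
  have hpΛ : p ∈ closure (interior Λ) := hcl ▸ hΛ.frontier_subset (hD.fr hpD)
  obtain ⟨d, hd1, hd2⟩ := mem_closure_iff_nhds.1 hpΛ N hN
  exact Set.disjoint_left.1 (comp_disjoint hD) (closure_mono hAD (hNA hd1)) hd2

lemma exists_vertex [CompactSpace X] [PreconnectedSpace X] (R : Radial X o ρ c)
    (hF : (fun p : X => (p : E3)) '' frontier Λ = ⋃ p ∈ SS, segment ℝ p.1 p.2)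
    (hcl : Λ = closure (interior Λ)) (hne : Λ.Nonempty) {D : Set X} (hD : Comp Λ D) :
    (Vset SS ∩ (fun p : X => (p : E3)) '' frontier D).Nonempty := by
  have hΛ : IsClosed Λ := by rw [hcl]; exact isClosed_closure
  have hfr : (frontier D).Nonempty := by
    obtain ⟨l, hl⟩ := hne
    exact nonempty_frontier_iff.2 ⟨hD.nonempty, fun h => hD.sub (h ▸ mem_univ l) hl⟩
  obtain ⟨z, hz⟩ := hfr
  by_cases hzV : (z : E3) ∈ Vset SS
  · exact ⟨z, hzV, z, hz, rfl⟩
  · have hzU : (z : E3) ∈ ⋃ p ∈ SS, segment ℝ p.1 p.2 := hF ▸ mem_image_of_mem _ (hD.fr hz)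
    obtain ⟨u, v, he, hz'⟩ := exists_edge hzU hzV
    exact ⟨u, he.left, edge_subset R hF hΛ hD he hz' hz (left_mem_segment ℝ _ _)⟩

lemma exists_private [CompactSpace X] [PreconnectedSpace X] (R : Radial X o ρ c)
    (hF : (fun p : X => (p : E3)) '' frontier Λ = ⋃ p ∈ SS, segment ℝ p.1 p.2)
    (hcl : Λ = closure (interior Λ)) (hne : Λ.Nonempty) {D : Set X} (hD : Comp Λ D) :
    ∃ p ∈ frontier D, ∀ C, Comp Λ C → Disjoint C D → p ∉ closure C := by
  have hΛ : IsClosed Λ := by rw [hcl]; exact isClosed_closure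
  obtain ⟨v, hv⟩ := exists_vertex R hF hcl hne hD
  obtain ⟨a, -, -, ⟨he, hsub⟩, -⟩ := two_edges R hF hcl hD hv
  have hm : midpoint ℝ v a ∈ openSegment ℝ v a := midpoint_mem_openSegment v a
  obtain ⟨p, hpD, hp⟩ := hsub (openSegment_subset_segment ℝ _ _ hm)
  have hp' : (p : E3) ∈ openSegment ℝ v a := by
    rw [show (p : E3) = _ from hp]
    exact hm
  refine ⟨p, hpD, fun C hC hCD hpC => ?_⟩
  obtain ⟨A, B, hA, hB, hAF, hBF, N, hN, hN1, hN2⟩ := edge_local R hF he hp'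
  have hpΛ : p ∈ closure (interior Λ) := hcl ▸ hΛ.frontier_subset (hD.fr hpD)
  have h1 := side_of hA hB hAF hBF hN hN1 hD.isOpen hD.fr (frontier_subset_closure hpD)
  have h2 := side_of hA hB hAF hBF hN hN1 hC.isOpen hC.fr hpC
  have h3 := side_of hA hB hAF hBF hN hN1 isOpen_interior frontier_interior_subset hpΛ
  have d1 : ∀ x, x ∈ C → x ∉ D := fun x hx => Set.disjoint_left.1 hCD hx
  have d2 : ∀ x, x ∈ C → x ∉ interior Λ := fun x hx =>
    Set.disjoint_left.1 (comp_disjoint hC) (subset_closure hx)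
  have d3 : ∀ x, x ∈ D → x ∉ interior Λ := fun x hx =>
    Set.disjoint_left.1 (comp_disjoint hD) (subset_closure hx)
  rcases h1 with ⟨⟨x, hx⟩, h1⟩ | ⟨⟨x, hx⟩, h1⟩ <;> rcases h2 with ⟨⟨y, hy⟩, h2⟩ | ⟨⟨y, hy⟩, h2⟩ <;>
    rcases h3 with ⟨⟨z, hz⟩, h3⟩ | ⟨⟨z, hz⟩, h3⟩
  · exact d1 _ (h2 hx) (h1 hx)
  · exact d1 _ (h2 hx) (h1 hx)
  · exact d3 _ (h1 hx) (h3 hx)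
  · exact d2 _ (h2 hy) (h3 hy)
  · exact d2 _ (h2 hy) (h3 hy)
  · exact d3 _ (h1 hx) (h3 hx)
  · exact d1 _ (h2 hx) (h1 hx)
  · exact d1 _ (h2 hx) (h1 hx)

lemma lift_arc {a b : X} {K : Set X} {K' : Set E3} (h : IsArc (a : E3) b K')
    (hK : (fun p : X => (p : E3)) ⁻¹' K' = K) (hK' : K' ⊆ X) : IsArc a b K := by
  obtain ⟨γ, hγ, rfl⟩ := h
  have hmem : ∀ t, γ t ∈ X := fun t => hK' (mem_range_self t)
  refine ⟨⟨⟨fun t => ⟨γ t, hmem t⟩, by fun_prop⟩, by simp, by simp⟩, ?_, ?_⟩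
  · intro s t hst
    exact hγ (congrArg Subtype.val hst)
  · rw [← hK]
    ext z
    constructor
    · rintro ⟨t, rfl⟩
      exact ⟨t, rfl⟩
    · rintro ⟨t, ht⟩
      exact ⟨t, Subtype.ext ht⟩

theorem main_aux [CompactSpace X] [T2Space X] [LocallyConnectedSpace X] [PreconnectedSpace X]
    (hT : ∀ b : X, Nonempty (({b}ᶜ : Set X) ≃ₜ ℂ)) (R : Radial X o ρ c)
    (hconn : IsPreconnected (interior Λ)) (hcl : Λ = closure (interior Λ)) (hne : Λ.Nonempty)
    (hF : (fun p : X => (p : E3)) '' frontier Λ = ⋃ p ∈ SS, segment ℝ p.1 p.2)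
    (x : X) (hx : x ∈ Λᶜ) :
    ∃ γ : Metric.sphere (0 : EuclideanSpace ℝ (Fin 2)) 1 → X,
      Continuous γ ∧ Function.Injective γ ∧ range γ = frontier (connectedComponentIn Λᶜ x) := by
  have hΛ : IsClosed Λ := by rw [hcl]; exact isClosed_closure
  have hC := comp_of_mem hcl hx
  obtain ⟨a, b, hab, K, L, hK, hL, hKL, hsub⟩ := exists_arcs (SS := SS)
    ((fun p : X => (p : E3)) '' frontier (connectedComponentIn Λᶜ x))
    (exists_vertex R hF hcl hne hC) (fun v hv => two_edges R hF hcl hC hv)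
  have hsubX : K ∪ L ⊆ X := by
    refine hsub.trans ?_
    rintro _ ⟨y, -, rfl⟩
    exact y.2
  have haK : a ∈ K := by
    obtain ⟨γ, -, rfl⟩ := hK
    exact ⟨0, γ.source⟩
  have hbK : b ∈ K := by
    obtain ⟨γ, -, rfl⟩ := hK
    exact ⟨1, γ.target⟩
  lift a to X using hsubX (Or.inl haK)
  lift b to X using hsubX (Or.inl hbK)
  obtain ⟨α, hα, hαr⟩ := lift_arc hK rfl (fun z hz => hsubX (Or.inl hz))
  obtain ⟨β, hβ, hβr⟩ := lift_arc hL rfl (fun z hz => hsubX (Or.inr hz))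
  have hαβ : range α ∩ range β ⊆ {a, b} := by
    rw [hαr, hβr]
    rintro z ⟨h1, h2⟩
    rcases hKL ⟨h1, h2⟩ with h | h
    · exact Or.inl (Subtype.ext h)
    · exact Or.inr (Subtype.ext h)
  have hZ : range α ∪ range β ⊆ frontier (connectedComponentIn Λᶜ x) := by
    rw [hαr, hβr]
    intro z hz
    obtain ⟨y, hy, hyz⟩ := hsub (show (z : E3) ∈ K ∪ L from hz)
    rwa [← Subtype.ext (a1 := y) (a2 := z) hyz]
  obtain ⟨γ, h1, h2, h3⟩ := circle_of_arcs α β hα hβ hαβ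
  refine ⟨γ, h1, h2, h3.trans (hZ.antisymm ?_)⟩
  by_contra hcon
  rw [not_subset] at hcon
  obtain ⟨q, hqC, hqZ⟩ := hcon
  have hfrΛ : frontier (connectedComponentIn Λᶜ x) ⊆ Λ := hC.fr.trans hΛ.frontier_subset
  have hsep := jordan_separation hT (q := x) (fun h => hab (congrArg _ h))
    α.toContinuousMap β.toContinuousMap α.source α.target β.source β.target hαβ
    (fun h => hx (hfrΛ (hZ h)))
  apply hsep
  change IsPreconnected (range α ∪ range β)ᶜ
  -- the connecting points
  have hpt : ∀ y : (Λᶜ : Set X), ∃ p ∈ frontier (connectedComponentIn Λᶜ (y : X)),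
      p ∉ range α ∪ range β := by
    rintro ⟨y, hy⟩
    by_cases hxy : connectedComponentIn Λᶜ y = connectedComponentIn Λᶜ x
    · exact ⟨q, by rw [hxy]; exact hqC, hqZ⟩
    · obtain ⟨p, hp, hpC⟩ := exists_private R hF hcl hne (comp_of_mem hcl hy)
      refine ⟨p, hp, fun h => hpC _ hC ?_ (frontier_subset_closure (hZ h))⟩
      rw [Set.disjoint_left]
      intro z hz1 hz2
      apply hxy
      rw [connectedComponentIn_eq hz1, connectedComponentIn_eq hz2]
  choose p hp hpZ using hpt
  obtain ⟨l, hl⟩ : (interior Λ).Nonempty := by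
    rw [hcl] at hne
    exact closure_nonempty_iff.1 hne
  let Q : (Λᶜ : Set X) → Set X := fun y =>
    (interior Λ ∪ {p y}) ∪ (connectedComponentIn Λᶜ (y : X) ∪ {p y})
  have hQ : ∀ y, IsPreconnected (Q y) := by
    intro y
    have hD := comp_of_mem hcl y.2
    refine IsPreconnected.union (p y) (Or.inr rfl) (Or.inr rfl) ?_ ?_
    · refine hconn.subset_closure subset_union_left (union_subset subset_closure ?_)
      rw [singleton_subset_iff, ← hcl]
      exact hΛ.frontier_subset (hD.fr (hp y))
    · refine hD.conn.subset_closure subset_union_left (union_subset subset_closure ?_)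
      rw [singleton_subset_iff]
      exact frontier_subset_closure (hp y)
  have hM : IsPreconnected (⋃ y, Q y) :=
    isPreconnected_iUnion ⟨l, mem_iInter.2 fun y => Or.inl (Or.inl hl)⟩ hQ
  have hZF : range α ∪ range β ⊆ frontier Λ := hZ.trans hC.fr
  refine hM.subset_closure ?_ ?_
  · refine iUnion_subset fun y => ?_
    rintro z ((hz | rfl) | (hz | rfl)) hzZ
    · exact (hZF hzZ).2 hz
    · exact hpZ y hzZ
    · exact connectedComponentIn_subset _ _ hz (hΛ.frontier_subset (hZF hzZ))
    · exact hpZ y hzZ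
  · intro z _
    by_cases hz : z ∈ Λ
    · rw [hcl] at hz
      refine closure_mono (fun w hw => ?_) hz
      exact mem_iUnion.2 ⟨⟨x, hx⟩, Or.inl (Or.inl hw)⟩
    · refine subset_closure (mem_iUnion.2 ⟨⟨z, hz⟩, Or.inr (Or.inl ?_)⟩)
      exact mem_connectedComponentIn hz

end

end JordanAux

/-- Inverse Jordan curve theorem on the boundary of a polytope: if `Λ ⊆ ∂P` has connected
interior, equals the closure of its interior, is non-empty and proper, and its boundary is
a finite union of segments (a finite union of polygonal curves with finitely many edges),
then the boundary of each connected component of `∂P \ Λ` is a simple closed curve.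
All topological operations on subsets of `∂P` are taken in the relative topology of `∂P`,
realized as the subtype `↥(frontier P)`. -/
theorem boundary_of_component_is_simple_closed_curve
    (P : Set (EuclideanSpace ℝ (Fin 3)))
    (hP : IsPolytope P) (hPint : (interior P).Nonempty)
    (Λ : Set (frontier P))
    (hconn : IsPreconnected (interior Λ))
    (hcl : Λ = closure (interior Λ))
    (hne : Λ.Nonempty) (hproper : Λ ≠ Set.univ)
    (hpoly : ∃ SS : Finset (EuclideanSpace ℝ (Fin 3) × EuclideanSpace ℝ (Fin 3)),
      (fun p : frontier P => (p : EuclideanSpace ℝ (Fin 3))) '' frontier Λ =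
        ⋃ p ∈ SS, segment ℝ p.1 p.2) :
    ∀ x ∈ (Λᶜ : Set (frontier P)),
      ∃ γ : Metric.sphere (0 : EuclideanSpace ℝ (Fin 2)) 1 → frontier P,
        Continuous γ ∧ Function.Injective γ ∧
        Set.range γ = frontier (connectedComponentIn Λᶜ x) := by
  obtain ⟨S, hS⟩ := hP
  obtain ⟨SS, hF⟩ := hpoly
  have hc : Convex ℝ P := by rw [hS]; exact convex_convexHull ℝ _
  have hb : Bornology.IsBounded P := by
    rw [hS]
    exact (isBounded_convexHull).2 S.finite_toSet.isBounded
  obtain ⟨f⟩ := JordanAux.frontier_homeo hc hb hPint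
  obtain ⟨h1, h2, h3, h4⟩ := JordanAux.props_of_homeo f
  obtain ⟨o, ho⟩ := hPint
  obtain ⟨ρ, c, R⟩ := JordanAux.exists_radial hc hb ho
  exact fun x hx => JordanAux.main_aux (JordanAux.chart_of_homeo f) R hconn hcl hne hF x hx
end

section
/- Let K ⊂ ℝⁿ be a convex body and let K = K₁ ⊕ … ⊕ K_s be its representation in terms of directly indecomposable convex bodies, with K_i contained in a linear subspace E_i and E₁ ⊕ … ⊕ E_s = ℝⁿ. If L is a convex body with g_K = g_L, then L = L₁ ⊕ … ⊕ L_s, where for each i, L_i is a directly indecomposable convex body contained in E_i and g_{K_i} = g_{L_i}. -/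
open MeasureTheory Pointwise

/-- The covariogram of a set `K ⊆ ℝⁿ`: `g_K(x) = λ_n(K ∩ (K + x))`. -/
noncomputable def covariogram {n : ℕ} (K : Set (EuclideanSpace ℝ (Fin n)))
    (x : EuclideanSpace ℝ (Fin n)) : ℝ :=
  (volume (K ∩ ((x + ·) '' K))).toReal

/-- The covariogram of a (possibly lower-dimensional) convex set, computed with Lebesgue
(Hausdorff) measure of the dimension of the set within its affine hull. -/
noncomputable def covariogramDim {n : ℕ} (K : Set (EuclideanSpace ℝ (Fin n)))
    (x : EuclideanSpace ℝ (Fin n)) : ℝ :=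
  (μH[(Module.finrank ℝ (vectorSpan ℝ K) : ℝ)] (K ∩ ((x + ·) '' K))).toReal

/-- A convex body `K` is directly indecomposable if in every representation `K = L ⊕ M`
(i.e. `K = L + M` with `L`, `M` compact convex non-empty sets lying in complementary
linear subspaces), one of the summands has dimension `0`. -/
def IsDirectlyIndecomposable {n : ℕ} (K : Set (EuclideanSpace ℝ (Fin n))) : Prop :=
  ∀ (L M : Set (EuclideanSpace ℝ (Fin n))) (E₁ E₂ : Submodule ℝ (EuclideanSpace ℝ (Fin n))),
    IsCompl E₁ E₂ →
    L ⊆ (E₁ : Set (EuclideanSpace ℝ (Fin n))) → M ⊆ (E₂ : Set (EuclideanSpace ℝ (Fin n))) →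
    Convex ℝ L → IsCompact L → L.Nonempty →
    Convex ℝ M → IsCompact M → M.Nonempty →
    K = L + M →
    Module.finrank ℝ (vectorSpan ℝ L) = 0 ∨ Module.finrank ℝ (vectorSpan ℝ M) = 0

/-- A compact convex set whose difference body splits along a resolution of the identity
splits itself. -/
lemma decomp_of_diff {n : ℕ} {ι : Type*} [Fintype ι]
    (P : ι → EuclideanSpace ℝ (Fin n) →ₗ[ℝ] EuclideanSpace ℝ (Fin n))
    (hP : ∀ x, ∑ i, P i x = x) (L : Set (EuclideanSpace ℝ (Fin n)))
    (hconv : Convex ℝ L) (hcomp : IsCompact L) (hne : L.Nonempty)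
    (h : ∀ d : ι → EuclideanSpace ℝ (Fin n), (∀ i, d i ∈ L - L) → ∑ i, P i (d i) ∈ L - L)
    (l : ι → EuclideanSpace ℝ (Fin n)) (hl : ∀ i, l i ∈ L) : ∑ i, P i (l i) ∈ L := by
  by_contra hx
  obtain ⟨f, u, hf1, hf2⟩ := geometric_hahn_banach_closed_point hconv hcomp.isClosed hx
  have hcont : ∀ i, ContinuousOn (fun x => f (P i x)) L := fun i =>
    (f.continuous.comp (P i).continuous_of_finiteDimensional).continuousOn
  have hmax : ∀ i, ∃ a ∈ L, ∀ x ∈ L, f (P i x) ≤ f (P i a) := fun i =>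
    hcomp.exists_isMaxOn hne (hcont i)
  have hmin : ∀ i, ∃ a ∈ L, ∀ x ∈ L, f (P i a) ≤ f (P i x) := fun i =>
    hcomp.exists_isMinOn hne (hcont i)
  choose a ha ha' using hmax
  choose b hb hb' using hmin
  obtain ⟨p, hp, q, hq, hpq⟩ := h (fun i => a i - b i) (fun i => Set.sub_mem_sub (ha i) (hb i))
  have e1 : f p - f q = ∑ i, f (P i (a i)) - ∑ i, f (P i (b i)) := by
    dsimp only at hpq
    rw [← map_sub, hpq, map_sum, ← Finset.sum_sub_distrib]
    simp
  have e2 : f q = ∑ i, f (P i q) := by rw [← map_sum, hP]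
  have e3 : ∑ i, f (P i (b i)) ≤ ∑ i, f (P i q) := Finset.sum_le_sum fun i _ => hb' i q hq
  have e4 : ∑ i, f (P i (l i)) ≤ ∑ i, f (P i (a i)) := Finset.sum_le_sum fun i _ => ha' i _ (hl i)
  have e5 := hf1 p hp
  rw [map_sum] at hf2
  linarith

lemma vectorSpan_eq_of_diff {n : ℕ} {K L : Set (EuclideanSpace ℝ (Fin n))} (h : K - K = L - L) :
    vectorSpan ℝ K = vectorSpan ℝ L := by
  change Submodule.span ℝ (K - K) = Submodule.span ℝ (L - L)
  rw [h]

lemma vectorSpan_image_lin {n : ℕ} (P : EuclideanSpace ℝ (Fin n) →ₗ[ℝ] EuclideanSpace ℝ (Fin n))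
    (K : Set (EuclideanSpace ℝ (Fin n))) :
    vectorSpan ℝ (P '' K) = (vectorSpan ℝ K).map P := by
  change Submodule.span ℝ (P '' K - P '' K) = (Submodule.span ℝ (K - K)).map P
  rw [← Set.image_sub, Submodule.map_span]

lemma indecomposable_of_diff {n : ℕ} {K L : Set (EuclideanSpace ℝ (Fin n))}
    (hconv : Convex ℝ K) (hcomp : IsCompact K) (hne : K.Nonempty)
    (h : K - K = L - L) (hK : IsDirectlyIndecomposable K) : IsDirectlyIndecomposable L := by
  intro A B E₁ E₂ hE hA hB hAc hAk hAn hBc hBk hBn hL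
  set P₁ := E₁.projection E₂ hE with hP₁
  set P₂ := E₂.projection E₁ hE.symm with hP₂
  have hadd : ∀ x, P₁ x + P₂ x = x := fun x => by
    exact Submodule.projection_add_projection_eq_self hE x
  have p1 : ∀ a ∈ A, ∀ b ∈ B, P₁ (a + b) = a := fun a ha b hb => by
    rw [map_add, hP₁, Submodule.projection_apply_of_mem_left hE (hA ha),
      (Submodule.projection_apply_eq_zero_iff hE).2 (hB hb), add_zero]
  have p2 : ∀ a ∈ A, ∀ b ∈ B, P₂ (a + b) = b := fun a ha b hb => by
    rw [map_add, hP₂, Submodule.projection_apply_of_mem_left hE.symm (hB hb),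
      (Submodule.projection_apply_eq_zero_iff hE.symm).2 (hA ha), zero_add]
  have i1 : P₁ '' L = A := by
    rw [hL]; ext x; constructor
    · rintro ⟨_, ⟨a, ha, b, hb, rfl⟩, rfl⟩
      rw [p1 a ha b hb]; exact ha
    · intro hx
      obtain ⟨b, hb⟩ := hBn
      exact ⟨_, Set.add_mem_add hx hb, p1 x hx b hb⟩
  have i2 : P₂ '' L = B := by
    rw [hL]; ext x; constructor
    · rintro ⟨_, ⟨a, ha, b, hb, rfl⟩, rfl⟩
      rw [p2 a ha b hb]; exact hb
    · intro hx
      obtain ⟨b, hb⟩ := hAn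
      exact ⟨_, Set.add_mem_add hb hx, p2 b hb x hx⟩
  have key := decomp_of_diff (ι := Bool) (fun i => bif i then P₁ else P₂)
    (by intro x; simpa using hadd x) K hconv hcomp hne (by
      intro d hd
      have h1 := hd true
      have h2 := hd false
      rw [h, hL] at h1 h2
      obtain ⟨_, ⟨a, ha, b, hb, rfl⟩, _, ⟨a', ha', b', hb', rfl⟩, h1⟩ := h1
      obtain ⟨_, ⟨c, hc, e, he, rfl⟩, _, ⟨c', hc', e', he', rfl⟩, h2⟩ := h2
      rw [h, hL]
      simp only [Fintype.sum_bool, cond_true, cond_false, ← h1, ← h2, map_sub]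
      rw [p1 a ha b hb, p1 a' ha' b' hb', p2 c hc e he, p2 c' hc' e' he']
      exact ⟨a + e, Set.add_mem_add ha he, a' + e', Set.add_mem_add ha' he', by dsimp only; abel⟩)
  have hKsum : K = P₁ '' K + P₂ '' K := by
    apply Set.Subset.antisymm
    · intro x hx
      exact ⟨P₁ x, ⟨x, hx, rfl⟩, P₂ x, ⟨x, hx, rfl⟩, hadd x⟩
    · rintro _ ⟨_, ⟨x, hx, rfl⟩, _, ⟨y, hy, rfl⟩, rfl⟩
      have := key (fun i => bif i then x else y) (by intro i; cases i <;> simpa)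
      simpa using this
  have := hK (P₁ '' K) (P₂ '' K) E₁ E₂ hE
    (by rintro _ ⟨x, _, rfl⟩; exact Submodule.projection_apply_mem hE x)
    (by rintro _ ⟨x, _, rfl⟩; exact Submodule.projection_apply_mem hE.symm x)
    (hconv.linear_image P₁) (hcomp.image P₁.continuous_of_finiteDimensional) (hne.image _)
    (hconv.linear_image P₂) (hcomp.image P₂.continuous_of_finiteDimensional) (hne.image _) hKsum
  rwa [vectorSpan_image_lin, vectorSpan_image_lin, vectorSpan_eq_of_diff h,
    ← vectorSpan_image_lin, ← vectorSpan_image_lin, i1, i2] at this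

lemma covariogram_pos_iff {n : ℕ} {K : Set (EuclideanSpace ℝ (Fin n))}
    (hconv : Convex ℝ K) (hcomp : IsCompact K) (x : EuclideanSpace ℝ (Fin n)) :
    covariogram K x ≠ 0 ↔ x ∈ interior K - interior K := by
  have hc2 : Convex ℝ ((x + ·) '' K) := hconv.translate x
  have hk2 : IsCompact ((x + ·) '' K) := hcomp.image (by fun_prop)
  have hfin : volume (K ∩ ((x + ·) '' K)) ≠ ⊤ := (hcomp.inter hk2).measure_ne_top
  have hint : interior ((x + ·) '' K) = (x + ·) '' interior K :=
    ((Homeomorph.addLeft x).image_interior K).symm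
  have h1 : covariogram K x ≠ 0 ↔ (interior (K ∩ ((x + ·) '' K))).Nonempty := by
    rw [covariogram, Ne, ENNReal.toReal_eq_zero_iff]
    constructor
    · intro h
      by_contra hne
      rw [Set.not_nonempty_iff_eq_empty] at hne
      apply h
      left
      have := (hconv.inter hc2).addHaar_frontier (volume)
      rw [(hcomp.inter hk2).isClosed.frontier_eq, hne, Set.sdiff_empty] at this
      exact this
    · intro h
      push Not
      exact ⟨((isOpen_interior.measure_pos volume h).trans_le
        (measure_mono interior_subset)).ne', hfin⟩
  rw [h1, interior_inter, hint]
  constructor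
  · rintro ⟨_, hy, z, hz, rfl⟩
    exact ⟨_, hy, z, hz, by simp⟩
  · rintro ⟨y, hy, z, hz, rfl⟩
    exact ⟨y, hy, z, hz, by simp⟩

lemma diff_subset_of_covariogram {n : ℕ} {K L : Set (EuclideanSpace ℝ (Fin n))}
    (hKconv : Convex ℝ K) (hKcomp : IsCompact K) (hKint : (interior K).Nonempty)
    (hLconv : Convex ℝ L) (hLcomp : IsCompact L)
    (hcov : covariogram K = covariogram L) : K - K ⊆ L - L := by
  have h1 : interior K - interior K = interior L - interior L := by
    ext x
    rw [← covariogram_pos_iff hKconv hKcomp, ← covariogram_pos_iff hLconv hLcomp, hcov]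
  have hcl : closure (interior K) = K := by
    rw [hKconv.closure_interior_eq_closure_of_nonempty_interior hKint, hKcomp.isClosed.closure_eq]
  have hLL : IsClosed (L - L) := by
    rw [sub_eq_add_neg]
    exact (hLcomp.add hLcomp.neg).isClosed
  intro x hx
  have h2 : x ∈ closure (interior K - interior K) := by
    obtain ⟨a, ha, b, hb, rfl⟩ := hx
    rw [← hcl] at ha hb
    exact map_mem_closure₂ continuous_sub ha hb fun a ha b hb => Set.sub_mem_sub ha hb
  rw [h1] at h2
  exact closure_minimal (Set.sub_subset_sub interior_subset interior_subset) hLL h2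

/-- The integral of the covariogram is the square of the volume. -/
lemma lintegral_covariogram {E : Type*} [NormedAddCommGroup E] [NormedSpace ℝ E]
    [FiniteDimensional ℝ E] [MeasurableSpace E] [BorelSpace E] (ν : Measure E)
    [ν.IsAddHaarMeasure] (K : Set E) (hK : IsCompact K) :
    ∫⁻ x, ν (K ∩ ((x + ·) '' K)) ∂ν = ν K * ν K := by
  have hm := hK.measurableSet
  have h1 : ∀ x, ν (K ∩ ((x + ·) '' K)) =
      ∫⁻ z, K.indicator 1 z * K.indicator 1 (z - x) ∂ν := by
    intro x
    have hk2 : IsCompact ((x + ·) '' K) := hK.image (by fun_prop)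
    rw [← lintegral_indicator_one (hm.inter hk2.measurableSet)]
    congr 1; ext z
    rw [Set.inter_indicator_one]
    simp only [Pi.mul_apply]
    congr 1
    rw [Set.image_add_left, sub_eq_neg_add]
    rfl
  simp_rw [h1]
  have hmi : Measurable (K.indicator (1 : E → ENNReal)) := measurable_one.indicator hm
  rw [lintegral_lintegral_swap (by
    apply Measurable.aemeasurable
    apply Measurable.mul
    · exact hmi.comp measurable_snd
    · exact hmi.comp (measurable_snd.sub measurable_fst))]
  have h2 : ∀ z, ∫⁻ x, K.indicator (1 : E → ENNReal) z * K.indicator 1 (z - x) ∂ν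
      = K.indicator 1 z * ν K := by
    intro z
    have hmz : Measurable fun x => K.indicator (1 : E → ENNReal) (z - x) :=
      hmi.comp (measurable_const.sub measurable_id)
    rw [lintegral_const_mul _ hmz, lintegral_sub_left_eq_self
      (fun x => K.indicator (1 : E → ENNReal) x) z, lintegral_indicator_one hm]
  simp_rw [h2]
  rw [lintegral_mul_const _ hmi, lintegral_indicator_one hm]

/-- The identification of the product of the summands of an internal direct sum with the space. -/
noncomputable def sumEquiv {n s : ℕ} (Ei : Fin s → Submodule ℝ (EuclideanSpace ℝ (Fin n)))
    (hEi : DirectSum.IsInternal Ei) : (∀ i, Ei i) ≃ₗ[ℝ] EuclideanSpace ℝ (Fin n) :=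
  (DirectSum.linearEquivFunOnFintype ℝ (Fin s) (fun i => Ei i)).symm.trans
    (LinearEquiv.ofBijective (DirectSum.coeLinearMap Ei) hEi)

lemma sumEquiv_apply {n s : ℕ} (Ei : Fin s → Submodule ℝ (EuclideanSpace ℝ (Fin n)))
    (hEi : DirectSum.IsInternal Ei) (y : ∀ i, Ei i) :
    sumEquiv Ei hEi y = ∑ i, (y i : EuclideanSpace ℝ (Fin n)) := by
  conv_lhs => rw [← Finset.univ_sum_single y]
  rw [map_sum]
  apply Finset.sum_congr rfl
  intro i _
  simp only [sumEquiv, LinearEquiv.trans_apply,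
    DirectSum.linearEquivFunOnFintype_symm_single]
  exact DirectSum.coeLinearMap_lof Ei i (y i)

/-- Volume of direct sums. -/
lemma volume_sumEquiv {n s : ℕ} (Ei : Fin s → Submodule ℝ (EuclideanSpace ℝ (Fin n)))
    (hEi : DirectSum.IsInternal Ei) :
    ∃ c : ENNReal, c ≠ 0 ∧ c ≠ ⊤ ∧ ∀ A : ∀ i, Set (Ei i),
      volume (sumEquiv Ei hEi '' (Set.univ.pi A)) =
        c * ∏ i, (μH[(Module.finrank ℝ (Ei i) : ℝ)] : Measure (Ei i)) (A i) := by
  set ν : ∀ i, Measure (Ei i) := fun i => μH[(Module.finrank ℝ (Ei i) : ℝ)] with hν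
  set e : (∀ i, Ei i) ≃L[ℝ] EuclideanSpace ℝ (Fin n) := (sumEquiv Ei hEi).toContinuousLinearEquiv
  have hh : (Measure.map e.symm volume).IsAddHaarMeasure :=
    e.symm.isAddHaarMeasure_map volume
  have heq := Measure.isAddLeftInvariant_eq_smul (Measure.map e.symm volume) (Measure.pi ν)
  refine ⟨((Measure.map e.symm volume).addHaarScalarFactor (Measure.pi ν) : NNReal),
    ?_, ?_, fun A => ?_⟩
  rotate_left 2
  · have h1 : sumEquiv Ei hEi '' (Set.univ.pi A) = e.symm ⁻¹' (Set.univ.pi A) := by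
      ext x
      exact (Set.mem_image_equiv (f := (sumEquiv Ei hEi).toEquiv))
    have h2 : (Measure.map e.symm volume) (Set.univ.pi A) = volume (e.symm ⁻¹' (Set.univ.pi A)) :=
      e.symm.toHomeomorph.toMeasurableEquiv.map_apply _
    have h3 := congrArg (fun m : Measure (∀ i, Ei i) => m (Set.univ.pi A)) heq
    rw [h1, ← h2, h3, Measure.smul_apply, Measure.pi_pi, ENNReal.smul_def, smul_eq_mul]
  · simpa using (Measure.addHaarScalarFactor_pos_of_isAddHaarMeasure _ _).ne'
  · simp

lemma cancel_covariogram {E : Type*} [NormedAddCommGroup E] [NormedSpace ℝ E]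
    [FiniteDimensional ℝ E] [MeasurableSpace E] [BorelSpace E] (ν : Measure E)
    [ν.IsAddHaarMeasure] (A B : Set E) (hA : IsCompact A) (hB : IsCompact B)
    (hA0 : ν A ≠ 0) (a b : ENNReal)
    (ha0 : a ≠ 0) (ha : a ≠ ⊤)
    (h : ∀ t, a * ν (A ∩ ((t + ·) '' A)) = b * ν (B ∩ ((t + ·) '' B))) (t : E) :
    ν (A ∩ ((t + ·) '' A)) = ν (B ∩ ((t + ·) '' B)) := by
  have hAt : ν A ≠ ⊤ := hA.measure_ne_top
  have hm : ∀ C : Set E, IsCompact C → ∀ c : ENNReal,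
      ∫⁻ x, c * ν (C ∩ ((x + ·) '' C)) ∂ν = c * (ν C * ν C) := by
    intro C hC c
    rw [← lintegral_covariogram ν C hC]
    apply lintegral_const_mul
    have hms : MeasurableSet {p : E × E | p.2 ∈ C ∧ -p.1 + p.2 ∈ C} := by
      apply MeasurableSet.inter
      · exact measurable_snd hC.measurableSet
      · exact (measurable_fst.neg.add measurable_snd) hC.measurableSet
    have := measurable_measure_prodMk_left (ν := ν) hms
    convert this using 3 with x
    rw [Set.image_add_left]
    rfl
  have h0 : a * ν A = b * ν B := by simpa using h 0
  have h1 : a * (ν A * ν A) = b * (ν B * ν B) := by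
    rw [← hm A hA, ← hm B hB]
    simp_rw [h]
  have h2 : ν A = ν B := by
    rw [← mul_assoc, ← mul_assoc, ← h0] at h1
    exact (ENNReal.mul_right_inj (mul_ne_zero ha0 hA0) (ENNReal.mul_ne_top ha hAt)).1 h1
  have h3 : a = b := by
    rw [← h2] at h0
    exact (ENNReal.mul_left_inj hA0 hAt).1 h0
  have := h t
  rw [← h3] at this
  exact (ENNReal.mul_right_inj ha0 ha).1 this

lemma covariogramDim_of_mem {n : ℕ} (E : Submodule ℝ (EuclideanSpace ℝ (Fin n)))
    (K : Set (EuclideanSpace ℝ (Fin n))) (hK : K ⊆ E) (hspan : vectorSpan ℝ K = E) (y : E) :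
    covariogramDim K (y : EuclideanSpace ℝ (Fin n)) =
      ((μH[(Module.finrank ℝ E : ℝ)] : Measure E)
        (((↑) ⁻¹' K : Set E) ∩ ((y + ·) '' ((↑) ⁻¹' K : Set E)))).toReal := by
  have hiso : Isometry (Subtype.val : E → EuclideanSpace ℝ (Fin n)) := isometry_subtype_coe
  rw [covariogramDim, hspan, ← hiso.hausdorffMeasure_image (Or.inl (Nat.cast_nonneg _))]
  congr 2
  ext z
  constructor
  · rintro ⟨hz, w, hw, rfl⟩
    exact ⟨⟨_, hK hz⟩, ⟨hz, ⟨w, hK hw⟩, hw, rfl⟩, rfl⟩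
  · rintro ⟨_, ⟨hz, w, hw, rfl⟩, rfl⟩
    exact ⟨hz, w, hw, rfl⟩

lemma covariogramDim_of_notMem {n : ℕ} (E : Submodule ℝ (EuclideanSpace ℝ (Fin n)))
    (K : Set (EuclideanSpace ℝ (Fin n))) (hK : K ⊆ E) (x : EuclideanSpace ℝ (Fin n))
    (hx : x ∉ E) : covariogramDim K x = 0 := by
  have : K ∩ ((x + ·) '' K) = ∅ := by
    rw [Set.eq_empty_iff_forall_notMem]
    rintro z ⟨hz, w, hw, rfl⟩
    exact hx ((Submodule.add_mem_iff_left E (hK hw)).1 (hK hz))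
  rw [covariogramDim, this]
  simp

lemma sum_inter_translate {n s : ℕ} (Ei : Fin s → Submodule ℝ (EuclideanSpace ℝ (Fin n)))
    (hEi : DirectSum.IsInternal Ei) (Ki : Fin s → Set (EuclideanSpace ℝ (Fin n)))
    (hK : ∀ i, Ki i ⊆ Ei i) (y : ∀ i, Ei i) :
    (∑ i, Ki i) ∩ ((sumEquiv Ei hEi y + ·) '' (∑ i, Ki i)) =
      sumEquiv Ei hEi '' (Set.univ.pi fun i =>
        ((↑) ⁻¹' Ki i : Set (Ei i)) ∩ ((y i + ·) '' ((↑) ⁻¹' Ki i : Set (Ei i)))) := by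
  have h1 : ∑ i, Ki i = sumEquiv Ei hEi '' (Set.univ.pi fun i => ((↑) ⁻¹' Ki i : Set (Ei i))) := by
    ext x
    rw [Set.mem_fintype_sum]
    constructor
    · rintro ⟨g, hg, rfl⟩
      exact ⟨fun i => ⟨g i, hK i (hg i)⟩, fun i _ => hg i, sumEquiv_apply _ _ _⟩
    · rintro ⟨g, hg, rfl⟩
      exact ⟨fun i => g i, fun i => hg i trivial, (sumEquiv_apply _ _ _).symm⟩
  rw [h1]
  ext x
  constructor
  · rintro ⟨⟨z, hz, rfl⟩, _, ⟨w, hw, rfl⟩, h⟩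
    have hzw : y + w = z := (sumEquiv Ei hEi).injective (by rw [map_add]; exact h)
    subst hzw
    exact ⟨_, fun i _ => ⟨hz i trivial, w i, hw i trivial, rfl⟩, rfl⟩
  · rintro ⟨z, hz, rfl⟩
    refine ⟨⟨z, fun i _ => (hz i trivial).1, rfl⟩, _, ⟨z - y, fun i _ => ?_, rfl⟩, ?_⟩
    · obtain ⟨w, hw, hwz⟩ := (hz i trivial).2
      have : (z - y) i = w := by
        rw [Pi.sub_apply, ← hwz]; exact add_sub_cancel_left _ _
      rw [this]; exact hw
    · dsimp only
      rw [← map_add, add_sub_cancel]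

/-- If `K = K₁ ⊕ … ⊕ K_s` is the representation of the convex body `K ⊆ ℝⁿ` in terms of
directly indecomposable convex bodies `K_i ⊆ E_i`, with `E₁ ⊕ … ⊕ E_s = ℝⁿ`, and `L` is a
convex body with `g_K = g_L`, then `L = L₁ ⊕ … ⊕ L_s` where each `L_i` is a directly
indecomposable convex body contained in `E_i` with `g_{K_i} = g_{L_i}`. -/
theorem covariogram_and_direct_decomposition
    (n s : ℕ) (K : Set (EuclideanSpace ℝ (Fin n)))
    (hKconv : Convex ℝ K) (hKcomp : IsCompact K) (hKint : (interior K).Nonempty)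
    (Ki : Fin s → Set (EuclideanSpace ℝ (Fin n)))
    (Ei : Fin s → Submodule ℝ (EuclideanSpace ℝ (Fin n)))
    (hKi : ∀ i, Convex ℝ (Ki i) ∧ IsCompact (Ki i) ∧ (Ki i).Nonempty ∧
      Ki i ⊆ (Ei i : Set (EuclideanSpace ℝ (Fin n))) ∧
      1 ≤ Module.finrank ℝ (vectorSpan ℝ (Ki i)) ∧
      IsDirectlyIndecomposable (Ki i))
    (hEi : DirectSum.IsInternal Ei)
    (hsum : K = ∑ i, Ki i)
    (L : Set (EuclideanSpace ℝ (Fin n)))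
    (hLconv : Convex ℝ L) (hLcomp : IsCompact L) (hLint : (interior L).Nonempty)
    (hcov : covariogram K = covariogram L) :
    ∃ Li : Fin s → Set (EuclideanSpace ℝ (Fin n)),
      (∀ i, Convex ℝ (Li i) ∧ IsCompact (Li i) ∧ (Li i).Nonempty ∧
        Li i ⊆ (Ei i : Set (EuclideanSpace ℝ (Fin n))) ∧
        IsDirectlyIndecomposable (Li i) ∧
        covariogramDim (Ki i) = covariogramDim (Li i)) ∧
      L = ∑ i, Li i := by
  classical
  have hdiff : K - K = L - L := Set.Subset.antisymm
    (diff_subset_of_covariogram hKconv hKcomp hKint hLconv hLcomp hcov)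
    (diff_subset_of_covariogram hLconv hLcomp hLint hKconv hKcomp hcov.symm)
  set e := sumEquiv Ei hEi with he
  set P : Fin s → EuclideanSpace ℝ (Fin n) →ₗ[ℝ] EuclideanSpace ℝ (Fin n) := fun i =>
    (Ei i).subtype ∘ₗ LinearMap.proj i ∘ₗ e.symm.toLinearMap with hPdef
  have hPmem : ∀ i x, P i x ∈ Ei i := fun i x => (e.symm x i).2
  have hP : ∀ x, ∑ i, P i x = x := fun x => by
    have h1 : e (e.symm x) = x := e.apply_symm_apply x
    rw [he, sumEquiv_apply] at h1
    exact h1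
  have hPsum : ∀ g : Fin s → EuclideanSpace ℝ (Fin n), (∀ i, g i ∈ Ei i) → ∀ i,
      P i (∑ j, g j) = g i := by
    intro g hg i
    have h1 : ∑ j, g j = e (fun j => ⟨g j, hg j⟩) := by rw [he, sumEquiv_apply]
    change ((e.symm (∑ j, g j) i : Ei i) : EuclideanSpace ℝ (Fin n)) = g i
    rw [h1, e.symm_apply_apply]
  have hKsub : ∀ i, Ki i ⊆ Ei i := fun i => (hKi i).2.2.2.1
  have hPK : ∀ i, P i '' K = Ki i := by
    intro i
    rw [hsum]
    ext x
    constructor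
    · rintro ⟨y, hy, rfl⟩
      obtain ⟨g, hg, rfl⟩ := (Set.mem_fintype_sum _ _).1 hy
      rw [hPsum g (fun i => hKsub i (hg i))]
      exact hg i
    · intro hx
      choose k hk using fun j => (hKi j).2.2.1
      have hg : ∀ j, Function.update k i x j ∈ Ki j := by
        intro j
        by_cases hj : j = i
        · subst hj; simpa using hx
        · simpa [hj] using hk j
      refine ⟨_, (Set.mem_fintype_sum _ _).2 ⟨_, hg, rfl⟩, ?_⟩
      rw [hPsum _ (fun i => hKsub i (hg i))]
      simp
  have hdi : ∀ i, Ki i - Ki i = P i '' L - P i '' L := fun i => by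
    rw [← hPK i, ← Set.image_sub, ← Set.image_sub, hdiff]
  have hLne : L.Nonempty := hLint.mono interior_subset
  have hLsum : L = ∑ i, P i '' L := by
    ext x
    rw [Set.mem_fintype_sum]
    constructor
    · intro hx
      exact ⟨fun i => P i x, fun i => ⟨x, hx, rfl⟩, hP x⟩
    · rintro ⟨g, hg, rfl⟩
      choose l hl hlg using hg
      simp_rw [← hlg]
      refine decomp_of_diff P hP L hLconv hLcomp hLne ?_ l hl
      intro d hd
      rw [← hdiff] at hd ⊢
      choose a ha b hb hab using hd
      refine ⟨∑ i, P i (a i), ?_, ∑ i, P i (b i), ?_, ?_⟩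
      · have hmem : ∀ i, P i (a i) ∈ Ki i := fun i => by
          rw [← hPK i]; exact ⟨a i, ha i, rfl⟩
        rw [hsum]
        exact (Set.mem_fintype_sum _ _).2 ⟨_, hmem, rfl⟩
      · have hmem : ∀ i, P i (b i) ∈ Ki i := fun i => by
          rw [← hPK i]; exact ⟨b i, hb i, rfl⟩
        rw [hsum]
        exact (Set.mem_fintype_sum _ _).2 ⟨_, hmem, rfl⟩
      · dsimp only at hab ⊢
        rw [← Finset.sum_sub_distrib]
        simp_rw [← hab, map_sub]
  have hLsub : ∀ i, P i '' L ⊆ Ei i := by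
    rintro i _ ⟨x, _, rfl⟩
    exact hPmem i x
  have hLik : ∀ i, IsCompact (P i '' L) := fun i =>
    hLcomp.image (P i).continuous_of_finiteDimensional
  -- vector spans
  have hspanK : ∀ i, vectorSpan ℝ (Ki i) = Ei i := by
    intro i
    have htop : vectorSpan ℝ K = ⊤ := by
      rw [← direction_affineSpan,
        (hKconv.interior_nonempty_iff_affineSpan_eq_top).1 hKint, AffineSubspace.direction_top]
    rw [← hPK i, vectorSpan_image_lin, htop]
    apply le_antisymm
    · rintro _ ⟨x, _, rfl⟩
      exact hPmem i x
    · intro x hx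
      refine ⟨x, trivial, ?_⟩
      have h2 := hPsum (Pi.single i x) (by
        intro j
        by_cases hj : j = i
        · subst hj; simpa using hx
        · simp [hj]) i
      simpa using h2
  have hspanL : ∀ i, vectorSpan ℝ (P i '' L) = Ei i := fun i => by
    rw [← vectorSpan_eq_of_diff (hdi i), hspanK i]
  -- measures
  obtain ⟨c, hc0, hct, hc⟩ := volume_sumEquiv Ei hEi
  set ν : ∀ i, Measure (Ei i) := fun i => μH[(Module.finrank ℝ (Ei i) : ℝ)] with hν
  set A : ∀ i, Set (Ei i) := fun i => (↑) ⁻¹' Ki i with hA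
  set B : ∀ i, Set (Ei i) := fun i => (↑) ⁻¹' (P i '' L) with hB
  have hAk : ∀ i, IsCompact (A i) := fun i =>
    (Ei i).closed_of_finiteDimensional.isClosedEmbedding_subtypeVal.isCompact_preimage (hKi i).2.1
  have hBk : ∀ i, IsCompact (B i) := fun i =>
    (Ei i).closed_of_finiteDimensional.isClosedEmbedding_subtypeVal.isCompact_preimage (hLik i)
  have vK : ∀ y, volume (K ∩ ((e y + ·) '' K)) =
      c * ∏ i, ν i (A i ∩ ((y i + ·) '' A i)) := by
    intro y
    rw [hsum, he, sum_inter_translate Ei hEi Ki hKsub y, hc]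
  have vL : ∀ y, volume (L ∩ ((e y + ·) '' L)) =
      c * ∏ i, ν i (B i ∩ ((y i + ·) '' B i)) := by
    intro y
    have h1 := sum_inter_translate Ei hEi (fun i => P i '' L) hLsub y
    rw [← hLsum] at h1
    rw [he, h1, hc]
  have hprod : ∀ y : ∀ i, Ei i, ∏ i, ν i (A i ∩ ((y i + ·) '' A i)) =
      ∏ i, ν i (B i ∩ ((y i + ·) '' B i)) := by
    intro y
    rw [← ENNReal.mul_right_inj hc0 hct, ← vK, ← vL]
    have h1 := congrFun hcov (e y)
    have fin : ∀ M : Set (EuclideanSpace ℝ (Fin n)), IsCompact M →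
        volume (M ∩ ((e y + ·) '' M)) ≠ ⊤ := fun M hM =>
      ((measure_mono Set.inter_subset_left).trans_lt hM.measure_lt_top).ne
    exact (ENNReal.toReal_eq_toReal_iff' (fin K hKcomp) (fin L hLcomp)).1 h1
  have hA0 : ∀ i, ν i (A i) ≠ 0 := by
    have h1 := vK 0
    have h2 : volume K ≠ 0 := ((isOpen_interior.measure_pos volume hKint).trans_le
        (measure_mono interior_subset)).ne'
    simp only [map_zero, zero_add, Set.image_id', Set.inter_self, Pi.zero_apply] at h1
    rw [h1] at h2
    intro i
    exact Finset.prod_ne_zero_iff.1 (right_ne_zero_of_mul h2) i (Finset.mem_univ i)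
  have hmain : ∀ i (t : Ei i), ν i (A i ∩ ((t + ·) '' A i)) = ν i (B i ∩ ((t + ·) '' B i)) := by
    intro i
    refine cancel_covariogram (ν i) (A i) (B i) (hAk i) (hBk i) (hA0 i)
      (∏ j ∈ Finset.univ.erase i, ν j (A j)) (∏ j ∈ Finset.univ.erase i, ν j (B j))
      (Finset.prod_ne_zero_iff.2 fun j _ => hA0 j)
      (ENNReal.prod_ne_top fun j _ => (hAk j).measure_ne_top) ?_
    intro t
    have h1 := hprod (Pi.single i t)
    rw [← Finset.prod_erase_mul _ _ (Finset.mem_univ i),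
      ← Finset.prod_erase_mul _ _ (Finset.mem_univ i)] at h1
    have h2 : ∀ C : ∀ i, Set (Ei i), ∏ j ∈ Finset.univ.erase i,
        ν j (C j ∩ ((Pi.single (M := fun i => Ei i) i t j + ·) '' C j)) =
        ∏ j ∈ Finset.univ.erase i, ν j (C j) := by
      intro C
      refine Finset.prod_congr rfl fun j hj => ?_
      rw [Pi.single_eq_of_ne (Finset.ne_of_mem_erase hj)]
      simp
    rw [h2 A, h2 B, Pi.single_eq_same] at h1
    exact h1
  refine ⟨fun i => P i '' L, fun i => ⟨hLconv.linear_image _, hLik i, hLne.image _, hLsub i,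
    indecomposable_of_diff (hKi i).1 (hKi i).2.1 (hKi i).2.2.1 (hdi i) (hKi i).2.2.2.2.2, ?_⟩,
    hLsum⟩
  funext x
  by_cases hx : x ∈ Ei i
  · have h1 := covariogramDim_of_mem (Ei i) (Ki i) (hKsub i) (hspanK i) ⟨x, hx⟩
    have h2 := covariogramDim_of_mem (Ei i) (P i '' L) (hLsub i) (hspanL i) ⟨x, hx⟩
    exact h1.trans ((congrArg ENNReal.toReal (hmain i ⟨x, hx⟩)).trans h2.symm)
  · rw [covariogramDim_of_notMem (Ei i) _ (hKsub i) x hx,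
      covariogramDim_of_notMem (Ei i) _ (hLsub i) x hx]
end

section
/- A convex body K ⊂ ℝⁿ is directly indecomposable if and only if its difference body DK = K + (−K) is directly indecomposable. -/
open MeasureTheory Pointwise

lemma finrank_vectorSpan_zero_iff {n : ℕ} (S : Set (EuclideanSpace ℝ (Fin n))) :
    Module.finrank ℝ (vectorSpan ℝ S) = 0 ↔ S.Subsingleton := by
  rw [Submodule.finrank_eq_zero, vectorSpan_eq_bot_iff_subsingleton]

lemma subsingleton_of_add_neg {n : ℕ} {S : Set (EuclideanSpace ℝ (Fin n))}
    (h : (S + -S).Subsingleton) : S.Subsingleton := by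
  intro x hx y hy
  have := h (Set.add_mem_add hx (Set.neg_mem_neg.2 hx)) (Set.add_mem_add hy (Set.neg_mem_neg.2 hx))
  exact add_right_cancel this

/-- A convex body `K ⊆ ℝⁿ` is directly indecomposable if and only if its difference body
`DK = K + (−K)` is directly indecomposable. -/
theorem directlyIndecomposable_iff_differenceBody
    (n : ℕ) (K : Set (EuclideanSpace ℝ (Fin n)))
    (hKconv : Convex ℝ K) (hKcomp : IsCompact K) (hKint : (interior K).Nonempty) :
    IsDirectlyIndecomposable K ↔ IsDirectlyIndecomposable (K + (-K)) := by
  have hKne : K.Nonempty := hKint.mono interior_subset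
  constructor
  · intro hK L M E₁ E₂ hE hL hM _ _ hLn _ _ hMn hD
    set p := E₁.projection E₂ hE with hp
    set q := E₂.projection E₁ hE.symm with hq
    have hpq : ∀ x, p x + q x = x := Submodule.projection_add_projection_eq_self hE
    have hpl : ∀ l ∈ L, ∀ m ∈ M, p (l + m) = l := fun l hl m hm => by
      rw [map_add, hp, Submodule.projection_apply_of_mem_left hE (hL hl),
        Submodule.projection_apply_of_mem_right hE (hM hm), add_zero]
    have hqm : ∀ l ∈ L, ∀ m ∈ M, q (l + m) = m := fun l hl m hm => by
      rw [map_add, hq, Submodule.projection_apply_of_mem_left hE.symm (hM hm),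
        Submodule.projection_apply_of_mem_right hE.symm (hL hl), zero_add]
    have key : K = p '' K + q '' K := by
      apply Set.Subset.antisymm
      · intro x hx
        exact ⟨p x, ⟨x, hx, rfl⟩, q x, ⟨x, hx, rfl⟩, hpq x⟩
      · rintro _ ⟨_, ⟨k₁, hk₁, rfl⟩, _, ⟨k₂, hk₂, rfl⟩, rfl⟩
        by_contra hx
        obtain ⟨f, u, hu, hux⟩ := geometric_hahn_banach_closed_point hKconv hKcomp.isClosed hx
        obtain ⟨c, hc, hmin⟩ := hKcomp.exists_isMinOn hKne f.continuous.continuousOn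
        have h1 : k₁ + -c ∈ L + M := hD ▸ Set.add_mem_add hk₁ (Set.neg_mem_neg.2 hc)
        have h2 : k₂ + -c ∈ L + M := hD ▸ Set.add_mem_add hk₂ (Set.neg_mem_neg.2 hc)
        obtain ⟨l₁, hl₁, m₁, hm₁, e₁⟩ := h1
        obtain ⟨l₂, hl₂, m₂, hm₂, e₂⟩ := h2
        have h3 : l₁ + m₂ ∈ K + -K := hD ▸ Set.add_mem_add hl₁ hm₂
        obtain ⟨k, hk, k', hk', e₃⟩ := h3
        have e : p k₁ + q k₂ + -c = k + k' := by
          have a1 := hpl l₁ hl₁ m₁ hm₁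
          have a2 := hqm l₂ hl₂ m₂ hm₂
          simp only at e₁ e₂ e₃
          rw [e₁, map_add, map_neg] at a1
          rw [e₂, map_add, map_neg] at a2
          rw [e₃, ← a1, ← a2]
          nth_rewrite 1 [← hpq c]
          abel
        have e' := congrArg f e
        simp only [map_add, map_neg] at e' hux
        have h4 : f c ≤ f (-k') := hmin hk'
        rw [map_neg] at h4
        have := hu k hk
        linarith
    have himg : ∀ r : EuclideanSpace ℝ (Fin n) →ₗ[ℝ] EuclideanSpace ℝ (Fin n),
        IsCompact (r '' K) := fun r => hKcomp.image r.continuous_of_finiteDimensional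
    have hres := hK (p '' K) (q '' K) E₁ E₂ hE
      (by rintro _ ⟨x, -, rfl⟩; exact Submodule.projection_apply_mem hE x)
      (by rintro _ ⟨x, -, rfl⟩; exact Submodule.projection_apply_mem hE.symm x)
      (hKconv.linear_image p) (himg p) (hKne.image _)
      (hKconv.linear_image q) (himg q) (hKne.image _) key
    simp only [finrank_vectorSpan_zero_iff] at hres ⊢
    have gen : ∀ r : EuclideanSpace ℝ (Fin n) →ₗ[ℝ] EuclideanSpace ℝ (Fin n),
        (r '' K).Subsingleton → ∀ z ∈ L + M, r z = 0 := by
      intro r hr z hz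
      rw [← hD] at hz
      obtain ⟨k, hk, k', hk', rfl⟩ := hz
      have := hr ⟨k, hk, rfl⟩ ⟨-k', hk', rfl⟩
      simp [this]
    obtain ⟨l₀, hl₀⟩ := hLn
    obtain ⟨m₀, hm₀⟩ := hMn
    refine hres.imp (fun h => ?_) (fun h => ?_)
    · intro x hx y hy
      rw [← hpl x hx m₀ hm₀, ← hpl y hy m₀ hm₀, gen p h _ (Set.add_mem_add hx hm₀),
        gen p h _ (Set.add_mem_add hy hm₀)]
    · intro x hx y hy
      rw [← hqm l₀ hl₀ x hx, ← hqm l₀ hl₀ y hy, gen q h _ (Set.add_mem_add hl₀ hx),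
        gen q h _ (Set.add_mem_add hl₀ hy)]
  · intro hDK L M E₁ E₂ hE hL hM hLc hLk hLn hMc hMk hMn hKe
    have hres := hDK (L + -L) (M + -M) E₁ E₂ hE
      (by rintro _ ⟨x, hx, y, hy, rfl⟩
          exact E₁.add_mem (hL hx) (by simpa using E₁.neg_mem (hL hy)))
      (by rintro _ ⟨x, hx, y, hy, rfl⟩
          exact E₂.add_mem (hM hx) (by simpa using E₂.neg_mem (hM hy)))
      (hLc.add hLc.neg) (hLk.add hLk.neg) (hLn.add hLn.neg)
      (hMc.add hMc.neg) (hMk.add hMk.neg) (hMn.add hMn.neg)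
      (by rw [hKe, neg_add, add_add_add_comm])
    simp only [finrank_vectorSpan_zero_iff] at hres ⊢
    exact hres.imp subsingleton_of_add_neg subsingleton_of_add_neg
end
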